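/- arXiv:1910.02401 — 9 statements merged into one kernel-verified Lean document; each statement's English description precedes it below -/
import Mathlib

section
/- Let Λ ⊂ (ℤΓ)_0 be a finite set of vertices and θ : Λ ⊔ ({−∞} × Γ_0) → ℤ a function such that (Λ, θ) satisfies mesh relations, θ is non-negative on Λ and vanishes on exactly one vertex of Λ, θ(−∞, i) = −1 for one fixed vertex i ∈ Γ_0, and θ(−∞, k) = 0 for all k ∈ Γ_0 \ {i}. Then the element γ_Λ of B_Γ^+ is left-divisible by s_j for some j ∈ Γ_0 with j ≠ i, i.e. γ_Λ = s_j · δ for some δ ∈ B_Γ^+. -/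
/-!
Read a word in the generators from left to right and let the corresponding simple reflections act
successively on a weight, starting from the fundamental weight `ω_i`. The mesh relations say
precisely that `θ(b)` is the pairing of the weight reached just before the letter `b` with the
simple coroot of `b` (`theta_eq_height`). So, up to the unique zero `a` of `θ`, the word of `Λ` is
a path in the orbit of `ω_i` along which every step is made by a positive pairing, and the letter
`t` of `a` fixes the weight `λ` reached there.

Two facts about such paths, valid for every graph, finish the proof.
* Exchange (`Path.exchange`): if the endpoint pairs negatively with `t`, then the braid element of
  the path is `x * s_t`, where `x` is the element of a shorter path with endpoint `s_t λ`.
* Divisibility (`Path.exists_gen_mul`): if the endpoint pairs to zero with `t`, then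
  `x * s_t = s_j * x` for the element `x` of the path and some `j ≠ i`. This is a monoid form of
  Deodhar's lemma on minimal coset representatives.

Both are proved by induction on the length of the path, comparing `t` with the last letter: when
they coincide or commute the step is immediate, and when they are adjacent a second application of
the exchange property makes a braid relation applicable.
-/

/-!
STATEMENT 0: If (Λ, θ) satisfies mesh relations, θ is non-negative on Λ and vanishes on
exactly one vertex of Λ, θ(−∞, i) = −1 and θ(−∞, k) = 0 for k ≠ i, then γ_Λ is
left-divisible in the braid monoid B_Γ^+ by some generator s_j with j ≠ i.
-/

namespace Statement0

/-- The type A Dynkin graph on `Fin n` (a path). -/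
def typeA (n : ℕ) : SimpleGraph (Fin n) :=
  SimpleGraph.fromRel (fun i j => (i : ℕ) + 1 = (j : ℕ))

/-- The type D Dynkin graph on `Fin n`: a chain `1 - 2 - ⋯ - (n-1)` with an extra
vertex `0` attached to `2`. -/
def typeD (n : ℕ) : SimpleGraph (Fin n) :=
  SimpleGraph.fromRel
    (fun i j => (1 ≤ (i : ℕ) ∧ (i : ℕ) + 1 = (j : ℕ)) ∨ ((i : ℕ) = 0 ∧ (j : ℕ) = 2))

/-- The type E Dynkin graph on `Fin n`: a chain `1 - 2 - ⋯ - (n-1)` with an extra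
vertex `0` attached to `3`. -/
def typeE (n : ℕ) : SimpleGraph (Fin n) :=
  SimpleGraph.fromRel
    (fun i j => (1 ≤ (i : ℕ) ∧ (i : ℕ) + 1 = (j : ℕ)) ∨ ((i : ℕ) = 0 ∧ (j : ℕ) = 3))

/-- `G` is a simply-laced Dynkin diagram (of type `A_n`, `D_n`, `E₆`, `E₇` or `E₈`). -/
def IsADE {V : Type*} (G : SimpleGraph V) : Prop :=
  (∃ n : ℕ, 1 ≤ n ∧ Nonempty (G ≃g typeA n)) ∨
  (∃ n : ℕ, 4 ≤ n ∧ Nonempty (G ≃g typeD n)) ∨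
  (∃ n : ℕ, (n = 6 ∨ n = 7 ∨ n = 8) ∧ Nonempty (G ≃g typeE n))

variable {V : Type} [LinearOrder V] (G : SimpleGraph V) [DecidableRel G.Adj]

/-- The defining relations of the braid monoid `B_Γ^+`: braid relations for adjacent
vertices and commutation relations for distinct non-adjacent vertices. -/
inductive BraidRel : FreeMonoid V → FreeMonoid V → Prop
  | braid (i j : V) : G.Adj i j →
      BraidRel (FreeMonoid.of i * FreeMonoid.of j * FreeMonoid.of i)
               (FreeMonoid.of j * FreeMonoid.of i * FreeMonoid.of j)
  | comm (i j : V) : i ≠ j → ¬ G.Adj i j →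
      BraidRel (FreeMonoid.of i * FreeMonoid.of j) (FreeMonoid.of j * FreeMonoid.of i)

/-- The braid monoid `B_Γ^+` of type `Γ`. -/
abbrev BraidMonoid := (conGen (BraidRel G)).Quotient

/-- The standard generator `s_i` of `B_Γ^+`. -/
def gen (i : V) : BraidMonoid G := (conGen (BraidRel G)).mk' (FreeMonoid.of i)

/-- The element `γ_Λ = ∏_k s_{Σ_k}` of `B_Γ^+` attached to a finite set
`Λ ⊆ (ℤΓ)₀`: the product of the generators `s_{p₂ x}`, over `x ∈ Λ` taken in the
lexicographic order (first by the slice index `p₁ x`, then, within a slice --- where the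
corresponding generators pairwise commute --- in the auxiliary linear order of `V`). -/
noncomputable def gammaLambda (Λ : Finset (ℤ × V)) : BraidMonoid G :=
  (((Λ.image (toLex : ℤ × V → Lex (ℤ × V))).sort (· ≤ ·)).map
    (fun p => gen G (ofLex p).2)).prod

/-- `mesh_Λ(a, b)` for a generalized mesh starting at a (possibly imaginary) vertex with
first coordinate `lo` and ending at `b`. -/
def meshFin (Λ : Finset (ℤ × V)) (lo : ℤ) (b : ℤ × V) : Finset (ℤ × V) :=
  Λ.filter (fun c => G.Adj c.2 b.2 ∧ lo < c.1 ∧ c.1 < b.1)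

/-- `mesh_Λ(τ_Λ(b), b)` for an infinite mesh ending at `b`. -/
def meshInf (Λ : Finset (ℤ × V)) (b : ℤ × V) : Finset (ℤ × V) :=
  Λ.filter (fun c => G.Adj c.2 b.2 ∧ c.1 < b.1)

/-- `(Λ, θ)` (where `θinf` records the values of `θ` on the imaginary vertices
`(−∞, j)`) satisfies mesh relations: for every `b ∈ Λ`,
`θ(b) + θ(τ_Λ(b)) = ∑_{c ∈ mesh_Λ(τ_Λ(b), b)} θ(c)`. -/
def SatisfiesMesh (Λ : Finset (ℤ × V)) (θ : ℤ × V → ℤ) (θinf : V → ℤ) : Prop :=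
  ∀ b ∈ Λ,
    (∀ a ∈ Λ, a.2 = b.2 → a.1 < b.1 → (∀ n : ℤ, a.1 < n → n < b.1 → (n, b.2) ∉ Λ) →
        θ b + θ a = ∑ c ∈ meshFin G Λ a.1 b, θ c) ∧
    ((∀ n : ℤ, n < b.1 → (n, b.2) ∉ Λ) →
        θ b + θinf b.2 = ∑ c ∈ meshInf G Λ b, θ c)

set_option linter.unusedSectionVars false

variable {G}

theorem gen_comm {r t : V} (hne : r ≠ t) (h : ¬ G.Adj r t) :
    gen G r * gen G t = gen G t * gen G r := by
  have := (Con.eq (conGen (BraidRel G))).2 (ConGen.Rel.of _ _ (BraidRel.comm r t hne h))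
  simpa [gen] using this

theorem gen_braid {r t : V} (h : G.Adj r t) :
    gen G r * gen G t * gen G r = gen G t * gen G r * gen G t := by
  have := (Con.eq (conGen (BraidRel G))).2 (ConGen.Rel.of _ _ (BraidRel.braid r t h))
  simpa [gen] using this

/-! ### Paths in the orbit of a fundamental weight -/

variable (G)

/-- The simple reflection `s_t` acting on a weight, given by its pairings with the simple
coroots. -/
def act (t : V) (g : V → ℤ) : V → ℤ := fun u =>
  if u = t then - g t else if G.Adj t u then g u + g t else g u

/-- The braid element of a word written in reverse: the head of the list is the last letter. -/
def elt (l : List V) : BraidMonoid G := (l.reverse.map (gen G)).prod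

/-- `Path G i l g`: the word `l` (last letter first), applied to the fundamental weight `ω_i`,
leads to the weight `g`, and each letter pairs positively with the weight it is applied to. -/
inductive Path (i : V) : List V → (V → ℤ) → Prop
  | nil : Path i [] (fun u => if u = i then 1 else 0)
  | cons {l : List V} {g : V → ℤ} (t : V) : Path i l g → 0 < g t → Path i (t :: l) (act G t g)

variable {G}

theorem elt_cons (t : V) (l : List V) : elt G (t :: l) = elt G l * gen G t := by
  simp [elt]

theorem act_self (t : V) (g : V → ℤ) : act G t g t = - g t := by simp [act]

theorem act_adj {t u : V} (h : G.Adj t u) (g : V → ℤ) : act G t g u = g u + g t := by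
  simp [act, h, h.ne']

theorem act_far {t u : V} (hne : t ≠ u) (h : ¬ G.Adj t u) (g : V → ℤ) : act G t g u = g u := by
  simp [act, h, hne.symm]

theorem act_comm {r t : V} (hne : r ≠ t) (h : ¬ G.Adj r t) (g : V → ℤ) :
    act G r (act G t g) = act G t (act G r g) := by
  funext u
  have h' : ¬ G.Adj t r := fun e => h e.symm
  simp only [act]
  grind

theorem act_braid {r t : V} (h : G.Adj r t) (g : V → ℤ) :
    act G r (act G t (act G r g)) = act G t (act G r (act G t g)) := by
  funext u
  have h' : G.Adj t r := h.symm
  have hne := h.ne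
  have hr : ¬ G.Adj r r := G.irrefl
  have ht : ¬ G.Adj t t := G.irrefl
  simp only [act]
  grind

/-- Exchange property: if the endpoint `g` of a path pairs negatively with `t`, the path may be
replaced by one whose last letter is `t`, without changing its length or its braid element. -/
theorem Path.exchange {i : V} (n : ℕ) : ∀ {l : List V} {g : V → ℤ} {t : V}, l.length = n →
    Path G i l g → g t < 0 → ∃ l' g', Path G i l' g' ∧ l'.length + 1 = l.length ∧ 0 < g' t ∧
      g = act G t g' ∧ elt G l = elt G l' * gen G t := by
  induction n using Nat.strong_induction_on with
  | _ n ih =>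
  intro l g t hn hp ht
  cases hp with
  | nil =>
    dsimp only at ht
    split_ifs at ht <;> omega
  | @cons l ν r hp hr =>
    simp only [List.length_cons] at hn
    by_cases hrt : r = t
    · subst hrt
      exact ⟨l, ν, hp, rfl, hr, rfl, elt_cons _ _⟩
    by_cases hadj : G.Adj r t
    · rw [act_adj hadj] at ht
      obtain ⟨l₁, κ, hp₁, hl₁, hκ, rfl, he₁⟩ := ih l.length (by omega) rfl hp (t := t) (by omega)
      rw [act_self, act_adj hadj.symm] at ht
      obtain ⟨l₂, π, hp₂, hl₂, hπ, rfl, he₂⟩ :=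
        ih l₁.length (by omega) rfl hp₁ (t := r) (by omega)
      rw [act_adj hadj.symm, act_self, act_adj hadj] at hr
      -- now `l = l₂ r t` and the whole word is `l₂ r t r = l₂ t r t`
      have hπt : 0 < π t := by omega
      have hπr : 0 < act G t π r := by rw [act_adj hadj.symm]; omega
      refine ⟨r :: t :: l₂, _, .cons r (.cons t hp₂ hπt) hπr, by simp; omega, ?_,
        act_braid hadj π, ?_⟩
      · rw [act_adj hadj, act_self, act_adj hadj.symm]; omega
      · rw [elt_cons, he₁, he₂, elt_cons, elt_cons, mul_assoc, mul_assoc, ← mul_assoc (gen G r),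
          gen_braid hadj]
        simp only [mul_assoc]
    · rw [act_far hrt hadj] at ht
      have hadj' : ¬ G.Adj t r := fun e => hadj e.symm
      obtain ⟨l₁, κ, hp₁, hl₁, hκ, rfl, he₁⟩ := ih l.length (by omega) rfl hp ht
      rw [act_far (Ne.symm hrt) hadj'] at hr
      refine ⟨r :: l₁, _, .cons r hp₁ hr, by simp; omega, ?_, act_comm hrt hadj κ, ?_⟩
      · rwa [act_far hrt hadj]
      · rw [elt_cons, he₁, elt_cons, mul_assoc, mul_assoc, gen_comm hrt hadj]

/-- If the endpoint of a path is fixed by `s_t`, then `s_t` can be moved through the path to the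
left, where it becomes some `s_j` fixing `ω_i`. -/
theorem Path.exists_gen_mul {i : V} (n : ℕ) : ∀ {l : List V} {g : V → ℤ} {t : V}, l.length = n →
    Path G i l g → g t = 0 → ∃ j, j ≠ i ∧ elt G l * gen G t = gen G j * elt G l := by
  induction n using Nat.strong_induction_on with
  | _ n ih =>
  intro l g t hn hp ht
  cases hp with
  | nil =>
    refine ⟨t, ?_, by simp [elt]⟩
    rintro rfl
    simp at ht
  | @cons l ν r hp hr =>
    simp only [List.length_cons] at hn
    have hrt : r ≠ t := by
      rintro rfl
      rw [act_self] at ht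
      omega
    by_cases hadj : G.Adj r t
    · rw [act_adj hadj] at ht
      obtain ⟨l₁, κ, hp₁, hl₁, hκ, rfl, he₁⟩ :=
        Path.exchange l.length rfl hp (t := t) (by omega)
      rw [act_self, act_adj hadj.symm] at ht
      obtain ⟨j, hj, he⟩ := ih l₁.length (by omega) rfl hp₁ (t := r) (by omega)
      refine ⟨j, hj, ?_⟩
      have hb := gen_braid hadj
      calc elt G (r :: l) * gen G t
          = elt G l₁ * (gen G t * gen G r * gen G t) := by
            rw [elt_cons, he₁]; simp only [mul_assoc]
        _ = elt G l₁ * gen G r * (gen G t * gen G r) := by rw [← hb]; simp only [mul_assoc]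
        _ = gen G j * elt G (r :: l) := by
            rw [he, elt_cons, he₁]; simp only [mul_assoc]
    · rw [act_far hrt hadj] at ht
      obtain ⟨j, hj, he⟩ := ih l.length (by omega) rfl hp ht
      refine ⟨j, hj, ?_⟩
      rw [elt_cons, mul_assoc, gen_comm hrt hadj, ← mul_assoc, he, mul_assoc]

/-! ### Mesh relations -/

variable (G)

/-- For the elements `P` of an initial part of `Λ`, latest first, the value at `u` that the mesh
relation imposes on `θ` at a next element lying over `u`. -/
def height (θ : ℤ × V → ℤ) (θinf : V → ℤ) : List (ℤ × V) → V → ℤ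
  | [], u => - θinf u
  | b :: P, u =>
    if u = b.2 then - θ b else if G.Adj b.2 u then height θ θinf P u + θ b else height θ θinf P u

variable {G}

theorem height_of_forall_ne (θ : ℤ × V → ℤ) (θinf : V → ℤ) (u : V) (P : List (ℤ × V))
    (h : ∀ c ∈ P, c.2 ≠ u) :
    height G θ θinf P u = - θinf u + ((P.filter (fun c => G.Adj c.2 u)).map θ).sum := by
  induction P with
  | nil => simp [height]
  | cons b P ih =>
    have hb : u ≠ b.2 := (h b (by simp)).symm
    have := ih (fun c hc => h c (by simp [hc]))
    by_cases hadj : G.Adj b.2 u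
    · simp [height, hb, hadj, this]; ring
    · simp [height, hb, hadj, this]

theorem height_append (θ : ℤ × V → ℤ) (θinf : V → ℤ) (a : ℤ × V) (P Q : List (ℤ × V))
    (h : ∀ c ∈ P, c.2 ≠ a.2) :
    height G θ θinf (P ++ a :: Q) a.2 =
      - θ a + ((P.filter (fun c => G.Adj c.2 a.2)).map θ).sum := by
  induction P with
  | nil => simp [height]
  | cons b P ih =>
    have hb : a.2 ≠ b.2 := (h b (by simp)).symm
    have := ih (fun c hc => h c (by simp [hc]))
    by_cases hadj : G.Adj b.2 a.2
    · simp [height, hb, hadj, this]; ring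
    · simp [height, hb, hadj, this]

/-- The strict lexicographic order in which the elements of `Λ` are listed. -/
def Before (x y : ℤ × V) : Prop := x.1 < y.1 ∨ (x.1 = y.1 ∧ x.2 < y.2)

/-- The mesh relation at `b` determines `θ b` from the elements `P` of `Λ` preceding `b`. -/
theorem theta_eq_height {col : V → ZMod 2} (hbip : ∀ i j : V, G.Adj i j → col j = col i + 1)
    {Λ : Finset (ℤ × V)} (hΛ : ∀ x ∈ Λ, col x.2 = ((x.1 : ℤ) : ZMod 2))
    {θ : ℤ × V → ℤ} {θinf : V → ℤ} (hmesh : SatisfiesMesh G Λ θ θinf)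
    {P R : List (ℤ × V)} {b : ℤ × V}
    (hmem : ∀ c, c ∈ Λ ↔ c ∈ P ∨ c = b ∨ c ∈ R)
    (hP : P.Pairwise (fun x y => Before y x)) (hPb : ∀ c ∈ P, Before c b)
    (hR : ∀ c ∈ R, Before b c) :
    θ b = height G θ θinf P b.2 := by
  have hb : b ∈ Λ := (hmem b).2 (Or.inr (Or.inl rfl))
  have hirr : ∀ x : ℤ × V, ¬ Before x x := fun x h => by
    rcases h with h | h
    · exact lt_irrefl _ h
    · exact lt_irrefl _ h.2
  have hnodup : P.Nodup := by
    refine hP.imp ?_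
    rintro x y h rfl
    exact hirr _ h
  -- adjacent vertices have different colours, so they never lie in the same slice
  have hslice : ∀ c ∈ Λ, G.Adj c.2 b.2 → c.1 ≠ b.1 := by
    intro c hc hadj he
    have := hbip _ _ hadj
    rw [hΛ c hc, hΛ b hb, he] at this
    simp at this
  obtain hno | ⟨a₀, ha₀, ha₀b⟩ : (∀ c ∈ P, c.2 ≠ b.2) ∨ ∃ c ∈ P, c.2 = b.2 := by
    by_cases h : ∃ c ∈ P, c.2 = b.2
    · exact Or.inr h
    · exact Or.inl (fun c hc e => h ⟨c, hc, e⟩)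
  · have hm := (hmesh b hb).2 (by
      intro n hn hnm
      rcases (hmem _).1 hnm with h | h | h
      · exact hno _ h rfl
      · rw [← h] at hn; exact lt_irrefl _ hn
      · rcases hR _ h with h | h
        · exact lt_asymm hn h
        · exact lt_irrefl _ h.2)
    have hset : meshInf G Λ b = (P.filter (fun c => G.Adj c.2 b.2)).toFinset := by
      ext c
      simp only [meshInf, Finset.mem_filter, List.mem_toFinset, List.mem_filter, decide_eq_true_eq]
      have h1 := hPb c
      have h2 := hR c
      have h3 := hslice c
      have h4 := hmem c
      simp only [Before] at h1 h2
      grind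
    rw [hset, List.sum_toFinset _ (hnodup.filter _)] at hm
    rw [height_of_forall_ne _ _ _ _ hno, ← hm]
    ring
  · obtain ⟨a, hfind⟩ : ∃ a, P.find? (fun c => c.2 = b.2) = some a := by
      rw [← Option.isSome_iff_exists, List.find?_isSome]
      exact ⟨a₀, ha₀, by simpa using ha₀b⟩
    obtain ⟨hab, P₁, P₂, rfl, hP₁⟩ := List.find?_eq_some_iff_append.1 hfind
    have hab : a.2 = b.2 := by simpa using hab
    have hP₁ : ∀ c ∈ P₁, c.2 ≠ b.2 := fun c hc => by simpa using hP₁ c hc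
    have haΛ : a ∈ Λ := (hmem a).2 (Or.inl (by simp))
    have halt : a.1 < b.1 := by
      rcases hPb a (by simp) with h | h
      · exact h
      · exact absurd h.2 (by simp [hab])
    rw [List.pairwise_append, List.pairwise_cons] at hP
    obtain ⟨-, ⟨hP₂, -⟩, hP₁₂⟩ := hP
    have hP₁a : ∀ c ∈ P₁, Before a c := fun c hc => hP₁₂ c hc a (by simp)
    have hm := (hmesh b hb).1 a haΛ hab halt (by
      intro n hn hn' hnm
      rcases (hmem _).1 hnm with h | h | h
      · rcases List.mem_append.1 h with h | h
        · exact hP₁ _ h rfl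
        · rcases List.mem_cons.1 h with h | h
          · rw [← h] at hn; exact lt_irrefl _ hn
          · rcases hP₂ _ h with h | h
            · exact lt_asymm hn h
            · exact hn.ne' h.1
      · rw [← h] at hn'; exact lt_irrefl _ hn'
      · rcases hR _ h with h | h
        · exact lt_asymm hn' h
        · exact lt_irrefl _ h.2)
    have hslice' : ∀ c ∈ Λ, G.Adj c.2 b.2 → c.1 ≠ a.1 := by
      intro c hc hadj he
      have := hbip _ _ hadj
      rw [hΛ c hc, ← hab, hΛ a haΛ, he] at this
      simp at this
    have hset : meshFin G Λ a.1 b = (P₁.filter (fun c => G.Adj c.2 b.2)).toFinset := by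
      ext c
      simp only [meshFin, Finset.mem_filter, List.mem_toFinset, List.mem_filter, decide_eq_true_eq]
      have h1 := hPb c
      have h2 := hR c
      have h3 := hslice c
      have h4 := hmem c
      have h5 := hslice' c
      have h6 := hP₁a c
      have h7 := hP₂ c
      simp only [Before, List.mem_append, List.mem_cons] at h1 h2 h4 h6 h7
      grind
    rw [hset, List.sum_toFinset _ ((List.nodup_append.1 hnodup).1.filter _)] at hm
    rw [← hab, height_append _ _ _ _ _ (by rwa [hab]), hab, ← hm]
    ring

variable (G)

theorem statement0 (hADE : IsADE G)
    (col : V → ZMod 2) (hbip : ∀ i j : V, G.Adj i j → col j = col i + 1)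
    (Λ : Finset (ℤ × V)) (hΛ : ∀ x ∈ Λ, col x.2 = ((x.1 : ℤ) : ZMod 2))
    (θ : ℤ × V → ℤ) (θinf : V → ℤ) (i : V)
    (hmesh : SatisfiesMesh G Λ θ θinf)
    (hnonneg : ∀ x ∈ Λ, 0 ≤ θ x)
    (hzero : ∃! a : ℤ × V, a ∈ Λ ∧ θ a = 0)
    (hinf_i : θinf i = -1)
    (hinf : ∀ j : V, j ≠ i → θinf j = 0) :
    ∃ j : V, j ≠ i ∧ ∃ δ : BraidMonoid G, gammaLambda G Λ = gen G j * δ := by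
  obtain ⟨a, ⟨haΛ, ha0⟩, hauniq⟩ := hzero
  set L : List (ℤ × V) :=
    ((Λ.image (toLex : ℤ × V → Lex (ℤ × V))).sort (· ≤ ·)).map ofLex with hL
  have hγ : gammaLambda G Λ = (L.map (fun p => gen G p.2)).prod := by
    simp [gammaLambda, hL, Function.comp_def]
  have hmemL : ∀ c, c ∈ Λ ↔ c ∈ L := by
    rintro ⟨n, v⟩
    simp [hL]
  have hsorted : L.Pairwise Before := by
    rw [hL, List.pairwise_map]
    refine (Finset.sortedLT_sort _).pairwise.imp ?_
    intro x y hxy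
    exact Prod.Lex.lt_iff.1 hxy
  -- `theta_eq_height` for a splitting of the list at `b`
  have key : ∀ (P R : List (ℤ × V)) (b : ℤ × V), L = P.reverse ++ b :: R →
      θ b = height G θ θinf P b.2 := by
    intro P R b hsplit
    rw [hsplit, List.pairwise_append, List.pairwise_cons, List.pairwise_reverse] at hsorted
    obtain ⟨h1, ⟨h2, -⟩, h3⟩ := hsorted
    refine theta_eq_height hbip hΛ hmesh (R := R) ?_ h1
      (fun c hc => h3 c (by simpa using hc) b (by simp)) h2
    intro c
    rw [hmemL, hsplit]
    simp
  have hpath : ∀ (P R : List (ℤ × V)), L = P.reverse ++ R → (∀ c ∈ P, 0 < θ c) →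
      Path G i (P.map Prod.snd) (height G θ θinf P) := by
    intro P
    induction P with
    | nil =>
      intro R _ _
      have : height G θ θinf [] = fun u => if u = i then 1 else 0 := by
        funext u
        by_cases hu : u = i
        · simp [height, hu, hinf_i]
        · simp [height, hu, hinf u hu]
      rw [this]
      exact Path.nil
    | cons b P ih =>
      intro R hsplit hpos
      have hsplit' : L = P.reverse ++ b :: R := by simpa using hsplit
      have hb := key P R b hsplit'
      have hstep : height G θ θinf (b :: P) = act G b.2 (height G θ θinf P) := by
        funext u
        simp only [height, act, hb]
      rw [hstep]
      exact Path.cons b.2 (ih (b :: R) hsplit' (fun c hc => hpos c (by simp [hc])))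
        (hb ▸ hpos b (by simp))
  obtain ⟨L₁, L₂, hsplit⟩ := List.append_of_mem ((hmemL a).1 haΛ)
  have hpos : ∀ c ∈ L₁.reverse, 0 < θ c := by
    intro c hc
    have hc : c ∈ L₁ := by simpa using hc
    have hcΛ : c ∈ Λ := (hmemL c).2 (by simp [hsplit, hc])
    refine lt_of_le_of_ne (hnonneg c hcΛ) ?_
    intro h0
    have hca := hauniq c ⟨hcΛ, h0.symm⟩
    rw [hsplit, List.pairwise_append] at hsorted
    rcases hsorted.2.2 c hc a (by simp) with h | h
    · simp [hca] at h
    · simp [hca] at h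
  have hz := key L₁.reverse L₂ a (by simpa using hsplit)
  obtain ⟨j, hj, he⟩ := Path.exists_gen_mul _ rfl
    (hpath L₁.reverse (a :: L₂) (by simpa using hsplit) hpos) (hz.symm.trans ha0)
  refine ⟨j, hj, elt G (L₁.reverse.map Prod.snd) * (L₂.map (fun p => gen G p.2)).prod, ?_⟩
  rw [← mul_assoc, ← he, hγ, hsplit]
  simp [elt, Function.comp_def, mul_assoc]

end Statement0
end

section
/- Let Λ ⊂ (ℤΓ)_0 be a finite set and θ : Λ ⊔ ({−∞} × Γ_0) → ℤ a function such that (Λ, θ) satisfies mesh relations, θ is non-negative on Λ and vanishes on exactly one vertex of Λ, θ(−∞, i) = −1 for one fixed i ∈ Γ_0 and θ(−∞, k) = 0 for k ≠ i. Let a ∈ Λ be the vertex with θ(a) = 0 and assume τ_Λ(a) ∈ Λ (i.e. τ_Λ(a) is not an imaginary vertex). Then there exists a finite sequence of commutation and braiding moves transforming (Λ, θ) into a pair (Λ', θ') such that |{x ∈ Λ' : p_1(x) ≤ p_1(b)}| < |{x ∈ Λ : p_1(x) ≤ p_1(a)}|, where b is the unique vertex of Λ' on which θ' vanishes. -/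
/-!
List the vertices of `Λ` by increasing level, with `a` last in its slice. This gives a word in the
generators, and the mesh relations say that `θ` records a numbers game: start from the dominant
weight with coordinates `-θ(−∞, ·)` (the fundamental weight at `i`), and let the letter `j` negate
the current coordinate at `j` and add it to the coordinates at the neighbours of `j`; then `θ` at a
vertex is the coordinate being negated (`play_eq_of_mesh`). Commutation and braid relations turn
such a labelled word into another one, a braid relation reversing its three labels
(`WStep.legal`).

All letters before `a` carry positive labels and `a` carries `0`. Let `m` be the letter just before
`a = (n, j)`, with label `p > 0`. If `m` and `j` are not adjacent, they commute and the zero moves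
one place earlier. Otherwise the coordinate at `j` was `-p < 0` before `m` was fired, so, by an
exchange property (`exists_ends_with`, an induction on the length of the word), the word before `m`
can be rewritten to end with `j`. The whole word then ends with `j m j`, labelled `p, p, 0`, and the
braid relation puts the zero two places earlier (`exists_earlier_zero`).

Moves on words are realized by moves on pairs `(Λ, θ)`: commutation moves stretch `Λ` until its
levels are well separated (`reach_norm`), and a relation between words is then applied by sliding
the two or three vertices concerned (`reach_of_wstep`). In a stretched pair the number of vertices
weakly to the left of the zero is its position in the word, and for `a` in the original listing
this position is the number of vertices of level at most `p₁(a)`.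
-/

/-!
STATEMENT 1: the key reduction step ('Lemma 16'): if the unique zero of θ is not at the
start of an infinite mesh, then a sequence of commutation and braiding moves strictly
decreases the number of vertices to the left of (and including the slice of) the zero vertex.
-/

namespace Statement1

/-- The type A Dynkin graph on `Fin n` (a path). -/
def typeA (n : ℕ) : SimpleGraph (Fin n) :=
  SimpleGraph.fromRel (fun i j => (i : ℕ) + 1 = (j : ℕ))

/-- The type D Dynkin graph on `Fin n`: a chain `1 - 2 - ⋯ - (n-1)` with an extra
vertex `0` attached to `2`. -/
def typeD (n : ℕ) : SimpleGraph (Fin n) :=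
  SimpleGraph.fromRel
    (fun i j => (1 ≤ (i : ℕ) ∧ (i : ℕ) + 1 = (j : ℕ)) ∨ ((i : ℕ) = 0 ∧ (j : ℕ) = 2))

/-- The type E Dynkin graph on `Fin n`: a chain `1 - 2 - ⋯ - (n-1)` with an extra
vertex `0` attached to `3`. -/
def typeE (n : ℕ) : SimpleGraph (Fin n) :=
  SimpleGraph.fromRel
    (fun i j => (1 ≤ (i : ℕ) ∧ (i : ℕ) + 1 = (j : ℕ)) ∨ ((i : ℕ) = 0 ∧ (j : ℕ) = 3))

/-- `G` is a simply-laced Dynkin diagram (of type `A_n`, `D_n`, `E₆`, `E₇` or `E₈`). -/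
def IsADE {V : Type*} (G : SimpleGraph V) : Prop :=
  (∃ n : ℕ, 1 ≤ n ∧ Nonempty (G ≃g typeA n)) ∨
  (∃ n : ℕ, 4 ≤ n ∧ Nonempty (G ≃g typeD n)) ∨
  (∃ n : ℕ, (n = 6 ∨ n = 7 ∨ n = 8) ∧ Nonempty (G ≃g typeE n))

variable {V : Type} [LinearOrder V] (G : SimpleGraph V) [DecidableRel G.Adj]

/-- `mesh_Λ(a, b)` for a generalized mesh starting at a (possibly imaginary) vertex with
first coordinate `lo` and ending at `b`. -/
def meshFin (Λ : Finset (ℤ × V)) (lo : ℤ) (b : ℤ × V) : Finset (ℤ × V) :=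
  Λ.filter (fun c => G.Adj c.2 b.2 ∧ lo < c.1 ∧ c.1 < b.1)

/-- `mesh_Λ(τ_Λ(b), b)` for an infinite mesh ending at `b`. -/
def meshInf (Λ : Finset (ℤ × V)) (b : ℤ × V) : Finset (ℤ × V) :=
  Λ.filter (fun c => G.Adj c.2 b.2 ∧ c.1 < b.1)

/-- `(Λ, θ)` (where `θinf` records the values of `θ` on the imaginary vertices
`(−∞, j)`) satisfies mesh relations: for every `b ∈ Λ`,
`θ(b) + θ(τ_Λ(b)) = ∑_{c ∈ mesh_Λ(τ_Λ(b), b)} θ(c)`. -/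
def SatisfiesMesh (Λ : Finset (ℤ × V)) (θ : ℤ × V → ℤ) (θinf : V → ℤ) : Prop :=
  ∀ b ∈ Λ,
    (∀ a ∈ Λ, a.2 = b.2 → a.1 < b.1 → (∀ n : ℤ, a.1 < n → n < b.1 → (n, b.2) ∉ Λ) →
        θ b + θ a = ∑ c ∈ meshFin G Λ a.1 b, θ c) ∧
    ((∀ n : ℤ, n < b.1 → (n, b.2) ∉ Λ) →
        θ b + θinf b.2 = ∑ c ∈ meshInf G Λ b, θ c)

/-- The commutation move on pairs `(Λ, θ)`: a vertex `a = (n, j) ∈ Λ` is moved to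
`b = (n + 2ε, j)` (ε = ±1), provided `b ∉ Λ` and `(n + ε, k) ∉ Λ` for all neighbours
`k` of `j`; the value of `θ` is transported along. -/
def CommMove (p q : Finset (ℤ × V) × (ℤ × V → ℤ)) : Prop :=
  ∃ (n : ℤ) (j : V) (ε : ℤ), (ε = 1 ∨ ε = -1) ∧
    (n, j) ∈ p.1 ∧ (n + 2 * ε, j) ∉ p.1 ∧
    (∀ kk : V, G.Adj j kk → (n + ε, kk) ∉ p.1) ∧
    q.1 = insert (n + 2 * ε, j) (p.1.erase (n, j)) ∧
    q.2 = Function.update p.2 (n + 2 * ε, j) (p.2 (n, j))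

/-- The braiding move on pairs `(Λ, θ)`: if `a = (n,j)`, `b = (n+1,k)`, `c = (n+2,j)`
lie in `Λ` and form a braid (`k ∈ N(j)`), `(n+1,t) ∉ Λ` for `t ∈ N(j) ∖ {k}`,
`(n+2,l) ∉ Λ` for `l ∈ N(k) ∖ {j}`, and `d = (n+3,k) ∉ Λ`, then `Λ̄ = (Λ ∖ {a}) ∪ {d}`,
`θ̄(b) = θ(c)`, `θ̄(c) = θ(b)`, `θ̄(d) = θ(a)` and `θ̄ = θ` elsewhere. -/
def BraidMove (p q : Finset (ℤ × V) × (ℤ × V → ℤ)) : Prop :=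
  ∃ (n : ℤ) (j kk : V), G.Adj j kk ∧
    (n, j) ∈ p.1 ∧ (n + 1, kk) ∈ p.1 ∧ (n + 2, j) ∈ p.1 ∧
    (∀ t : V, G.Adj j t → t ≠ kk → (n + 1, t) ∉ p.1) ∧
    (∀ l : V, G.Adj kk l → l ≠ j → (n + 2, l) ∉ p.1) ∧
    (n + 3, kk) ∉ p.1 ∧
    q.1 = insert (n + 3, kk) (p.1.erase (n, j)) ∧
    q.2 = Function.update (Function.update (Function.update p.2
            (n + 1, kk) (p.2 (n + 2, j))) (n + 2, j) (p.2 (n + 1, kk))) (n + 3, kk) (p.2 (n, j))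

section

/-! ### Lists of labelled vertices representing a pair `(Λ, θ)` -/

/-- The list `L` of labelled vertices `((n, j), t)` represents the pair `p = (Λ, θ)`: it lists
every vertex of `Λ` exactly once, and `t` is the value of `θ` there. The values of `θ` outside
`Λ` are not recorded. -/
def Rep (L : List ((ℤ × V) × ℤ)) (p : Finset (ℤ × V) × (ℤ × V → ℤ)) : Prop :=
  (L.map Prod.fst).Nodup ∧ p.1 = (L.map Prod.fst).toFinset ∧ ∀ x ∈ L, p.2 x.1 = x.2

/-- Every pair represented by `L` can be moved to a pair represented by `L'`. -/
def Reach (L L' : List ((ℤ × V) × ℤ)) : Prop :=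
  ∀ p, Rep L p → ∃ q,
    Relation.ReflTransGen (fun p q => CommMove G p q ∨ BraidMove G p q) p q ∧ Rep L' q

variable {G}

set_option linter.unusedSectionVars false

theorem Reach.refl (L : List ((ℤ × V) × ℤ)) : Reach G L L :=
  fun p hp => ⟨p, .refl, hp⟩

theorem Reach.trans {L₁ L₂ L₃ : List ((ℤ × V) × ℤ)} (h : Reach G L₁ L₂) (h' : Reach G L₂ L₃) :
    Reach G L₁ L₃ := by
  intro p hp
  obtain ⟨q, hq, hq'⟩ := h p hp
  obtain ⟨r, hr, hr'⟩ := h' q hq'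
  exact ⟨r, hq.trans hr, hr'⟩

theorem Rep.perm {L L' : List ((ℤ × V) × ℤ)} (h : L.Perm L') {p} (hp : Rep L p) : Rep L' p := by
  obtain ⟨h1, h2, h3⟩ := hp
  refine ⟨(h.map _).nodup_iff.1 h1, ?_, fun x hx => h3 x (h.mem_iff.2 hx)⟩
  rw [h2]
  exact List.toFinset_eq_of_perm _ _ (h.map _)

theorem Reach.of_perm {L L' : List ((ℤ × V) × ℤ)} (h : L.Perm L') : Reach G L L' :=
  fun p hp => ⟨p, .refl, hp.perm h⟩

theorem comm_reach {R : List ((ℤ × V) × ℤ)} {n : ℤ} {j : V} {t ε : ℤ} (hε : ε = 1 ∨ ε = -1)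
    (h1 : ∀ y ∈ R, y.1 ≠ (n + 2 * ε, j))
    (h2 : ∀ y ∈ R, G.Adj j y.1.2 → y.1.1 ≠ n + ε) :
    Reach G (((n, j), t) :: R) (((n + 2 * ε, j), t) :: R) := by
  rintro ⟨Λ, θ⟩ ⟨hn, hΛ, hθ⟩
  simp only at hΛ hθ
  have hn' := hn
  simp only [List.map_cons, List.nodup_cons, List.mem_map, not_exists, not_and] at hn'
  refine ⟨(insert (n + 2 * ε, j) (Λ.erase (n, j)), Function.update θ (n + 2 * ε, j) (θ (n, j))),
    .single (Or.inl ⟨n, j, ε, hε, ?_, ?_, ?_, rfl, rfl⟩), ?_, ?_, ?_⟩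
  · simp [hΛ]
  · simp only [hΛ, List.map_cons, List.mem_toFinset, List.mem_cons, List.mem_map, not_or,
      not_exists, not_and]
    refine ⟨?_, h1⟩
    intro h
    simp only [Prod.mk.injEq, and_true] at h
    omega
  · intro k hk
    simp only [hΛ, List.map_cons, List.mem_toFinset, List.mem_cons, List.mem_map, not_or,
      not_exists, not_and]
    refine ⟨?_, ?_⟩
    · intro h
      simp only [Prod.mk.injEq] at h
      omega
    · intro y hy he
      refine h2 y hy ?_ ?_ <;> simp [he, hk]
  · simp only [List.map_cons, List.nodup_cons, List.mem_map, not_exists, not_and]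
    exact ⟨h1, hn'.2⟩
  · simp only [hΛ, List.map_cons, List.toFinset_cons]
    rw [Finset.erase_insert]
    simpa only [List.mem_toFinset, List.mem_map, not_exists, not_and] using hn'.1
  · intro x hx
    rcases List.mem_cons.1 hx with rfl | hx
    · simpa using hθ ((n, j), t) (by simp)
    · simp only
      rw [Function.update_of_ne (h1 x hx)]
      exact hθ x (by simp [hx])

theorem braid_reach {R : List ((ℤ × V) × ℤ)} {n : ℤ} {j k : V} {x y z : ℤ} (hjk : G.Adj j k)
    (hR : ∀ c ∈ R, c.1.1 < n ∨ n + 3 < c.1.1) :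
    Reach G (((n, j), x) :: ((n + 1, k), y) :: ((n + 2, j), z) :: R)
      (((n + 1, k), z) :: ((n + 2, j), y) :: ((n + 3, k), x) :: R) := by
  rintro ⟨Λ, θ⟩ ⟨hn, hΛ, hθ⟩
  simp only at hΛ hθ
  have hmem : ∀ c : ℤ × V, c ∈ Λ ↔ c = (n, j) ∨ c = (n + 1, k) ∨ c = (n + 2, j) ∨
      ∃ d ∈ R, d.1 = c := by
    intro c
    simp [hΛ]
  have hRne : ∀ c : ℤ × V, n ≤ c.1 → c.1 ≤ n + 3 → ∀ d ∈ R, d.1 ≠ c := by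
    rintro c h1 h2 d hd rfl
    have := hR d hd
    omega
  have hne : j ≠ k := hjk.ne
  have hnR : (R.map Prod.fst).Nodup := by
    simp only [List.map_cons, List.nodup_cons] at hn
    exact hn.2.2.2
  refine ⟨(insert (n + 3, k) (Λ.erase (n, j)),
      Function.update (Function.update (Function.update θ (n + 1, k) (θ (n + 2, j)))
        (n + 2, j) (θ (n + 1, k))) (n + 3, k) (θ (n, j))),
    .single (Or.inr ⟨n, j, k, hjk, ?_, ?_, ?_, ?_, ?_, ?_, rfl, rfl⟩), ?_, ?_, ?_⟩
  · simp [hmem]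
  · simp [hmem]
  · simp [hmem]
  · intro t _ htk h
    rcases (hmem _).1 h with h | h | h | ⟨d, hd, h⟩
    · simp at h
    · simp [htk] at h
    · simp at h
    · exact hRne _ (by simp) (by simp) d hd h
  · intro t _ htk h
    rcases (hmem _).1 h with h | h | h | ⟨d, hd, h⟩
    · simp at h
    · simp at h
    · simp [htk] at h
    · exact hRne _ (by simp) (by simp) d hd h
  · intro h
    rcases (hmem _).1 h with h | h | h | ⟨d, hd, h⟩
    · simp at h
    · simp at h
    · simp at h
    · exact hRne _ (by simp) (by simp) d hd h
  · simp only [List.map_cons, List.nodup_cons, List.mem_cons, List.mem_map, not_or, not_exists,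
      not_and]
    refine ⟨⟨by simp, by simp, hRne _ (by simp) (by simp)⟩,
      ⟨by simp, hRne _ (by simp) (by simp)⟩, hRne _ (by simp) (by simp), hnR⟩
  · ext c
    simp only [Finset.mem_insert, Finset.mem_erase, hmem, List.mem_toFinset, List.map_cons,
      List.mem_cons, List.mem_map]
    constructor
    · rintro (h | ⟨h0, h | h | h | h⟩)
      · exact Or.inr (Or.inr (Or.inl h))
      · exact absurd h h0
      · exact Or.inl h
      · exact Or.inr (Or.inl h)
      · exact Or.inr (Or.inr (Or.inr h))
    · rintro (h | h | h | ⟨d, hd, h⟩)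
      · exact Or.inr ⟨by simp [h], Or.inr (Or.inl h)⟩
      · exact Or.inr ⟨by simp [h], Or.inr (Or.inr (Or.inl h))⟩
      · exact Or.inl h
      · refine Or.inr ⟨?_, Or.inr (Or.inr (Or.inr ⟨d, hd, h⟩))⟩
        rintro rfl
        exact hRne _ (by simp) (by simp) d hd h
  · have e1 := hθ ((n, j), x) (by simp)
    have e2 := hθ ((n + 1, k), y) (by simp)
    have e3 := hθ ((n + 2, j), z) (by simp)
    intro c hc
    simp only [List.mem_cons] at hc
    rcases hc with rfl | rfl | rfl | hc
    · simpa [Function.update_apply] using e3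
    · simpa [Function.update_apply] using e2
    · simpa [Function.update_apply] using e1
    · simp only
      rw [Function.update_of_ne (hRne (n + 3, k) (by simp) (by simp) c hc),
        Function.update_of_ne (hRne (n + 2, j) (by simp) (by simp) c hc),
        Function.update_of_ne (hRne (n + 1, k) (by simp) (by simp) c hc)]
      exact hθ c (by simp [hc])

theorem slide_aux {R : List ((ℤ × V) × ℤ)} {j : V} {t ε : ℤ} (hε : ε = 1 ∨ ε = -1) (d : ℕ) :
    ∀ n : ℤ, (∀ y ∈ R, G.Adj j y.1.2 ∨ y.1.2 = j →
      ε * (y.1.1 - n) ≤ 0 ∨ 2 * (d : ℤ) < ε * (y.1.1 - n)) →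
    Reach G (((n, j), t) :: R) (((n + 2 * ε * d, j), t) :: R) := by
  induction d with
  | zero =>
    intro n _
    simpa using Reach.refl _
  | succ d ih =>
    intro n h
    have h1 : Reach G (((n, j), t) :: R) (((n + 2 * ε, j), t) :: R) := by
      refine comm_reach hε ?_ ?_
      · intro y hy he
        have := h y hy (Or.inr (by rw [he]))
        rw [he] at this
        push_cast at this
        rcases hε with rfl | rfl <;> omega
      · intro y hy hadj he
        have := h y hy (Or.inl hadj)
        rw [he] at this
        push_cast at this
        rcases hε with rfl | rfl <;> omega
    have h2 := ih (n + 2 * ε) (by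
      intro y hy hyj
      have := h y hy hyj
      push_cast at this
      rcases hε with rfl | rfl <;> omega)
    have e : n + 2 * ε + 2 * ε * d = n + 2 * ε * ((d + 1 : ℕ) : ℤ) := by
      push_cast
      ring
    rw [e] at h2
    exact h1.trans h2

/-- Iterated commutation: a vertex slides from level `n` to level `n'` along its row as long as
no vertex of the same or a neighbouring row lies on the way. -/
theorem slide {R : List ((ℤ × V) × ℤ)} {j : V} {t : ℤ} (n n' : ℤ) (hd : (n' - n) % 2 = 0)
    (h : ∀ y ∈ R, G.Adj j y.1.2 ∨ y.1.2 = j →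
      (y.1.1 ≤ n ∧ (y.1.1 < n' ∨ n ≤ n')) ∨ (n ≤ y.1.1 ∧ (n' < y.1.1 ∨ n' ≤ n))) :
    Reach G (((n, j), t) :: R) (((n', j), t) :: R) := by
  rcases le_total n n' with hle | hle
  · have := slide_aux (G := G) (R := R) (j := j) (t := t) (Or.inl rfl) ((n' - n) / 2).toNat n (by
      intro y hy hyj
      have := h y hy hyj
      omega)
    convert this using 4
    omega
  · have := slide_aux (G := G) (R := R) (j := j) (t := t) (Or.inr rfl) ((n - n') / 2).toNat n (by
      intro y hy hyj
      have := h y hy hyj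
      omega)
    convert this using 4
    omega

/-! ### Labelled words and their stretched realizations -/

/-- The letter and the label of a labelled vertex, forgetting its level. -/
def toLetter (x : (ℤ × V) × ℤ) : V × ℤ := (x.1.2, x.2)

/-- The stretched realization of a labelled word: its letter number `p` (counted from `0`) is put
at level `M + 4 * p + e j`, where `e j ∈ {0, 1}` is the colour of the letter `j`. -/
def norm (e : V → ℤ) : ℤ → List (V × ℤ) → List ((ℤ × V) × ℤ)
  | _, [] => []
  | M, x :: w => ((M + e x.1, x.1), x.2) :: norm e (M + 4) w

theorem norm_append (e : V → ℤ) (A B : List (V × ℤ)) (M : ℤ) :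
    norm e M (A ++ B) = norm e M A ++ norm e (M + 4 * A.length) B := by
  induction A generalizing M with
  | nil => simp [norm]
  | cons x A ih =>
    simp only [List.cons_append, norm, ih, List.length_cons]
    push_cast
    rw [show M + 4 + 4 * (A.length : ℤ) = M + 4 * ((A.length : ℤ) + 1) by ring]

theorem norm_map (e : V → ℤ) (A : List (V × ℤ)) (M : ℤ) :
    (norm e M A).map toLetter = A := by
  induction A generalizing M with
  | nil => rfl
  | cons x A ih => simp [norm, toLetter, ih]

theorem norm_length (e : V → ℤ) (A : List (V × ℤ)) (M : ℤ) :
    (norm e M A).length = A.length := by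
  simpa using congrArg List.length (norm_map e A M)

theorem norm_bound {e : V → ℤ} (he : ∀ j, e j = 0 ∨ e j = 1) (A : List (V × ℤ)) (M : ℤ) :
    ∀ x ∈ norm e M A, M ≤ x.1.1 ∧ x.1.1 ≤ M + 4 * A.length - 3 := by
  induction A generalizing M with
  | nil => simp [norm]
  | cons y A ih =>
    intro x hx
    simp only [norm, List.mem_cons] at hx
    simp only [List.length_cons]
    push_cast
    rcases hx with rfl | hx
    · have := he y.1
      simp only
      omega
    · have := ih (M + 4) x hx
      omega

/-- One commutation or braid relation applied inside a labelled word; the braid relation reverses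
the three labels. -/
inductive WStep (G : SimpleGraph V) : List (V × ℤ) → List (V × ℤ) → Prop
  | comm (A B : List (V × ℤ)) (j k : V) (x y : ℤ) (hne : j ≠ k) (hadj : ¬ G.Adj j k) :
      WStep G (A ++ (j, x) :: (k, y) :: B) (A ++ (k, y) :: (j, x) :: B)
  | braid (A B : List (V × ℤ)) (j k : V) (x y z : ℤ) (hadj : G.Adj j k) :
      WStep G (A ++ (j, x) :: (k, y) :: (j, z) :: B) (A ++ (k, z) :: (j, y) :: (k, x) :: B)

theorem reach_of_wstep {e : V → ℤ} (he : ∀ j, e j = 0 ∨ e j = 1)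
    (he' : ∀ j k, G.Adj j k → e j + e k = 1) {w w' : List (V × ℤ)} (h : WStep G w w') (M : ℤ) :
    Reach G (norm e M w) (norm e M w') := by
  cases h with
  | comm A B j k x y hne hadj =>
    simp only [norm_append, norm]
    have hA := norm_bound he A M
    have hB := norm_bound he B (M + 4 * A.length + 4 + 4)
    set N := M + 4 * (A.length : ℤ)
    set A' := norm e M A
    set B' := norm e (N + 4 + 4) B
    have hj := he j
    have hk := he k
    have hR : ∀ c ∈ A' ++ B', c.1.1 ≤ N - 3 ∨ N + 8 ≤ c.1.1 := by
      intro c hc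
      rcases List.mem_append.1 hc with hc | hc
      · have := hA c hc
        omega
      · have := hB c hc
        omega
    have p1 : (A' ++ ((N + e j, j), x) :: ((N + 4 + e k, k), y) :: B').Perm
        (((N + e j, j), x) :: ((N + 4 + e k, k), y) :: (A' ++ B')) :=
      List.perm_middle.trans (List.Perm.cons _ List.perm_middle)
    have p2 : (((N + e k, k), y) :: ((N + 4 + e j, j), x) :: (A' ++ B')).Perm
        (A' ++ ((N + e k, k), y) :: ((N + 4 + e j, j), x) :: B') :=
      (List.perm_middle.trans (List.Perm.cons _ List.perm_middle)).symm
    refine (Reach.of_perm p1).trans (Reach.trans ?_ (Reach.of_perm p2))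
    refine Reach.trans (slide (N + e j) (N + 4 + e j) (by omega) ?_)
      (Reach.trans (Reach.of_perm (List.Perm.swap _ _ _))
        (slide (N + 4 + e k) (N + e k) (by omega) ?_))
    · intro c hc hcj
      rcases List.mem_cons.1 hc with rfl | hc
      · rcases hcj with h | h
        · exact absurd h hadj
        · exact absurd h.symm hne
      · have := hR c hc
        omega
    · intro c hc hcj
      rcases List.mem_cons.1 hc with rfl | hc
      · rcases hcj with h | h
        · exact absurd h.symm hadj
        · exact absurd h hne
      · have := hR c hc
        omega
  | braid A B j k x y z hadj =>
    simp only [norm_append, norm]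
    have hA := norm_bound he A M
    have hB := norm_bound he B (M + 4 * A.length + 4 + 4 + 4)
    set N := M + 4 * (A.length : ℤ)
    set A' := norm e M A
    set B' := norm e (N + 4 + 4 + 4) B
    have hj := he j
    have hk := he k
    have hjk := he' j k hadj
    have hR : ∀ c ∈ A' ++ B', c.1.1 ≤ N - 3 ∨ N + 12 ≤ c.1.1 := by
      intro c hc
      rcases List.mem_append.1 hc with hc | hc
      · have := hA c hc
        omega
      · have := hB c hc
        omega
    have pm : ∀ u v w : (ℤ × V) × ℤ, (A' ++ u :: v :: w :: B').Perm
        (u :: v :: w :: (A' ++ B')) := fun u v w =>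
      List.perm_middle.trans (List.Perm.cons _
        (List.perm_middle.trans (List.Perm.cons _ List.perm_middle)))
    have rot : ∀ (u v w : (ℤ × V) × ℤ) (R : List ((ℤ × V) × ℤ)),
        (u :: v :: w :: R).Perm (v :: w :: u :: R) := fun u v w R =>
      (List.Perm.swap v u (w :: R)).trans (List.Perm.cons _ (List.Perm.swap w u R))
    refine (Reach.of_perm (pm _ _ _)).trans (Reach.trans ?_ (Reach.of_perm (pm _ _ _).symm))
    -- The three letters are squeezed to the consecutive levels `m, m + 1, m + 2`, braided, and
    -- stretched again.
    obtain ⟨m, hm⟩ : ∃ m, m = N + 4 + e j := ⟨_, rfl⟩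
    have s1 : Reach G
        (((N + e j, j), x) :: ((N + 4 + e k, k), y) :: ((N + 4 + 4 + e j, j), z) :: (A' ++ B'))
        (((m, j), x) :: ((m + 1, k), y) :: ((m + 2, j), z) :: (A' ++ B')) := by
      refine (Reach.of_perm ((rot _ _ _ _).trans (rot _ _ _ _))).trans ?_
      refine (slide _ (m + 4) (by omega) ?_).trans ?_
      · simp only [List.mem_cons]
        rintro c (rfl | rfl | hc) _
        · simp only; omega
        · simp only; omega
        · have := hR c hc; omega
      refine (Reach.of_perm ((rot _ _ _ _).trans (rot _ _ _ _))).trans ?_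
      refine (slide _ (m + 1) (by omega) ?_).trans ?_
      · simp only [List.mem_cons]
        rintro c (rfl | rfl | hc) _
        · simp only; omega
        · simp only; omega
        · have := hR c hc; omega
      refine (Reach.of_perm ((rot _ _ _ _).trans (rot _ _ _ _))).trans ?_
      refine (slide _ m (by omega) ?_).trans ?_
      · simp only [List.mem_cons]
        rintro c (rfl | rfl | hc) _
        · simp only; omega
        · simp only; omega
        · have := hR c hc; omega
      refine (Reach.of_perm ((rot _ _ _ _).trans (rot _ _ _ _))).trans ?_
      refine (slide _ (m + 2) (by omega) ?_).trans ?_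
      · simp only [List.mem_cons]
        rintro c (rfl | rfl | hc) _
        · simp only; omega
        · simp only; omega
        · have := hR c hc; omega
      exact Reach.of_perm (rot _ _ _ _)
    have s2 : Reach G
        (((m + 1, k), z) :: ((m + 2, j), y) :: ((m + 3, k), x) :: (A' ++ B'))
        (((N + e k, k), z) :: ((N + 4 + e j, j), y) :: ((N + 4 + 4 + e k, k), x) ::
          (A' ++ B')) := by
      refine (slide _ (N + e k) (by omega) ?_).trans ?_
      · simp only [List.mem_cons]
        rintro c (rfl | rfl | hc) _
        · simp only; omega
        · simp only; omega
        · have := hR c hc; omega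
      refine (Reach.of_perm ((rot _ _ _ _).trans (rot _ _ _ _))).trans ?_
      refine (slide _ (N + 4 + 4 + e k) (by omega) ?_).trans ?_
      · simp only [List.mem_cons]
        rintro c (rfl | rfl | hc) _
        · simp only; omega
        · simp only; omega
        · have := hR c hc; omega
      refine (Reach.of_perm ((rot _ _ _ _).trans (rot _ _ _ _))).trans ?_
      refine (slide _ (N + 4 + e j) (by omega) ?_).trans ?_
      · simp only [List.mem_cons]
        rintro c (rfl | rfl | hc) _
        · simp only; omega
        · simp only; omega
        · have := hR c hc; omega
      exact Reach.of_perm ((rot _ _ _ _).trans (rot _ _ _ _))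
    refine s1.trans (Reach.trans (braid_reach hadj ?_) s2)
    intro c hc
    have := hR c hc
    omega

theorem reach_of_wsteps {e : V → ℤ} (he : ∀ j, e j = 0 ∨ e j = 1)
    (he' : ∀ j k, G.Adj j k → e j + e k = 1) {w w' : List (V × ℤ)}
    (h : Relation.ReflTransGen (WStep G) w w') (M : ℤ) :
    Reach G (norm e M w) (norm e M w') := by
  induction h with
  | refl => exact Reach.refl _
  | tail _ h ih => exact ih.trans (reach_of_wstep he he' h M)

/-- Vertices listed by weakly increasing level can be moved to the stretched realization of their
word, the last vertex being moved first. -/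
theorem reach_norm {e : V → ℤ} (he : ∀ j, e j = 0 ∨ e j = 1) (M : ℤ) (hM : M % 2 = 0)
    (P : List ((ℤ × V) × ℤ)) :
    ∀ Q : List ((ℤ × V) × ℤ), P.Pairwise (fun x y => x.1.1 ≤ y.1.1) →
      (∀ x ∈ P, (x.1.1 - e x.1.2) % 2 = 0 ∧ x.1.1 ≤ M) →
      (∀ x ∈ Q, M + 4 * P.length ≤ x.1.1) →
      Reach G (P ++ Q) (norm e M (P.map toLetter) ++ Q) := by
  induction P using List.reverseRecOn with
  | nil => intro Q _ _ _; exact Reach.refl _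
  | append_singleton P x ih =>
    intro Q hP hx hQ
    obtain ⟨⟨n, j⟩, t⟩ := x
    rw [List.pairwise_append] at hP
    have hj := he j
    have hxx := hx ((n, j), t) (by simp)
    simp only at hxx
    simp only [List.length_append, List.length_singleton] at hQ
    push_cast at hQ
    have h1 : Reach G ((P ++ [((n, j), t)]) ++ Q)
        (P ++ (((M + 4 * P.length + e j, j), t) :: Q)) := by
      rw [List.append_assoc]
      refine (Reach.of_perm List.perm_middle).trans
        (Reach.trans (slide _ _ (by omega) ?_) (Reach.of_perm List.perm_middle.symm))
      intro y hy _
      rcases List.mem_append.1 hy with hy | hy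
      · have := hP.2.2 y hy _ (List.mem_singleton_self _)
        simp only at this
        omega
      · have := hQ y hy
        omega
    have h2 := ih (((M + 4 * P.length + e j, j), t) :: Q) hP.1
      (fun x hx' => hx x (by simp [hx'])) (by
        intro y hy
        rcases List.mem_cons.1 hy with rfl | hy
        · simp only; omega
        · have := hQ y hy
          omega)
    refine h1.trans ?_
    convert h2 using 1
    simp [norm_append, norm, toLetter]

/-! ### The numbers game -/

/-- Firing the letter `x.1` with label `x.2`: the coordinate at `x.1` becomes `-x.2`, and `x.2` is
added to the coordinates at its neighbours. When `u x.1 = x.2` this is the action of the simple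
reflection at `x.1` on the weight with coordinates `u`. -/
def fire (G : SimpleGraph V) [DecidableRel G.Adj] (u : V → ℤ) (x : V × ℤ) : V → ℤ :=
  fun k => if k = x.1 then -x.2 else if G.Adj x.1 k then u k + x.2 else u k

/-- The position reached from `u` after firing all letters of `w`. -/
def play (G : SimpleGraph V) [DecidableRel G.Adj] (u : V → ℤ) (w : List (V × ℤ)) : V → ℤ :=
  w.foldl (fire G) u

/-- Each letter of `w`, played from the position `u`, is labelled by its coordinate at the moment
it is fired. -/
def Legal (G : SimpleGraph V) [DecidableRel G.Adj] : (V → ℤ) → List (V × ℤ) → Prop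
  | _, [] => True
  | u, x :: w => u x.1 = x.2 ∧ Legal G (fire G u x) w

theorem play_append (u : V → ℤ) (A B : List (V × ℤ)) :
    play G u (A ++ B) = play G (play G u A) B := List.foldl_append

theorem play_cons (u : V → ℤ) (x : V × ℤ) (B : List (V × ℤ)) :
    play G u (x :: B) = play G (fire G u x) B := rfl

theorem legal_append (u : V → ℤ) (A B : List (V × ℤ)) :
    Legal G u (A ++ B) ↔ Legal G u A ∧ Legal G (play G u A) B := by
  induction A generalizing u with
  | nil => simp [Legal, play]
  | cons x A ih => simp [Legal, ih, play_cons, and_assoc]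

theorem legal_concat (u : V → ℤ) (A : List (V × ℤ)) (x : V × ℤ) :
    Legal G u (A ++ [x]) ↔ Legal G u A ∧ play G u A x.1 = x.2 := by
  simp [legal_append, Legal]

theorem play_concat (u : V → ℤ) (A : List (V × ℤ)) (x : V × ℤ) :
    play G u (A ++ [x]) = fire G (play G u A) x := by
  simp [play]

theorem fire_self (u : V → ℤ) (j : V) (t : ℤ) : fire G u (j, t) j = -t := by simp [fire]

theorem fire_adj (u : V → ℤ) {j k : V} (t : ℤ) (h : G.Adj j k) :
    fire G u (j, t) k = u k + t := by simp [fire, h, h.ne']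

theorem fire_nadj (u : V → ℤ) {j k : V} (t : ℤ) (h : ¬ G.Adj j k) (hne : k ≠ j) :
    fire G u (j, t) k = u k := by simp [fire, h, hne]

theorem fire_comm (u : V → ℤ) {j k : V} (x y : ℤ) (hne : j ≠ k) (h : ¬ G.Adj j k) :
    fire G (fire G u (j, x)) (k, y) = fire G (fire G u (k, y)) (j, x) := by
  have h' : ¬ G.Adj k j := fun e => h e.symm
  funext l
  simp only [fire]
  by_cases h1 : l = j
  · subst h1; simp [hne, h']
  by_cases h2 : l = k
  · subst h2; simp [hne.symm, h]
  simp only [h1, h2, if_false]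
  split_ifs <;> ring

/-- Both sides of a braid relation lead to the same position. The condition `y = x + z` holds
whenever the three letters are legally labelled. -/
theorem fire_braid (u : V → ℤ) {j k : V} (x y z : ℤ) (h : G.Adj j k)
    (hy : y = x + z) :
    fire G (fire G (fire G u (j, x)) (k, y)) (j, z) =
      fire G (fire G (fire G u (k, z)) (j, y)) (k, x) := by
  have h' := h.symm
  have hne := h.ne
  funext l
  simp only [fire]
  by_cases h1 : l = j
  · subst h1; simp [hne, h']; omega
  by_cases h2 : l = k
  · subst h2; simp [hne.symm, h]; omega
  simp only [h1, h2, if_false]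
  split_ifs <;> omega

theorem WStep.legal {u : V → ℤ} {w w' : List (V × ℤ)} (h : WStep G w w') (hw : Legal G u w) :
    Legal G u w' ∧ play G u w' = play G u w := by
  cases h with
  | comm A B j k x y hne hadj =>
    have hadj' : ¬ G.Adj k j := fun e => hadj e.symm
    rw [legal_append] at hw ⊢
    obtain ⟨hA, h1, h2, hB⟩ := hw
    simp only [fire_nadj _ _ hadj hne.symm] at h1 h2
    refine ⟨⟨hA, h2, ?_, ?_⟩, ?_⟩
    · simpa only [fire_nadj _ _ hadj' hne] using h1
    · rwa [← fire_comm _ _ _ hne hadj]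
    · simp only [play_append, play_cons, fire_comm _ _ _ hne hadj]
  | braid A B j k x y z hadj =>
    rw [legal_append] at hw ⊢
    obtain ⟨hA, h1, h2, h3, hB⟩ := hw
    simp only [fire_adj _ _ hadj, fire_adj _ _ hadj.symm, fire_self] at h1 h2 h3
    have hy : y = x + z := by omega
    refine ⟨⟨hA, ?_, ?_, ?_, ?_⟩, ?_⟩
    · simp only; omega
    · simp only [fire_adj _ _ hadj.symm]; omega
    · simp only [fire_adj _ _ hadj, fire_self]; omega
    · rwa [← fire_braid _ _ _ _ hadj hy]
    · simp only [play_append, play_cons, fire_braid _ _ _ _ hadj hy]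

theorem WStep.perm {w w' : List (V × ℤ)} (h : WStep G w w') :
    (w.map Prod.snd).Perm (w'.map Prod.snd) := by
  cases h with
  | comm A B j k x y hne hadj =>
    simp only [List.map_append, List.map_cons]
    exact List.Perm.append_left _ (List.Perm.swap _ _ _)
  | braid A B j k x y z hadj =>
    simp only [List.map_append, List.map_cons]
    refine List.Perm.append_left _ ?_
    exact ((List.Perm.swap y x _).trans ((List.Perm.swap z x _).cons y)).trans
      (List.Perm.swap z y _)

theorem WStep.append {w w' : List (V × ℤ)} (h : WStep G w w') (C : List (V × ℤ)) :
    WStep G (w ++ C) (w' ++ C) := by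
  cases h with
  | comm A B j k x y hne hadj =>
    simpa using WStep.comm (G := G) A (B ++ C) j k x y hne hadj
  | braid A B j k x y z hadj =>
    simpa using WStep.braid (G := G) A (B ++ C) j k x y z hadj

theorem wsteps_legal {u : V → ℤ} {w w' : List (V × ℤ)} (h : Relation.ReflTransGen (WStep G) w w')
    (hw : Legal G u w) : Legal G u w' ∧ play G u w' = play G u w := by
  induction h with
  | refl => exact ⟨hw, rfl⟩
  | tail _ h ih =>
    obtain ⟨h1, h2⟩ := h.legal ih.1
    exact ⟨h1, h2.trans ih.2⟩

theorem wsteps_perm {w w' : List (V × ℤ)} (h : Relation.ReflTransGen (WStep G) w w') :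
    (w.map Prod.snd).Perm (w'.map Prod.snd) := by
  induction h with
  | refl => exact List.Perm.refl _
  | tail _ h ih => exact ih.trans h.perm

theorem wsteps_append {w w' : List (V × ℤ)} (h : Relation.ReflTransGen (WStep G) w w')
    (C : List (V × ℤ)) : Relation.ReflTransGen (WStep G) (w ++ C) (w' ++ C) := by
  induction h with
  | refl => exact .refl
  | tail _ h ih => exact ih.tail (h.append C)

theorem perm_pos {w w' : List (V × ℤ)} (h : (w.map Prod.snd).Perm (w'.map Prod.snd))
    (hw : ∀ x ∈ w, 0 < x.2) : ∀ x ∈ w', 0 < x.2 := by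
  intro x hx
  have : x.2 ∈ w.map Prod.snd := h.mem_iff.2 (List.mem_map_of_mem hx)
  obtain ⟨y, hy, e⟩ := List.mem_map.1 this
  rw [← e]
  exact hw y hy

/-- The exchange property: if a legal word with positive labels, played from a dominant position,
makes the coordinate at `j` negative, then the word can be rewritten so as to end with `j`. -/
theorem exists_ends_with {u : V → ℤ} (hu : ∀ k, 0 ≤ u k) (N : ℕ) :
    ∀ (w : List (V × ℤ)) (j : V), w.length = N → Legal G u w → (∀ x ∈ w, 0 < x.2) →
      play G u w j < 0 →
      ∃ Y t, Relation.ReflTransGen (WStep G) w (Y ++ [(j, t)]) := by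
  induction N using Nat.strong_induction_on with
  | _ N ih =>
  intro w j hN hw hpos hneg
  rcases List.eq_nil_or_concat' w with rfl | ⟨w₁, ⟨m, p⟩, rfl⟩
  · exact absurd hneg (not_lt.2 (hu j))
  rw [legal_concat] at hw
  obtain ⟨hw₁, hp⟩ := hw
  simp only at hp
  have hp0 : 0 < p := hpos (m, p) (by simp)
  have hpos₁ : ∀ x ∈ w₁, 0 < x.2 := fun x hx => hpos x (by simp [hx])
  simp only [List.length_append, List.length_singleton] at hN
  rw [play_concat] at hneg
  by_cases hmj : j = m
  · subst hmj
    exact ⟨w₁, p, .refl⟩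
  by_cases hadj : G.Adj m j
  · rw [fire_adj _ _ hadj] at hneg
    obtain ⟨X, a, hX⟩ := ih w₁.length (by omega) w₁ j rfl hw₁ hpos₁ (by omega)
    obtain ⟨hXl, hXp⟩ := wsteps_legal hX hw₁
    have hXperm := wsteps_perm hX
    have hXpos := perm_pos hXperm hpos₁
    have hXlen := hXperm.length_eq
    simp only [List.length_map, List.length_append, List.length_singleton] at hXlen
    rw [legal_concat] at hXl
    obtain ⟨hXl, ha⟩ := hXl
    simp only at ha
    rw [play_concat] at hXp
    have e1 := congrFun hXp m
    have e2 := congrFun hXp j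
    rw [fire_adj _ _ hadj.symm] at e1
    rw [fire_self] at e2
    obtain ⟨Y, b, hY⟩ := ih X.length (by omega) X m rfl hXl
      (fun x hx => hXpos x (by simp [hx])) (by omega)
    refine ⟨Y ++ [(j, p), (m, a)], b, ?_⟩
    have r1 := (hX.trans (wsteps_append hY [(j, a)]))
    have r2 := wsteps_append r1 [(m, p)]
    refine r2.trans (.single ?_)
    simpa using WStep.braid (G := G) Y [] m j b a p hadj
  · rw [fire_nadj _ _ hadj hmj] at hneg
    obtain ⟨Y, t, hY⟩ := ih w₁.length (by omega) w₁ j rfl hw₁ hpos₁ hneg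
    refine ⟨Y ++ [(m, p)], t, (wsteps_append hY [(m, p)]).trans (.single ?_)⟩
    simpa using WStep.comm (G := G) Y [] j m t p hmj (fun e => hadj e.symm)

/-- A zero label preceded by a nonempty word of positive labels can be moved to an earlier
position of the word. -/
theorem exists_earlier_zero {u : V → ℤ} (hu : ∀ k, 0 ≤ u k) {P : List (V × ℤ)} {j : V}
    (hP : Legal G u (P ++ [(j, 0)])) (hpos : ∀ x ∈ P, 0 < x.2) (hne : P ≠ []) :
    ∃ P' k Q', Relation.ReflTransGen (WStep G) (P ++ [(j, 0)]) (P' ++ (k, 0) :: Q') ∧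
      P'.length < P.length := by
  rcases List.eq_nil_or_concat' P with rfl | ⟨P₁, ⟨m, p⟩, rfl⟩
  · exact absurd rfl hne
  rw [legal_concat, legal_concat, play_concat] at hP
  obtain ⟨⟨hP₁, hp⟩, h0⟩ := hP
  simp only at hp h0
  have hp0 : 0 < p := hpos (m, p) (by simp)
  have hmj : j ≠ m := by
    rintro rfl
    rw [fire_self] at h0
    omega
  by_cases hadj : G.Adj m j
  · rw [fire_adj _ _ hadj] at h0
    obtain ⟨Y, t, hY⟩ := exists_ends_with hu P₁.length P₁ j rfl hP₁
      (fun x hx => hpos x (by simp [hx])) (by omega)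
    have hlen := (wsteps_perm hY).length_eq
    simp only [List.length_map, List.length_append, List.length_singleton] at hlen
    refine ⟨Y, m, [(j, p), (m, t)], ?_, by simp; omega⟩
    have r := wsteps_append hY [(m, p), (j, 0)]
    have s := WStep.braid (G := G) Y [] j m t p 0 hadj.symm
    simp only [List.append_assoc, List.cons_append, List.nil_append] at r ⊢
    exact r.trans (.single s)
  · refine ⟨P₁, j, [(m, p)], .single ?_, by simp⟩
    simpa using WStep.comm (G := G) P₁ [] m j p 0 hmj.symm hadj

/-! ### From mesh relations to the numbers game -/

/-- A vertex of `Λ` as a labelled letter. -/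
def lab (θ : ℤ × V → ℤ) (x : ℤ × V) : V × ℤ := (x.2, θ x)

theorem play_of_not_mem (θ : ℤ × V → ℤ) (j : V) (P : List (ℤ × V)) :
    ∀ u : V → ℤ, (∀ c ∈ P, c.2 ≠ j) →
      play G u (P.map (lab θ)) j = u j + ((P.filter (fun c => G.Adj c.2 j)).map θ).sum := by
  induction P with
  | nil => intro u _; simp [play]
  | cons c P ih =>
    intro u h
    rw [List.map_cons, play_cons, ih _ (fun d hd => h d (by simp [hd]))]
    by_cases hadj : G.Adj c.2 j
    · simp [lab, fire_adj _ _ hadj, hadj, add_assoc]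
    · simp [lab, fire_nadj _ _ hadj (h c (by simp)).symm, hadj]

theorem exists_last (j : V) (A : List (ℤ × V)) (h : ∃ c ∈ A, c.2 = j) :
    ∃ A₁ c A₂, A = A₁ ++ c :: A₂ ∧ c.2 = j ∧ ∀ d ∈ A₂, d.2 ≠ j := by
  induction A with
  | nil => simp at h
  | cons d A ih =>
    by_cases h' : ∃ c ∈ A, c.2 = j
    · obtain ⟨A₁, c, A₂, rfl, hc, hA⟩ := ih h'
      exact ⟨d :: A₁, c, A₂, rfl, hc, hA⟩
    · push Not at h'
      obtain ⟨c, hc, hcj⟩ := h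
      rcases List.mem_cons.1 hc with rfl | hc
      · exact ⟨[], c, A, rfl, hcj, h'⟩
      · exact absurd hcj (h' c hc)

/-- The mesh relation ending at `x` says that the label of `x` is the coordinate at `x.2` of the
position reached by firing all preceding vertices, starting from the weight `-θinf`. -/
theorem play_eq_of_mesh {Λ : Finset (ℤ × V)} {θ : ℤ × V → ℤ} {θinf : V → ℤ}
    (hmesh : SatisfiesMesh G Λ θ θinf)
    (hpar : ∀ y ∈ Λ, ∀ z ∈ Λ, G.Adj y.2 z.2 → y.1 ≠ z.1)
    {A B : List (ℤ × V)} {x : ℤ × V} (hL : ∀ c, c ∈ Λ ↔ c ∈ A ++ x :: B)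
    (hs : (A ++ x :: B).Pairwise (fun y z => y.1 ≤ z.1 ∧ y ≠ z)) :
    play G (fun k => -θinf k) (A.map (lab θ)) x.2 = θ x := by
  have hxΛ : x ∈ Λ := (hL x).2 (by simp)
  obtain ⟨hmf, hmi⟩ := hmesh x hxΛ
  rw [List.pairwise_append, List.pairwise_cons] at hs
  obtain ⟨hsA, ⟨hsB, -⟩, hsAB⟩ := hs
  have hAx : ∀ y ∈ A, y.1 ≤ x.1 ∧ y ≠ x := fun y hy => hsAB y hy x (by simp)
  by_cases hj : ∃ c ∈ A, c.2 = x.2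
  · obtain ⟨A₁, c, A₂, rfl, hc, hA₂⟩ := exists_last x.2 A hj
    rw [List.pairwise_append, List.pairwise_cons] at hsA
    obtain ⟨-, ⟨hcA₂, hsA₂⟩, hA₁⟩ := hsA
    have hcΛ : c ∈ Λ := (hL c).2 (by simp)
    have hcx : c.1 < x.1 := by
      have := hAx c (by simp)
      refine lt_of_le_of_ne this.1 fun e => this.2 (Prod.ext e hc)
    have hsum : ∑ d ∈ meshFin G Λ c.1 x, θ d =
        ((A₂.filter (fun d => G.Adj d.2 x.2)).map θ).sum := by
      rw [← List.sum_toFinset θ ((hsA₂.imp fun h => h.2).filter _)]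
      refine Finset.sum_congr ?_ fun _ _ => rfl
      ext d
      simp only [meshFin, Finset.mem_filter, List.mem_toFinset, List.mem_filter,
        decide_eq_true_eq]
      constructor
      · rintro ⟨hd, hadj, h1, h2⟩
        refine ⟨?_, hadj⟩
        have hd' := (hL d).1 hd
        simp only [List.mem_append, List.mem_cons] at hd'
        rcases hd' with (hd' | rfl | hd') | rfl | hd'
        · have := (hA₁ d hd' c (by simp)).1
          omega
        · omega
        · exact hd'
        · omega
        · have := (hsB d hd').1
          omega
      · rintro ⟨hd, hadj⟩
        have hdΛ : d ∈ Λ := (hL d).2 (by simp [hd])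
        refine ⟨hdΛ, hadj, ?_, ?_⟩
        · refine lt_of_le_of_ne (hcA₂ d hd).1 ?_
          exact (hpar d hdΛ c hcΛ (by rwa [hc])).symm
        · exact lt_of_le_of_ne (hAx d (by simp [hd])).1 (hpar d hdΛ x hxΛ hadj)
    have hm := hmf c hcΛ hc hcx (by
      intro n h1 h2 hn
      have hd' := (hL _).1 hn
      simp only [List.mem_append, List.mem_cons] at hd'
      rcases hd' with (hd' | hd' | hd') | hd' | hd'
      · have := (hA₁ _ hd' c (by simp)).1
        simp only at this
        omega
      · rw [← hd'] at h1
        simp at h1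
      · exact hA₂ _ hd' rfl
      · rw [← hd'] at h2
        simp at h2
      · have := (hsB _ hd').1
        simp only at this
        omega)
    rw [List.map_append, play_append, List.map_cons, play_cons, play_of_not_mem _ _ _ _ hA₂,
      ← hsum, ← hm, lab, ← hc, fire_self]
    ring
  · push Not at hj
    have hsum : ∑ d ∈ meshInf G Λ x, θ d =
        ((A.filter (fun d => G.Adj d.2 x.2)).map θ).sum := by
      rw [← List.sum_toFinset θ ((hsA.imp fun h => h.2).filter _)]
      refine Finset.sum_congr ?_ fun _ _ => rfl
      ext d
      simp only [meshInf, Finset.mem_filter, List.mem_toFinset, List.mem_filter,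
        decide_eq_true_eq]
      constructor
      · rintro ⟨hd, hadj, h2⟩
        refine ⟨?_, hadj⟩
        have hd' := (hL d).1 hd
        simp only [List.mem_append, List.mem_cons] at hd'
        rcases hd' with hd' | rfl | hd'
        · exact hd'
        · omega
        · have := (hsB d hd').1
          omega
      · rintro ⟨hd, hadj⟩
        have hdΛ : d ∈ Λ := (hL d).2 (by simp [hd])
        exact ⟨hdΛ, hadj, lt_of_le_of_ne (hAx d hd).1 (hpar d hdΛ x hxΛ hadj)⟩
    have hm := hmi (by
      intro n h2 hn
      have hd' := (hL _).1 hn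
      simp only [List.mem_append, List.mem_cons] at hd'
      rcases hd' with hd' | hd' | hd'
      · exact hj _ hd' rfl
      · rw [← hd'] at h2
        simp at h2
      · have := (hsB _ hd').1
        simp only at this
        omega)
    rw [play_of_not_mem _ _ _ _ hj, ← hsum, ← hm]
    ring

theorem legal_of_mesh {Λ : Finset (ℤ × V)} {θ : ℤ × V → ℤ} {θinf : V → ℤ}
    (hmesh : SatisfiesMesh G Λ θ θinf)
    (hpar : ∀ y ∈ Λ, ∀ z ∈ Λ, G.Adj y.2 z.2 → y.1 ≠ z.1) (A : List (ℤ × V)) :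
    ∀ B : List (ℤ × V), (∀ c, c ∈ Λ ↔ c ∈ A ++ B) →
      (A ++ B).Pairwise (fun y z => y.1 ≤ z.1 ∧ y ≠ z) →
      Legal G (fun k => -θinf k) (A.map (lab θ)) := by
  induction A using List.reverseRecOn with
  | nil => intro B _ _; trivial
  | append_singleton A x ih =>
    intro B hL hs
    rw [List.append_assoc] at hs
    simp only [List.append_assoc] at hL
    rw [List.map_append, List.map_singleton, legal_concat]
    exact ⟨ih _ hL hs, play_eq_of_mesh hmesh hpar hL hs⟩

/-- `Λ` can be listed by weakly increasing level with `a` last among the vertices of its level. -/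
theorem exists_listing (Λ : Finset (ℤ × V)) (a : ℤ × V) (ha : a ∈ Λ) :
    ∃ P Q : List (ℤ × V), (∀ c, c ∈ Λ ↔ c ∈ P ++ a :: Q) ∧
      (P ++ a :: Q).Pairwise (fun y z => y.1 ≤ z.1 ∧ y ≠ z) ∧
      (∀ c ∈ Λ, c.1 < a.1 → c ∈ P) ∧
      (Λ.filter (fun x => x.1 ≤ a.1)).card = P.length + 1 := by
  classical
  have key : ∀ S : Finset (ℤ × V), ∃ L : List (ℤ × V), L.Pairwise (fun y z => y.1 ≤ z.1 ∧ y ≠ z) ∧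
      (∀ c, c ∈ L ↔ c ∈ S) ∧ L.length = S.card := by
    intro S
    have hp := List.perm_insertionSort (fun y z : ℤ × V => y.1 ≤ z.1) S.toList
    have : Std.Total (fun y z : ℤ × V => y.1 ≤ z.1) := ⟨fun y z => le_total _ _⟩
    have : IsTrans (ℤ × V) (fun y z : ℤ × V => y.1 ≤ z.1) := ⟨fun _ _ _ => le_trans⟩
    refine ⟨S.toList.insertionSort (fun y z => y.1 ≤ z.1), ?_, ?_, ?_⟩
    · exact (List.pairwise_insertionSort _ _).and (hp.nodup_iff.2 S.nodup_toList)
    · intro c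
      rw [hp.mem_iff, Finset.mem_toList]
    · rw [hp.length_eq, Finset.length_toList]
  obtain ⟨P, hP, hPm, hPc⟩ := key ((Λ.filter (fun x => x.1 ≤ a.1)).erase a)
  obtain ⟨Q, hQ, hQm, -⟩ := key (Λ.filter (fun x => a.1 < x.1))
  simp only [Finset.mem_erase, Finset.mem_filter] at hPm hQm
  refine ⟨P, Q, ?_, ?_, ?_, ?_⟩
  · intro c
    simp only [List.mem_append, List.mem_cons, hPm, hQm]
    constructor
    · intro hc
      by_cases h : c = a
      · exact Or.inr (Or.inl h)
      · rcases le_or_gt c.1 a.1 with h' | h'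
        · exact Or.inl ⟨h, hc, h'⟩
        · exact Or.inr (Or.inr ⟨hc, h'⟩)
    · rintro (h | rfl | h)
      · exact h.2.1
      · exact ha
      · exact h.1
  · rw [List.pairwise_append, List.pairwise_cons]
    refine ⟨hP, ⟨?_, hQ⟩, ?_⟩
    · intro c hc
      have := ((hQm c).1 hc).2
      exact ⟨this.le, by rintro rfl; exact lt_irrefl _ this⟩
    · intro c hc d hd
      have h1 := (hPm c).1 hc
      rcases List.mem_cons.1 hd with rfl | hd
      · exact ⟨h1.2.2, h1.1⟩
      · have h2 := ((hQm d).1 hd).2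
        refine ⟨h1.2.2.trans h2.le, ?_⟩
        rintro rfl
        exact absurd h1.2.2 (not_le.2 h2)
  · intro c hc hlt
    exact (hPm c).2 ⟨by rintro rfl; exact lt_irrefl _ hlt, hc, hlt.le⟩
  · rw [hPc, Finset.card_erase_add_one]
    simp [ha]

theorem exists_level_bound (L : List ((ℤ × V) × ℤ)) :
    ∃ M : ℤ, M % 2 = 0 ∧ ∀ x ∈ L, x.1.1 ≤ M := by
  induction L with
  | nil => exact ⟨0, rfl, by simp⟩
  | cons y L ih =>
    obtain ⟨M, hM, h⟩ := ih
    refine ⟨2 * (|M| + |y.1.1|), by omega, ?_⟩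
    have h1 := abs_nonneg M
    have h2 := abs_nonneg y.1.1
    have h3 := le_abs_self M
    have h4 := le_abs_self y.1.1
    intro x hx
    rcases List.mem_cons.1 hx with rfl | hx
    · omega
    · have := h x hx
      omega

end

theorem statement1 (hADE : IsADE G)
    (col : V → ZMod 2) (hbip : ∀ i j : V, G.Adj i j → col j = col i + 1)
    (Λ : Finset (ℤ × V)) (hΛ : ∀ x ∈ Λ, col x.2 = ((x.1 : ℤ) : ZMod 2))
    (θ : ℤ × V → ℤ) (θinf : V → ℤ) (i : V)
    (hmesh : SatisfiesMesh G Λ θ θinf)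
    (hnonneg : ∀ x ∈ Λ, 0 ≤ θ x)
    (a : ℤ × V) (haΛ : a ∈ Λ) (haθ : θ a = 0)
    (huniq : ∀ x ∈ Λ, θ x = 0 → x = a)
    (hinf_i : θinf i = -1)
    (hinf : ∀ j : V, j ≠ i → θinf j = 0)
    (hτ : ∃ a' ∈ Λ, a'.2 = a.2 ∧ a'.1 < a.1) :
    ∃ (Λ' : Finset (ℤ × V)) (θ' : ℤ × V → ℤ),
      Relation.ReflTransGen (fun p q => CommMove G p q ∨ BraidMove G p q) (Λ, θ) (Λ', θ') ∧
      ∃ b ∈ Λ', θ' b = 0 ∧ (∀ x ∈ Λ', θ' x = 0 → x = b) ∧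
        (Λ'.filter (fun x => x.1 ≤ b.1)).card < (Λ.filter (fun x => x.1 ≤ a.1)).card := by
  classical
  obtain ⟨e, he, hecol⟩ : ∃ e : V → ℤ, (∀ j, e j = 0 ∨ e j = 1) ∧
      ∀ j, ((e j : ℤ) : ZMod 2) = col j := by
    refine ⟨fun j => if col j = 0 then 0 else 1, fun j => ?_, fun j => ?_⟩
    · dsimp only
      split_ifs <;> simp
    · dsimp only
      generalize col j = c
      revert c
      decide
  have hcast : ∀ m n : ℤ, ((m : ℤ) : ZMod 2) = n ↔ (m - n) % 2 = 0 := by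
    intro m n
    rw [ZMod.intCast_eq_intCast_iff, Int.ModEq]
    push_cast
    omega
  have he' : ∀ j k, G.Adj j k → e j + e k = 1 := by
    intro j k hjk
    have h1 := hbip j k hjk
    rw [← hecol, ← hecol] at h1
    have h2 := (hcast (e k) (e j + 1)).1 (by push_cast; exact h1)
    have := he j
    have := he k
    omega
  have hpare : ∀ x ∈ Λ, (x.1 - e x.2) % 2 = 0 := by
    intro x hx
    rw [← hcast, hecol, hΛ x hx]
  have hpar : ∀ y ∈ Λ, ∀ z ∈ Λ, G.Adj y.2 z.2 → y.1 ≠ z.1 := by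
    intro y hy z hz hadj h
    have h1 := hpare y hy
    have h2 := hpare z hz
    have := he' _ _ hadj
    omega
  obtain ⟨P, Q, hL, hs, hPlt, hcard⟩ := exists_listing Λ a haΛ
  have hu : ∀ k, 0 ≤ (fun k => -θinf k) k := by
    intro k
    by_cases hk : k = i
    · subst hk; simp [hinf_i]
    · simp [hinf k hk]
  have hposΛ : ∀ x ∈ Λ, x ≠ a → 0 < θ x := fun x hx hxa =>
    lt_of_le_of_ne (hnonneg x hx) fun h => hxa (huniq x hx h.symm)
  have hsP := List.pairwise_append.1 hs
  have hPpos : ∀ x ∈ P.map (lab θ), 0 < x.2 := by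
    intro x hx
    obtain ⟨y, hy, rfl⟩ := List.mem_map.1 hx
    exact hposΛ y ((hL y).2 (by simp [hy])) (hsP.2.2 y hy a (by simp)).2
  have hQpos : ∀ x ∈ Q.map (lab θ), 0 < x.2 := by
    intro x hx
    obtain ⟨y, hy, rfl⟩ := List.mem_map.1 hx
    exact hposΛ y ((hL y).2 (by simp [hy]))
      ((List.pairwise_cons.1 hsP.2.1).1 y hy).2.symm
  have hlega : Legal G (fun k => -θinf k) (P.map (lab θ) ++ [(a.2, 0)]) := by
    have := legal_of_mesh hmesh hpar (P ++ [a]) Q (by simpa using hL) (by simpa using hs)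
    simpa [lab, haθ] using this
  have hPne : P.map (lab θ) ≠ [] := by
    obtain ⟨a', ha', -, hlt⟩ := hτ
    have := hPlt a' ha' hlt
    intro h
    simp only [List.map_eq_nil_iff] at h
    simp [h] at this
  obtain ⟨P', k, Q', hsteps, hlen⟩ := exists_earlier_zero hu hlega hPpos hPne
  have hsteps' := wsteps_append hsteps (Q.map (lab θ))
  have hpermv : ((P' ++ Q').map Prod.snd).Perm ((P.map (lab θ)).map Prod.snd) := by
    have h := wsteps_perm hsteps
    simp only [List.map_append, List.map_cons, List.map_nil] at h ⊢
    have h' := (List.perm_append_singleton _ _).symm.trans (h.trans List.perm_middle)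
    exact ((List.perm_cons _).1 h').symm
  have hPQpos := perm_pos hpermv.symm hPpos
  -- The labelled listing of `Λ` and an even level `M` beyond all of its vertices.
  obtain ⟨M, hM, hMle⟩ := exists_level_bound ((P ++ a :: Q).map fun x => (x, θ x))
  have hrep : Rep ((P ++ a :: Q).map fun x => (x, θ x)) (Λ, θ) := by
    have hfst : ((P ++ a :: Q).map fun x => (x, θ x)).map Prod.fst = P ++ a :: Q := by
      simp only [List.map_map, Function.comp_def, List.map_id']
    refine ⟨?_, ?_, ?_⟩
    · rw [hfst]
      exact hs.imp fun h => h.2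
    · rw [hfst]
      ext c
      rw [List.mem_toFinset]
      exact hL c
    · intro x hx
      obtain ⟨y, -, rfl⟩ := List.mem_map.1 hx
      rfl
  have hr1 := reach_norm (G := G) he M hM ((P ++ a :: Q).map fun x => (x, θ x)) []
    (by
      rw [List.pairwise_map]
      exact hs.imp fun h => h.1)
    (by
      intro x hx
      refine ⟨?_, hMle x hx⟩
      obtain ⟨y, hy, rfl⟩ := List.mem_map.1 hx
      exact hpare y ((hL y).2 hy))
    (by simp)
  simp only [List.append_nil] at hr1
  have hword : ((P ++ a :: Q).map fun x => (x, θ x)).map toLetter =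
      (P.map (lab θ) ++ [(a.2, 0)]) ++ Q.map (lab θ) := by
    rw [List.map_map]
    simp [Function.comp_def, toLetter, haθ]
    rfl
  rw [hword] at hr1
  obtain ⟨⟨Λ', θ'⟩, hreach, hnd, hΛ', hθ'⟩ :=
    (hr1.trans (reach_of_wsteps he he' hsteps' M)) _ hrep
  refine ⟨Λ', θ', hreach, ?_⟩
  simp only at hΛ' hθ'
  rw [List.append_assoc, List.cons_append, norm_append, norm] at hΛ' hθ'
  have hbA := norm_bound he P' M
  have hbB := norm_bound he (Q' ++ Q.map (lab θ)) (M + 4 * P'.length + 4)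
  have hlA := norm_length e P' M
  have hmA := norm_map e P' M
  have hmB := norm_map e (Q' ++ Q.map (lab θ)) (M + 4 * P'.length + 4)
  set NA := norm e M P'
  set NB := norm e (M + 4 * P'.length + 4) (Q' ++ Q.map (lab θ))
  set b : ℤ × V := (M + 4 * P'.length + e k, k) with hb
  have hek := he k
  have hmem : ∀ c, c ∈ Λ' → c = b ∨ ∃ x, (x ∈ NA ∨ x ∈ NB) ∧ x.1 = c := by
    intro c hc
    rw [hΛ', List.mem_toFinset, List.mem_map] at hc
    obtain ⟨x, hx, rfl⟩ := hc
    simp only [List.mem_append, List.mem_cons] at hx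
    rcases hx with hx | rfl | hx
    · exact Or.inr ⟨x, Or.inl hx, rfl⟩
    · exact Or.inl rfl
    · exact Or.inr ⟨x, Or.inr hx, rfl⟩
  refine ⟨b, ?_, ?_, ?_, ?_⟩
  · simp [hΛ']
  · exact hθ' (b, 0) (by simp)
  · intro c hc h0
    rcases hmem c hc with h | ⟨x, hx, rfl⟩
    · exact h
    · exfalso
      have hxe : θ' x.1 = x.2 := hθ' x (by
        rcases hx with hx | hx <;> simp [hx])
      have hpos : 0 < (toLetter x).2 := by
        rcases hx with hx | hx
        · have := List.mem_map_of_mem (f := toLetter) hx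
          rw [hmA] at this
          exact hPQpos _ (by simp [this])
        · have := List.mem_map_of_mem (f := toLetter) hx
          rw [hmB] at this
          rcases List.mem_append.1 this with h | h
          · exact hPQpos _ (by simp [h])
          · exact hQpos _ h
      simp only [toLetter] at hpos
      omega
  · rw [hcard]
    have hsub : Λ'.filter (fun x => x.1 ≤ b.1) ⊆ (b :: NA.map Prod.fst).toFinset := by
      intro c hc
      obtain ⟨hc, hle⟩ := Finset.mem_filter.1 hc
      rw [List.mem_toFinset]
      rcases hmem c hc with h | ⟨x, hx | hx, rfl⟩
      · simp [h]
      · exact List.mem_cons_of_mem _ (List.mem_map_of_mem hx)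
      · have := hbB x hx
        simp only [hb] at hle
        omega
    have h1 := (Finset.card_le_card hsub).trans (List.toFinset_card_le _)
    simp only [List.length_cons, List.length_map, hlA] at h1
    simp only [List.length_map] at hlen
    omega

end Statement1
end

section
/- Let Λ ⊂ (ℤΓ)_0 be a finite set, a = (n,j) ∈ Λ and ε ∈ {+1,−1} such that b = (n+2ε, j) ∉ Λ and (n+ε, k) ∉ Λ for every k ∈ N(j), and let Λ̄ = (Λ \ {a}) ∪ {b} be the result of the corresponding commutation move. Then γ_Λ = γ_Λ̄ in the braid monoid B_Γ^+. -/
/-!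
Moving `a` to `b` only moves the letter `s_j` of the word `γ_Λ` past the letters of `Λ`
lying lexicographically between `a` and `b`. These lie in the slices `n`, `n + ε`, `n + 2ε`.
Those in the slices `n` and `n + 2ε` have the colour of `j`, so are not adjacent to `j`;
those in the slice `n + ε` are not neighbours of `j` by hypothesis. Hence all of them commute
with `s_j` and the product is unchanged.

The word of `insert x T` is the word of `T` with one letter put in by `List.orderedInsert`
(`sort_insert_eq`), and `prod_orderedInsert` shows that the position of that letter does not
matter as long as it commutes with the letters in between. The case `ε = -1` is the case
`ε = 1` with the roles of `a` and `b` exchanged.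
-/

/-!
STATEMENT 2: a commutation move does not change the associated word γ_Λ in B_Γ^+.
-/

namespace Statement2

/-- The type A Dynkin graph on `Fin n` (a path). -/
def typeA (n : ℕ) : SimpleGraph (Fin n) :=
  SimpleGraph.fromRel (fun i j => (i : ℕ) + 1 = (j : ℕ))

/-- The type D Dynkin graph on `Fin n`: a chain `1 - 2 - ⋯ - (n-1)` with an extra
vertex `0` attached to `2`. -/
def typeD (n : ℕ) : SimpleGraph (Fin n) :=
  SimpleGraph.fromRel
    (fun i j => (1 ≤ (i : ℕ) ∧ (i : ℕ) + 1 = (j : ℕ)) ∨ ((i : ℕ) = 0 ∧ (j : ℕ) = 2))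

/-- The type E Dynkin graph on `Fin n`: a chain `1 - 2 - ⋯ - (n-1)` with an extra
vertex `0` attached to `3`. -/
def typeE (n : ℕ) : SimpleGraph (Fin n) :=
  SimpleGraph.fromRel
    (fun i j => (1 ≤ (i : ℕ) ∧ (i : ℕ) + 1 = (j : ℕ)) ∨ ((i : ℕ) = 0 ∧ (j : ℕ) = 3))

/-- `G` is a simply-laced Dynkin diagram (of type `A_n`, `D_n`, `E₆`, `E₇` or `E₈`). -/
def IsADE {V : Type*} (G : SimpleGraph V) : Prop :=
  (∃ n : ℕ, 1 ≤ n ∧ Nonempty (G ≃g typeA n)) ∨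
  (∃ n : ℕ, 4 ≤ n ∧ Nonempty (G ≃g typeD n)) ∨
  (∃ n : ℕ, (n = 6 ∨ n = 7 ∨ n = 8) ∧ Nonempty (G ≃g typeE n))

variable {V : Type} [LinearOrder V] (G : SimpleGraph V) [DecidableRel G.Adj]

/-- The defining relations of the braid monoid `B_Γ^+`: braid relations for adjacent
vertices and commutation relations for distinct non-adjacent vertices. -/
inductive BraidRel : FreeMonoid V → FreeMonoid V → Prop
  | braid (i j : V) : G.Adj i j →
      BraidRel (FreeMonoid.of i * FreeMonoid.of j * FreeMonoid.of i)
               (FreeMonoid.of j * FreeMonoid.of i * FreeMonoid.of j)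
  | comm (i j : V) : i ≠ j → ¬ G.Adj i j →
      BraidRel (FreeMonoid.of i * FreeMonoid.of j) (FreeMonoid.of j * FreeMonoid.of i)

/-- The braid monoid `B_Γ^+` of type `Γ`. -/
abbrev BraidMonoid := (conGen (BraidRel G)).Quotient

/-- The standard generator `s_i` of `B_Γ^+`. -/
def gen (i : V) : BraidMonoid G := (conGen (BraidRel G)).mk' (FreeMonoid.of i)

/-- The element `γ_Λ = ∏_k s_{Σ_k}` of `B_Γ^+` attached to a finite set
`Λ ⊆ (ℤΓ)₀`: the product of the generators `s_{p₂ x}`, over `x ∈ Λ` taken in the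
lexicographic order (first by the slice index `p₁ x`, then, within a slice --- where the
corresponding generators pairwise commute --- in the auxiliary linear order of `V`). -/
noncomputable def gammaLambda (Λ : Finset (ℤ × V)) : BraidMonoid G :=
  (((Λ.image (toLex : ℤ × V → Lex (ℤ × V))).sort (· ≤ ·)).map
    (fun p => gen G (ofLex p).2)).prod

theorem gen_commute {i k : V} (h : ¬ G.Adj i k) : Commute (gen G i) (gen G k) := by
  by_cases hik : i = k
  · subst hik; exact Commute.refl _
  · have h1 : (conGen (BraidRel G)) (FreeMonoid.of i * FreeMonoid.of k)
        (FreeMonoid.of k * FreeMonoid.of i) := ConGen.Rel.of _ _ (BraidRel.comm i k hik h)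
    exact (Con.eq _).2 h1

/-- A letter inserted into a sorted word may be moved from position `a` to position `b` when it
commutes with every letter of the word between these positions. -/
theorem prod_orderedInsert {α M : Type*} [LinearOrder α] [Monoid M] (f : α → M) {a b : α}
    (hab : a ≤ b) (hf : f a = f b) (l : List α) (hl : l.Pairwise (· ≤ ·))
    (hc : ∀ s ∈ l, a ≤ s → s ≤ b → Commute (f a) (f s)) :
    ((l.orderedInsert (· ≤ ·) a).map f).prod = ((l.orderedInsert (· ≤ ·) b).map f).prod := by
  induction l with
  | nil => simp [hf]
  | cons c l ih =>
    have ih' := ih hl.of_cons (fun s hs => hc s (List.mem_cons_of_mem _ hs))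
    by_cases hac : a ≤ c
    · by_cases hbc : b ≤ c
      · simp [hac, hbc, hf]
      · have hcomm := hc c (by simp) hac (le_of_not_ge hbc)
        have hal : l.orderedInsert (· ≤ ·) a = a :: l := by
          cases l with
          | nil => rfl
          | cons d l =>
            have hcd : c ≤ d := List.rel_of_pairwise_cons hl (by simp)
            simp [hac.trans hcd]
        rw [hal] at ih'
        simp only [List.orderedInsert_cons, hac, hbc, if_true, if_false, List.map_cons,
          List.prod_cons] at ih' ⊢
        rw [← ih', ← mul_assoc, hcomm.eq, mul_assoc]
    · have hbc : ¬ b ≤ c := fun h => hac (hab.trans h)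
      simp [hac, hbc, ih']

theorem sort_insert_eq {α : Type*} [LinearOrder α] (a : α) (S : Finset α) (ha : a ∉ S) :
    (insert a S).sort (· ≤ ·) = (S.sort (· ≤ ·)).orderedInsert (· ≤ ·) a := by
  refine List.Perm.eq_of_pairwise' (Finset.pairwise_sort _ _)
    ((Finset.pairwise_sort S (· ≤ ·)).orderedInsert a _) ?_
  refine List.Perm.trans ?_ (List.perm_orderedInsert _ _ _).symm
  refine (List.perm_ext_iff_of_nodup (Finset.sort_nodup _ _) ?_).2 (by simp)
  simp [ha, Finset.sort_nodup]

/-- The move with `ε = 1`, with both words written as insertions into the common part `T`. -/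
theorem gammaLambda_insert
    (col : V → ZMod 2) (hbip : ∀ i j : V, G.Adj i j → col j = col i + 1)
    (T : Finset (ℤ × V)) (hT : ∀ x ∈ T, col x.2 = ((x.1 : ℤ) : ZMod 2))
    (n : ℤ) (j : V) (hj : col j = (n : ZMod 2)) (ha : (n, j) ∉ T) (hb : (n + 2, j) ∉ T)
    (hN : ∀ kk : V, G.Adj j kk → (n + 1, kk) ∉ T) :
    gammaLambda G (insert (n, j) T) = gammaLambda G (insert (n + 2, j) T) := by
  unfold gammaLambda
  rw [Finset.image_insert, Finset.image_insert, sort_insert_eq _ _ (by simpa using ha),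
    sort_insert_eq _ _ (by simpa using hb)]
  refine prod_orderedInsert (fun p : Lex (ℤ × V) => gen G (ofLex p).2)
    (a := toLex (n, j)) (b := toLex (n + 2, j)) ?_ rfl _
    (Finset.pairwise_sort _ _) ?_
  · rw [Prod.Lex.toLex_le_toLex]; left; simp
  · intro s hs h1 h2
    obtain ⟨⟨m, k⟩, hmem, rfl⟩ : ∃ x ∈ T, toLex x = s := by simpa using hs
    refine gen_commute G fun hadj => ?_
    have hk := hbip j k hadj
    have hm : col k = (m : ZMod 2) := hT _ hmem
    have h1' : n ≤ m := by
      rcases (Prod.Lex.toLex_le_toLex).1 h1 with h | h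
      · exact h.le
      · exact h.1.le
    have h2' : m ≤ n + 2 := by
      rcases (Prod.Lex.toLex_le_toLex).1 h2 with h | h
      · exact h.le
      · exact h.1.le
    rw [hm, hj] at hk
    -- By the colouring `m - n` is odd, which leaves only the slice `n + 1`.
    have hpar : ((m - (n + 1) : ℤ) : ZMod 2) = 0 := by push_cast; rw [hk]; ring
    have hdvd : (2 : ℤ) ∣ m - (n + 1) := by
      exact_mod_cast (ZMod.intCast_zmod_eq_zero_iff_dvd _ 2).1 hpar
    have hmn : m = n + 1 := by omega
    subst hmn
    exact hN k hadj hmem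

theorem statement2 (hADE : IsADE G)
    (col : V → ZMod 2) (hbip : ∀ i j : V, G.Adj i j → col j = col i + 1)
    (Λ : Finset (ℤ × V)) (hΛ : ∀ x ∈ Λ, col x.2 = ((x.1 : ℤ) : ZMod 2))
    (n : ℤ) (j : V) (ε : ℤ) (hε : ε = 1 ∨ ε = -1)
    (ha : (n, j) ∈ Λ) (hb : (n + 2 * ε, j) ∉ Λ)
    (hN : ∀ kk : V, G.Adj j kk → (n + ε, kk) ∉ Λ) :
    gammaLambda G Λ = gammaLambda G (insert (n + 2 * ε, j) (Λ.erase (n, j))) := by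
  have hj : col j = (n : ZMod 2) := hΛ _ ha
  have hT : ∀ x ∈ Λ.erase (n, j), col x.2 = ((x.1 : ℤ) : ZMod 2) :=
    fun x hx => hΛ x (Finset.mem_of_mem_erase hx)
  have hb' : (n + 2 * ε, j) ∉ Λ.erase (n, j) := fun h => hb (Finset.mem_of_mem_erase h)
  have hN' : ∀ kk : V, G.Adj j kk → (n + ε, kk) ∉ Λ.erase (n, j) :=
    fun kk h h' => hN kk h (Finset.mem_of_mem_erase h')
  have ha' : (n, j) ∉ Λ.erase (n, j) := Finset.notMem_erase _ _
  conv_lhs => rw [← Finset.insert_erase ha]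
  generalize Λ.erase (n, j) = T at *
  rcases hε with rfl | rfl
  · exact gammaLambda_insert G col hbip T hT n j hj ha' hb' hN'
  · have hj2 : col j = ((n + 2 * -1 : ℤ) : ZMod 2) := by
      have h2 : (2 : ZMod 2) = 0 := rfl
      rw [hj]; push_cast; rw [h2]; ring
    have e2 : n + 2 * -1 + 2 = n := by ring
    have e1 : n + 2 * -1 + 1 = n + -1 := by ring
    -- The reverse of the `ε = 1` move at `(n - 2, j)`.
    have key := gammaLambda_insert G col hbip T hT (n + 2 * -1) j hj2 hb'
      (by rw [e2]; exact ha') (by rw [e1]; exact hN')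
    rw [e2] at key
    exact key.symm

end Statement2
end

section
/- Let Λ ⊂ (ℤΓ)_0 be a finite set and θ : Λ ⊔ ({−∞} × Γ_0) → ℤ a function such that (Λ, θ) satisfies mesh relations. Let a = (n,j) ∈ Λ and ε ∈ {+1,−1} be such that b = (n+2ε, j) ∉ Λ and (n+ε, k) ∉ Λ for every k ∈ N(j), and let (Λ̄, θ̄) be the result of the corresponding commutation move (Λ̄ = (Λ \ {a}) ∪ {b}, θ̄(b) = θ(a), θ̄ = θ elsewhere). Then (Λ̄, θ̄) satisfies mesh relations. -/
/-!
A commutation move is the transport of `(Λ, θ)` along the transposition `σ` of `a = (n, j)` and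
`b = (n + 2ε, j)`. Mesh relations only compare first coordinates of vertices of `Λ` lying in the
same column or in adjacent columns, so they are transported by any column-preserving permutation
that keeps those comparisons (`SatisfiesMesh.image`). The transposition does: moving `a` to `b`
jumps over heights `n`, `n + ε`, `n + 2ε`; in column `j` only height `n` is occupied (`n + ε` has
the wrong parity and `b ∉ Λ`), and in a neighbouring column none is (`n`, `n + 2ε` have the wrong
parity and `n + ε` is excluded by assumption).
-/

/-!
STATEMENT 3: a commutation move preserves mesh relations.
-/

namespace Statement3

/-- The type A Dynkin graph on `Fin n` (a path). -/
def typeA (n : ℕ) : SimpleGraph (Fin n) :=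
  SimpleGraph.fromRel (fun i j => (i : ℕ) + 1 = (j : ℕ))

/-- The type D Dynkin graph on `Fin n`: a chain `1 - 2 - ⋯ - (n-1)` with an extra
vertex `0` attached to `2`. -/
def typeD (n : ℕ) : SimpleGraph (Fin n) :=
  SimpleGraph.fromRel
    (fun i j => (1 ≤ (i : ℕ) ∧ (i : ℕ) + 1 = (j : ℕ)) ∨ ((i : ℕ) = 0 ∧ (j : ℕ) = 2))

/-- The type E Dynkin graph on `Fin n`: a chain `1 - 2 - ⋯ - (n-1)` with an extra
vertex `0` attached to `3`. -/
def typeE (n : ℕ) : SimpleGraph (Fin n) :=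
  SimpleGraph.fromRel
    (fun i j => (1 ≤ (i : ℕ) ∧ (i : ℕ) + 1 = (j : ℕ)) ∨ ((i : ℕ) = 0 ∧ (j : ℕ) = 3))

/-- `G` is a simply-laced Dynkin diagram (of type `A_n`, `D_n`, `E₆`, `E₇` or `E₈`). -/
def IsADE {V : Type*} (G : SimpleGraph V) : Prop :=
  (∃ n : ℕ, 1 ≤ n ∧ Nonempty (G ≃g typeA n)) ∨
  (∃ n : ℕ, 4 ≤ n ∧ Nonempty (G ≃g typeD n)) ∨
  (∃ n : ℕ, (n = 6 ∨ n = 7 ∨ n = 8) ∧ Nonempty (G ≃g typeE n))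

variable {V : Type} [LinearOrder V] (G : SimpleGraph V) [DecidableRel G.Adj]

/-- `mesh_Λ(a, b)` for a generalized mesh starting at a (possibly imaginary) vertex with
first coordinate `lo` and ending at `b`. -/
def meshFin (Λ : Finset (ℤ × V)) (lo : ℤ) (b : ℤ × V) : Finset (ℤ × V) :=
  Λ.filter (fun c => G.Adj c.2 b.2 ∧ lo < c.1 ∧ c.1 < b.1)

/-- `mesh_Λ(τ_Λ(b), b)` for an infinite mesh ending at `b`. -/
def meshInf (Λ : Finset (ℤ × V)) (b : ℤ × V) : Finset (ℤ × V) :=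
  Λ.filter (fun c => G.Adj c.2 b.2 ∧ c.1 < b.1)

/-- `(Λ, θ)` (where `θinf` records the values of `θ` on the imaginary vertices
`(−∞, j)`) satisfies mesh relations: for every `b ∈ Λ`,
`θ(b) + θ(τ_Λ(b)) = ∑_{c ∈ mesh_Λ(τ_Λ(b), b)} θ(c)`. -/
def SatisfiesMesh (Λ : Finset (ℤ × V)) (θ : ℤ × V → ℤ) (θinf : V → ℤ) : Prop :=
  ∀ b ∈ Λ,
    (∀ a ∈ Λ, a.2 = b.2 → a.1 < b.1 → (∀ n : ℤ, a.1 < n → n < b.1 → (n, b.2) ∉ Λ) →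
        θ b + θ a = ∑ c ∈ meshFin G Λ a.1 b, θ c) ∧
    ((∀ n : ℤ, n < b.1 → (n, b.2) ∉ Λ) →
        θ b + θinf b.2 = ∑ c ∈ meshInf G Λ b, θ c)

/-- Mesh relations are transported along a column-preserving permutation which, on `Λ`, keeps the
order of first coordinates within a column and between adjacent columns. -/
theorem SatisfiesMesh.image {G : SimpleGraph V} [DecidableRel G.Adj]
    {Λ : Finset (ℤ × V)} {θ θ' : ℤ × V → ℤ} {θinf : V → ℤ}
    (h : SatisfiesMesh G Λ θ θinf) (σ : Equiv.Perm (ℤ × V)) (hcol : ∀ x, (σ x).2 = x.2)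
    (hθ : ∀ x ∈ Λ, θ' (σ x) = θ x)
    (hlt : ∀ x ∈ Λ, ∀ y ∈ Λ, (x.2 = y.2 ∨ G.Adj x.2 y.2) → ((σ x).1 < (σ y).1 ↔ x.1 < y.1)) :
    SatisfiesMesh G (Λ.image σ) θ' θinf := by
  intro b' hb'
  obtain ⟨b, hb, rfl⟩ := Finset.mem_image.1 hb'
  refine ⟨?_, fun hgap => ?_⟩
  · intro a' ha' hab hlt' hgap
    obtain ⟨a, ha, rfl⟩ := Finset.mem_image.1 ha'
    rw [hcol, hcol] at hab
    have key := (h b hb).1 a ha hab ((hlt a ha b hb (Or.inl hab)).1 hlt') (by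
      intro m h1 h2 hm
      refine hgap (σ (m, b.2)).1 ((hlt a ha _ hm (Or.inl hab)).2 h1)
        ((hlt _ hm b hb (Or.inl rfl)).2 h2) ?_
      rw [show ((σ (m, b.2)).1, (σ b).2) = σ (m, b.2) from
        Prod.ext rfl ((hcol b).trans (hcol (m, b.2)).symm)]
      exact Finset.mem_image_of_mem σ hm)
    have hmesh : meshFin G (Λ.image σ) (σ a).1 (σ b) = (meshFin G Λ a.1 b).image σ := by
      unfold meshFin
      rw [Finset.filter_image]
      congr 1
      refine Finset.filter_congr fun c hc => ?_
      rw [hcol, hcol]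
      refine and_congr_right fun hadj => ?_
      rw [hlt a ha c hc (Or.inr (hab ▸ hadj.symm)), hlt c hc b hb (Or.inr hadj)]
    rw [hθ b hb, hθ a ha, key, hmesh, Finset.sum_image σ.injective.injOn]
    exact Finset.sum_congr rfl fun c hc => (hθ c (Finset.mem_filter.1 hc).1).symm
  · have key := (h b hb).2 (by
      intro m h2 hm
      refine hgap (σ (m, b.2)).1 ((hlt _ hm b hb (Or.inl rfl)).2 h2) ?_
      rw [show ((σ (m, b.2)).1, (σ b).2) = σ (m, b.2) from
        Prod.ext rfl ((hcol b).trans (hcol (m, b.2)).symm)]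
      exact Finset.mem_image_of_mem σ hm)
    have hmesh : meshInf G (Λ.image σ) (σ b) = (meshInf G Λ b).image σ := by
      unfold meshInf
      rw [Finset.filter_image]
      congr 1
      refine Finset.filter_congr fun c hc => ?_
      rw [hcol, hcol]
      refine and_congr_right fun hadj => ?_
      rw [hlt c hc b hb (Or.inr hadj)]
    rw [hθ b hb, hcol, key, hmesh, Finset.sum_image σ.injective.injOn]
    exact Finset.sum_congr rfl fun c hc => (hθ c (Finset.mem_filter.1 hc).1).symm

/-- Vertices of `Λ` in the column of `a = (n, j)` or in an adjacent column, other than `a`, avoid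
the three heights `n`, `n + ε`, `n + 2ε` passed by the commutation move. -/
theorem height_avoids {V : Type} {G : SimpleGraph V} {col : V → ZMod 2}
    (hbip : ∀ i j : V, G.Adj i j → col j = col i + 1)
    {Λ : Finset (ℤ × V)} (hΛ : ∀ x ∈ Λ, col x.2 = ((x.1 : ℤ) : ZMod 2))
    {n : ℤ} {j : V} {ε : ℤ} (hε : ε = 1 ∨ ε = -1)
    (ha : (n, j) ∈ Λ) (hb : (n + 2 * ε, j) ∉ Λ)
    (hN : ∀ kk : V, G.Adj j kk → (n + ε, kk) ∉ Λ)
    {x : ℤ × V} (hx : x ∈ Λ) (hne : x ≠ (n, j)) (hadj : x.2 = j ∨ G.Adj j x.2) :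
    x.1 ≠ n ∧ x.1 ≠ n + ε ∧ x.1 ≠ n + 2 * ε := by
  obtain ⟨m, k⟩ := x
  have hn : col j = (n : ZMod 2) := hΛ _ ha
  have hm : col k = (m : ZMod 2) := hΛ _ hx
  rcases hadj with hk | hk
  · have hk : k = j := hk
    subst hk
    have hpar : (2 : ℤ) ∣ m - n := by
      have := (ZMod.intCast_eq_intCast_iff_dvd_sub n m 2).1 (hn.symm.trans hm)
      exact_mod_cast this
    refine ⟨?_, ?_, ?_⟩
    · rintro rfl; exact hne rfl
    · dsimp only; omega
    · rintro rfl; exact hb hx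
  · have hpar : (2 : ℤ) ∣ m - (n + 1) := by
      have h1 : ((n + 1 : ℤ) : ZMod 2) = (m : ZMod 2) := by
        rw [← hm, hbip j k hk, hn]; push_cast; rfl
      have := (ZMod.intCast_eq_intCast_iff_dvd_sub (n + 1) m 2).1 h1
      exact_mod_cast this
    refine ⟨?_, ?_, ?_⟩
    · dsimp only; omega
    · rintro rfl; exact hN k hk hx
    · dsimp only; omega

theorem statement3 (hADE : IsADE G)
    (col : V → ZMod 2) (hbip : ∀ i j : V, G.Adj i j → col j = col i + 1)
    (Λ : Finset (ℤ × V)) (hΛ : ∀ x ∈ Λ, col x.2 = ((x.1 : ℤ) : ZMod 2))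
    (θ : ℤ × V → ℤ) (θinf : V → ℤ)
    (hmesh : SatisfiesMesh G Λ θ θinf)
    (n : ℤ) (j : V) (ε : ℤ) (hε : ε = 1 ∨ ε = -1)
    (ha : (n, j) ∈ Λ) (hb : (n + 2 * ε, j) ∉ Λ)
    (hN : ∀ kk : V, G.Adj j kk → (n + ε, kk) ∉ Λ) :
    SatisfiesMesh G (insert (n + 2 * ε, j) (Λ.erase (n, j)))
      (Function.update θ (n + 2 * ε, j) (θ (n, j))) θinf := by
  have avoid := @height_avoids V G col hbip Λ hΛ n j ε hε ha hb hN
  set σ : Equiv.Perm (ℤ × V) := Equiv.swap (n, j) (n + 2 * ε, j) with hσ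
  have hσa : σ (n, j) = (n + 2 * ε, j) := Equiv.swap_apply_left _ _
  have hσx : ∀ x ∈ Λ, x ≠ (n, j) → σ x = x := fun x hx hne =>
    Equiv.swap_apply_of_ne_of_ne hne (fun h => hb (h ▸ hx))
  have himage : insert (n + 2 * ε, j) (Λ.erase (n, j)) = Λ.image σ := by
    conv_rhs => rw [← Finset.insert_erase ha]
    rw [Finset.image_insert, hσa]
    congr 1
    symm
    calc (Λ.erase (n, j)).image σ = (Λ.erase (n, j)).image id :=
          Finset.image_congr fun x hx =>
            hσx x (Finset.mem_of_mem_erase hx) (Finset.ne_of_mem_erase hx)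
      _ = _ := Finset.image_id
  rw [himage]
  refine hmesh.image σ (fun x => ?_) (fun x hx => ?_) (fun x hx y hy hxy => ?_)
  · rw [hσ, Equiv.swap_apply_def]
    split_ifs with h1 h2
    · rw [h1]
    · rw [h2]
    · rfl
  · by_cases h : x = (n, j)
    · rw [h, hσa, Function.update_self]
    · rw [hσx x hx h, Function.update_of_ne]
      exact fun h => hb (h ▸ hx)
  · by_cases h1 : x = (n, j) <;> by_cases h2 : y = (n, j)
    · rw [h1, h2]; simp
    · have := avoid hy h2 (by rw [h1] at hxy; exact hxy.imp Eq.symm id)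
      rw [hσx y hy h2, h1, hσa]
      dsimp only
      omega
    · have := avoid hx h1 (by rw [h2] at hxy; exact hxy.imp id fun h => h.symm)
      rw [hσx x hx h1, h2, hσa]
      dsimp only
      omega
    · rw [hσx x hx h1, hσx y hy h2]

end Statement3
end

section
/- Let Λ ⊂ (ℤΓ)_0 be a finite set containing vertices a = (n,j), b = (n+1,k), c = (n+2,j) forming a braid (k ∈ N(j)), and suppose (n+1,t) ∉ Λ for every t ∈ N(j) \ {k}, (n+2,l) ∉ Λ for every l ∈ N(k) \ {j}, and d = (n+3,k) ∉ Λ. Let Λ̄ = (Λ \ {a}) ∪ {d} be the result of the corresponding braiding move. Then γ_Λ = γ_Λ̄ in the braid monoid B_Γ^+. -/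
/-!
Write `a = (n, j)`, `b = (n + 1, k)`, `c = (n + 2, j)`, `d = (n + 3, k)`. These are increasing in
the lexicographic order, so they cut `Λ` into consecutive pieces and
`γ_Λ = γ_A s_j γ_P s_k γ_Q s_j γ_R γ_E`, where `P`, `Q`, `R` are the parts of `Λ` strictly between
`a, b`, between `b, c` and between `c, d`, and `A`, `E` are the parts before `a` and after `d`
(`gammaLambda_union`). Likewise `γ_Λ̄ = γ_A γ_P s_k γ_Q s_j γ_R s_k γ_E`. By the 2-colouring and the
hypotheses on the neighbours of `j` and `k`, the generator `s_j` commutes with `γ_P` and `γ_Q`, and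
`s_k` with `γ_Q` and `γ_R` (`commute_gammaLambda`). The equality is then one application of the
braid relation (`braid_move`).
-/


/-!
STATEMENT 4: a braiding move does not change the associated word γ_Λ in B_Γ^+.
-/

namespace Statement4

/-- The type A Dynkin graph on `Fin n` (a path). -/
def typeA (n : ℕ) : SimpleGraph (Fin n) :=
  SimpleGraph.fromRel (fun i j => (i : ℕ) + 1 = (j : ℕ))

/-- The type D Dynkin graph on `Fin n`: a chain `1 - 2 - ⋯ - (n-1)` with an extra
vertex `0` attached to `2`. -/
def typeD (n : ℕ) : SimpleGraph (Fin n) :=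
  SimpleGraph.fromRel
    (fun i j => (1 ≤ (i : ℕ) ∧ (i : ℕ) + 1 = (j : ℕ)) ∨ ((i : ℕ) = 0 ∧ (j : ℕ) = 2))

/-- The type E Dynkin graph on `Fin n`: a chain `1 - 2 - ⋯ - (n-1)` with an extra
vertex `0` attached to `3`. -/
def typeE (n : ℕ) : SimpleGraph (Fin n) :=
  SimpleGraph.fromRel
    (fun i j => (1 ≤ (i : ℕ) ∧ (i : ℕ) + 1 = (j : ℕ)) ∨ ((i : ℕ) = 0 ∧ (j : ℕ) = 3))

/-- `G` is a simply-laced Dynkin diagram (of type `A_n`, `D_n`, `E₆`, `E₇` or `E₈`). -/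
def IsADE {V : Type*} (G : SimpleGraph V) : Prop :=
  (∃ n : ℕ, 1 ≤ n ∧ Nonempty (G ≃g typeA n)) ∨
  (∃ n : ℕ, 4 ≤ n ∧ Nonempty (G ≃g typeD n)) ∨
  (∃ n : ℕ, (n = 6 ∨ n = 7 ∨ n = 8) ∧ Nonempty (G ≃g typeE n))

variable {V : Type} [LinearOrder V] (G : SimpleGraph V) [DecidableRel G.Adj]

/-- The defining relations of the braid monoid `B_Γ^+`: braid relations for adjacent
vertices and commutation relations for distinct non-adjacent vertices. -/
inductive BraidRel : FreeMonoid V → FreeMonoid V → Prop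
  | braid (i j : V) : G.Adj i j →
      BraidRel (FreeMonoid.of i * FreeMonoid.of j * FreeMonoid.of i)
               (FreeMonoid.of j * FreeMonoid.of i * FreeMonoid.of j)
  | comm (i j : V) : i ≠ j → ¬ G.Adj i j →
      BraidRel (FreeMonoid.of i * FreeMonoid.of j) (FreeMonoid.of j * FreeMonoid.of i)

/-- The braid monoid `B_Γ^+` of type `Γ`. -/
abbrev BraidMonoid := (conGen (BraidRel G)).Quotient

/-- The standard generator `s_i` of `B_Γ^+`. -/
def gen (i : V) : BraidMonoid G := (conGen (BraidRel G)).mk' (FreeMonoid.of i)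

/-- The element `γ_Λ = ∏_k s_{Σ_k}` of `B_Γ^+` attached to a finite set
`Λ ⊆ (ℤΓ)₀`: the product of the generators `s_{p₂ x}`, over `x ∈ Λ` taken in the
lexicographic order (first by the slice index `p₁ x`, then, within a slice --- where the
corresponding generators pairwise commute --- in the auxiliary linear order of `V`). -/
noncomputable def gammaLambda (Λ : Finset (ℤ × V)) : BraidMonoid G :=
  (((Λ.image (toLex : ℤ × V → Lex (ℤ × V))).sort (· ≤ ·)).map
    (fun p => gen G (ofLex p).2)).prod

set_option linter.unusedSectionVars false

theorem commute_gen {i j : V} (h : ¬ G.Adj i j) : Commute (gen G i) (gen G j) := by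
  by_cases hij : i = j
  · rw [hij]
  · have := (Con.eq (conGen (BraidRel G))).2 (ConGen.Rel.of _ _ (BraidRel.comm i j hij h))
    exact this

theorem gen_braid {i j : V} (h : G.Adj i j) :
    gen G i * gen G j * gen G i = gen G j * gen G i * gen G j :=
  (Con.eq (conGen (BraidRel G))).2 (ConGen.Rel.of _ _ (BraidRel.braid i j h))

theorem gammaLambda_singleton (x : ℤ × V) : gammaLambda G {x} = gen G x.2 := by
  simp [gammaLambda]

/-- Since the sorted list of `A ∪ B` is a concatenation when `A` lies entirely before `B` in the
lexicographic order, `gammaLambda` is multiplicative on such unions. -/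
theorem gammaLambda_union (A B : Finset (ℤ × V))
    (h : ∀ x ∈ A, ∀ y ∈ B, toLex x < toLex y) :
    gammaLambda G (A ∪ B) = gammaLambda G A * gammaLambda G B := by
  have key : ((A ∪ B).image (toLex : ℤ × V → Lex (ℤ × V))).sort (· ≤ ·)
      = (A.image (toLex : ℤ × V → Lex (ℤ × V))).sort (· ≤ ·)
        ++ (B.image (toLex : ℤ × V → Lex (ℤ × V))).sort (· ≤ ·) := by
    have hlt : ((A.image (toLex : ℤ × V → Lex (ℤ × V))).sort (· ≤ ·)
        ++ (B.image (toLex : ℤ × V → Lex (ℤ × V))).sort (· ≤ ·)).Pairwise (· < ·) := by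
      refine List.pairwise_append.2 ⟨(Finset.sortedLT_sort _).pairwise,
        (Finset.sortedLT_sort _).pairwise, ?_⟩
      intro x hx y hy
      simp only [Finset.mem_sort, Finset.mem_image] at hx hy
      obtain ⟨x, hx, rfl⟩ := hx
      obtain ⟨y, hy, rfl⟩ := hy
      exact h x hx y hy
    refine List.Perm.eq_of_pairwise (le := (· < ·)) ?_ (Finset.sortedLT_sort _).pairwise hlt ?_
    · intro a b _ _ h1 h2
      exact absurd h1 (lt_asymm h2)
    · refine (List.perm_ext_iff_of_nodup (Finset.sort_nodup _ _)
        (hlt.imp fun h => ne_of_lt h)).2 fun x => ?_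
      simp only [Finset.image_union, List.mem_append, Finset.mem_sort, Finset.mem_union]
  simp only [gammaLambda, key, List.map_append, List.prod_append]

theorem commute_gammaLambda {i : V} {S : Finset (ℤ × V)} (h : ∀ x ∈ S, ¬ G.Adj i x.2) :
    Commute (gen G i) (gammaLambda G S) := by
  refine Commute.list_prod_right _ _ fun y hy => ?_
  simp only [List.mem_map, Finset.mem_sort, Finset.mem_image] at hy
  obtain ⟨_, ⟨x, hx, rfl⟩, rfl⟩ := hy
  exact commute_gen G (h x hx)

/-- The part of `Λ` lying strictly between `x` and `y` in the lexicographic order. -/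
def between (Λ : Finset (ℤ × V)) (x y : ℤ × V) : Finset (ℤ × V) :=
  Λ.filter fun z => toLex x < toLex z ∧ toLex z < toLex y

/-- The monoid identity behind a braiding move: `a` commutes past `P` and `Q`, and `b` past
`Q` and `R`, so `a P b Q a R` and `P b Q a R b` both reduce to the two sides of the braid
relation for `a` and `b`. -/
theorem braid_move {M : Type*} [Monoid M] {a b P Q R : M} (hab : a * b * a = b * a * b)
    (haP : Commute a P) (haQ : Commute a Q) (hbQ : Commute b Q) (hbR : Commute b R) :
    a * (P * (b * (Q * (a * R)))) = P * (b * (Q * (a * (R * b)))) :=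
  calc a * (P * (b * (Q * (a * R)))) = (a * P) * b * (Q * a) * R := by simp only [mul_assoc]
    _ = P * (a * b * a) * Q * R := by rw [haP.eq, ← haQ.eq]; simp only [mul_assoc]
    _ = P * b * a * (b * Q) * R := by rw [hab]; simp only [mul_assoc]
    _ = P * b * (a * Q) * (b * R) := by rw [hbQ.eq]; simp only [mul_assoc]
    _ = P * (b * (Q * (a * (R * b)))) := by rw [haQ.eq, hbR.eq]; simp only [mul_assoc]

set_option maxHeartbeats 1000000 in
theorem statement4 (hADE : IsADE G)
    (col : V → ZMod 2) (hbip : ∀ i j : V, G.Adj i j → col j = col i + 1)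
    (Λ : Finset (ℤ × V)) (hΛ : ∀ x ∈ Λ, col x.2 = ((x.1 : ℤ) : ZMod 2))
    (n : ℤ) (j kk : V) (hadj : G.Adj j kk)
    (ha : (n, j) ∈ Λ) (hb : (n + 1, kk) ∈ Λ) (hc : (n + 2, j) ∈ Λ)
    (hN1 : ∀ t : V, G.Adj j t → t ≠ kk → (n + 1, t) ∉ Λ)
    (hN2 : ∀ l : V, G.Adj kk l → l ≠ j → (n + 2, l) ∉ Λ)
    (hd : (n + 3, kk) ∉ Λ) :
    gammaLambda G Λ = gammaLambda G (insert (n + 3, kk) (Λ.erase (n, j))) := by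
  -- Adjacent vertices have opposite colours, so their slices have different parities.
  have hcol : ∀ (u : V) (m : ℤ) (x : ℤ × V), col u = (m : ZMod 2) → x ∈ Λ → x.1 = m →
      ¬ G.Adj u x.2 := by
    intro u m x hu hx hxm h
    have h1 := hbip _ _ h
    rw [hΛ x hx, hu, hxm] at h1
    simp at h1
  have hj0 : col j = ((n : ℤ) : ZMod 2) := hΛ _ ha
  have hj2 : col j = ((n + 2 : ℤ) : ZMod 2) := hΛ _ hc
  have hk1 : col kk = ((n + 1 : ℤ) : ZMod 2) := hΛ _ hb
  have hk3 : col kk = ((n + 3 : ℤ) : ZMod 2) := by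
    rw [hbip _ _ hadj, hj2, ← Int.cast_one, ← Int.cast_add]
    congr 1
    ring
  set A := Λ.filter fun z => toLex z < toLex (n, j) with hA
  set P := between Λ (n, j) (n + 1, kk) with hP
  set Q := between Λ (n + 1, kk) (n + 2, j) with hQ
  set R := between Λ (n + 2, j) (n + 3, kk) with hR
  set E := Λ.filter fun z => toLex (n + 3, kk) < toLex z with hE
  have hcomm : Commute (gen G j) (gammaLambda G P) ∧ Commute (gen G j) (gammaLambda G Q) ∧
      Commute (gen G kk) (gammaLambda G Q) ∧ Commute (gen G kk) (gammaLambda G R) := by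
    refine ⟨commute_gammaLambda G ?_, commute_gammaLambda G ?_, commute_gammaLambda G ?_,
      commute_gammaLambda G ?_⟩ <;> rintro ⟨m, t⟩ hx <;>
      simp only [hP, hQ, hR, between, Finset.mem_filter, Prod.Lex.toLex_lt_toLex] at hx <;>
      obtain ⟨hx, h1, h2⟩ := hx
    · rcases (by omega : m = n ∨ m = n + 1) with rfl | rfl
      · exact hcol _ _ _ hj0 hx rfl
      · exact fun h => hN1 t h (by rintro rfl; simp at h2) hx
    · rcases (by omega : m = n + 1 ∨ m = n + 2) with rfl | rfl
      · exact fun h => hN1 t h (by rintro rfl; simp at h1) hx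
      · exact hcol _ _ _ hj2 hx rfl
    · rcases (by omega : m = n + 1 ∨ m = n + 2) with rfl | rfl
      · exact hcol _ _ _ hk1 hx rfl
      · exact fun h => hN2 t h (by rintro rfl; simp at h2) hx
    · rcases (by omega : m = n + 2 ∨ m = n + 3) with rfl | rfl
      · exact fun h => hN2 t h (by rintro rfl; simp at h1) hx
      · exact hcol _ _ _ hk3 hx rfl
  obtain ⟨cjP, cjQ, ckQ, ckR⟩ := hcomm
  have hab : toLex (n, j) < toLex (n + 1, kk) := by
    simp [Prod.Lex.toLex_lt_toLex]
  have hbc : toLex (n + 1, kk) < toLex (n + 2, j) := by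
    simp [Prod.Lex.toLex_lt_toLex]
  have hcd : toLex (n + 2, j) < toLex (n + 3, kk) := by
    simp [Prod.Lex.toLex_lt_toLex]
  have e1 : Λ = A ∪ ({(n, j)} ∪ (P ∪ ({(n + 1, kk)} ∪ (Q ∪ ({(n + 2, j)} ∪ (R ∪ E)))))) := by
    ext x
    have t1 := lt_trichotomy (toLex x) (toLex (n, j))
    have t2 := lt_trichotomy (toLex x) (toLex (n + 1, kk))
    have t3 := lt_trichotomy (toLex x) (toLex (n + 2, j))
    have t4 := lt_trichotomy (toLex x) (toLex (n + 3, kk))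
    simp only [toLex_inj] at t1 t2 t3 t4
    simp only [hA, hP, hQ, hR, hE, between, Finset.mem_union, Finset.mem_filter,
      Finset.mem_singleton]
    grind
  have e2 : insert (n + 3, kk) (Λ.erase (n, j))
      = A ∪ (P ∪ ({(n + 1, kk)} ∪ (Q ∪ ({(n + 2, j)} ∪ (R ∪ ({(n + 3, kk)} ∪ E)))))) := by
    ext x
    have t1 := lt_trichotomy (toLex x) (toLex (n, j))
    have t2 := lt_trichotomy (toLex x) (toLex (n + 1, kk))
    have t3 := lt_trichotomy (toLex x) (toLex (n + 2, j))
    have t4 := lt_trichotomy (toLex x) (toLex (n + 3, kk))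
    simp only [toLex_inj] at t1 t2 t3 t4
    simp only [hA, hP, hQ, hR, hE, between, Finset.mem_union, Finset.mem_filter,
      Finset.mem_singleton, Finset.mem_insert, Finset.mem_erase]
    grind
  have g1 : gammaLambda G Λ = gammaLambda G A * (gen G j * (gammaLambda G P * (gen G kk *
      (gammaLambda G Q * (gen G j * (gammaLambda G R * gammaLambda G E)))))) := by
    conv_lhs => rw [e1]
    rw [gammaLambda_union, gammaLambda_union, gammaLambda_union, gammaLambda_union,
      gammaLambda_union, gammaLambda_union, gammaLambda_union]
    · simp only [gammaLambda_singleton]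
    all_goals
      simp only [hA, hP, hQ, hR, hE, between, Finset.mem_union, Finset.mem_filter,
        Finset.mem_singleton]
      intro x hx y hy
      grind
  have g2 : gammaLambda G (insert (n + 3, kk) (Λ.erase (n, j))) = gammaLambda G A *
      (gammaLambda G P * (gen G kk * (gammaLambda G Q * (gen G j * (gammaLambda G R *
        (gen G kk * gammaLambda G E)))))) := by
    rw [e2]
    rw [gammaLambda_union, gammaLambda_union, gammaLambda_union, gammaLambda_union,
      gammaLambda_union, gammaLambda_union, gammaLambda_union]
    · simp only [gammaLambda_singleton]
    all_goals
      simp only [hA, hP, hQ, hR, hE, between, Finset.mem_union, Finset.mem_filter,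
        Finset.mem_singleton]
      intro x hx y hy
      grind
  rw [g1, g2]
  have hmove := congrArg (· * gammaLambda G E) (braid_move (gen_braid G hadj) cjP cjQ ckQ ckR)
  simp only [mul_assoc] at hmove
  rw [hmove]

end Statement4
end

section
/- Let Λ ⊂ (ℤΓ)_0 be a finite set and θ : Λ ⊔ ({−∞} × Γ_0) → ℤ a function such that (Λ, θ) satisfies mesh relations. Suppose a = (n,j), b = (n+1,k), c = (n+2,j) ∈ Λ form a braid (k ∈ N(j)), (n+1,t) ∉ Λ for every t ∈ N(j) \ {k}, (n+2,l) ∉ Λ for every l ∈ N(k) \ {j}, and d = (n+3,k) ∉ Λ. Let (Λ̄, θ̄) be the result of the braiding move: Λ̄ = (Λ \ {a}) ∪ {d}, θ̄(b) = θ(c), θ̄(c) = θ(b), θ̄(d) = θ(a), and θ̄ = θ elsewhere. Then (Λ̄, θ̄) satisfies mesh relations. -/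
/-!
Write `a = (n, j)`, `b = (n+1, k)`, `c = (n+2, j)`, `d = (n+3, k)`. The mesh from `a` to `c`
contains only `b`, so `θ(c) + θ(a) = θ(b)`. Consequently the sum of `θ` over any part of `Λ`
changes under the move by `θ(a)` times (the number of `c`, `d` in that part minus the number of
`a`, `b` in it); this is `sum_move`. Every mesh of the new set is then compared with an old one:

* the mesh from `b` to `d` contains only `c`;
* the mesh ending at `c` is the old mesh ending at `a`, enlarged by `b`;
* the mesh starting at `d` is the old mesh starting at `b`, with `c` removed;
* every other mesh has the same endpoints as before. In a column other than `j`, `k` the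
  emptiness of the levels `n+1` (next to `j`) and `n+2` (next to `k`) shows that the mesh contains
  both or neither of `a`, `c`, and both or neither of `b`, `d`, so the sum does not change.

Parity of levels, coming from the 2-colouring, excludes the intermediate positions. Infinite meshes
are handled together with finite ones by replacing `−∞` with an integer to the left of `Λ`
(`satisfiesMesh_iff`).
-/

/-!
STATEMENT 5: a braiding move preserves mesh relations.
-/

namespace Statement5

/-- The type A Dynkin graph on `Fin n` (a path). -/
def typeA (n : ℕ) : SimpleGraph (Fin n) :=
  SimpleGraph.fromRel (fun i j => (i : ℕ) + 1 = (j : ℕ))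

/-- The type D Dynkin graph on `Fin n`: a chain `1 - 2 - ⋯ - (n-1)` with an extra
vertex `0` attached to `2`. -/
def typeD (n : ℕ) : SimpleGraph (Fin n) :=
  SimpleGraph.fromRel
    (fun i j => (1 ≤ (i : ℕ) ∧ (i : ℕ) + 1 = (j : ℕ)) ∨ ((i : ℕ) = 0 ∧ (j : ℕ) = 2))

/-- The type E Dynkin graph on `Fin n`: a chain `1 - 2 - ⋯ - (n-1)` with an extra
vertex `0` attached to `3`. -/
def typeE (n : ℕ) : SimpleGraph (Fin n) :=
  SimpleGraph.fromRel
    (fun i j => (1 ≤ (i : ℕ) ∧ (i : ℕ) + 1 = (j : ℕ)) ∨ ((i : ℕ) = 0 ∧ (j : ℕ) = 3))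

/-- `G` is a simply-laced Dynkin diagram (of type `A_n`, `D_n`, `E₆`, `E₇` or `E₈`). -/
def IsADE {V : Type*} (G : SimpleGraph V) : Prop :=
  (∃ n : ℕ, 1 ≤ n ∧ Nonempty (G ≃g typeA n)) ∨
  (∃ n : ℕ, 4 ≤ n ∧ Nonempty (G ≃g typeD n)) ∨
  (∃ n : ℕ, (n = 6 ∨ n = 7 ∨ n = 8) ∧ Nonempty (G ≃g typeE n))

variable {V : Type} [LinearOrder V] (G : SimpleGraph V) [DecidableRel G.Adj]

/-- `mesh_Λ(a, b)` for a generalized mesh starting at a (possibly imaginary) vertex with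
first coordinate `lo` and ending at `b`. -/
def meshFin (Λ : Finset (ℤ × V)) (lo : ℤ) (b : ℤ × V) : Finset (ℤ × V) :=
  Λ.filter (fun c => G.Adj c.2 b.2 ∧ lo < c.1 ∧ c.1 < b.1)

/-- `mesh_Λ(τ_Λ(b), b)` for an infinite mesh ending at `b`. -/
def meshInf (Λ : Finset (ℤ × V)) (b : ℤ × V) : Finset (ℤ × V) :=
  Λ.filter (fun c => G.Adj c.2 b.2 ∧ c.1 < b.1)

/-- `(Λ, θ)` (where `θinf` records the values of `θ` on the imaginary vertices
`(−∞, j)`) satisfies mesh relations: for every `b ∈ Λ`,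
`θ(b) + θ(τ_Λ(b)) = ∑_{c ∈ mesh_Λ(τ_Λ(b), b)} θ(c)`. -/
def SatisfiesMesh (Λ : Finset (ℤ × V)) (θ : ℤ × V → ℤ) (θinf : V → ℤ) : Prop :=
  ∀ b ∈ Λ,
    (∀ a ∈ Λ, a.2 = b.2 → a.1 < b.1 → (∀ n : ℤ, a.1 < n → n < b.1 → (n, b.2) ∉ Λ) →
        θ b + θ a = ∑ c ∈ meshFin G Λ a.1 b, θ c) ∧
    ((∀ n : ℤ, n < b.1 → (n, b.2) ∉ Λ) →
        θ b + θinf b.2 = ∑ c ∈ meshInf G Λ b, θ c)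

/-- `v` is the value at the start of a generalized mesh in column `i`: either the mesh starts at
the vertex `(lo, i)` of `Λ`, or it starts at `(−∞, i)`, in which case `lo` is the integer `B`,
chosen to the left of all of `Λ`. -/
def IsStart {V : Type} (Λ : Finset (ℤ × V)) (θ : ℤ × V → ℤ) (θinf : V → ℤ) (B lo : ℤ) (i : V)
    (v : ℤ) : Prop :=
  ((lo, i) ∈ Λ ∧ v = θ (lo, i)) ∨ (lo = B ∧ v = θinf i)

/-- The mesh relations with finite and infinite meshes treated alike: `−∞` is replaced by an
integer `B` to the left of all of `Λ`. -/
lemma satisfiesMesh_iff {V : Type} [LinearOrder V] (G : SimpleGraph V) [DecidableRel G.Adj]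
    (Λ : Finset (ℤ × V)) (θ : ℤ × V → ℤ) (θinf : V → ℤ) (B : ℤ) (hB : ∀ x ∈ Λ, B < x.1) :
    SatisfiesMesh G Λ θ θinf ↔
      ∀ m i, (m, i) ∈ Λ → ∀ lo, lo < m → (∀ z, lo < z → z < m → (z, i) ∉ Λ) →
        ∀ v, IsStart Λ θ θinf B lo i v →
          θ (m, i) + v = ∑ c ∈ Λ with G.Adj c.2 i ∧ lo < c.1 ∧ c.1 < m, θ c := by
  have hinf : ∀ b : ℤ × V, meshInf G Λ b =
      Λ.filter (fun c => G.Adj c.2 b.2 ∧ B < c.1 ∧ c.1 < b.1) := by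
    intro b
    apply Finset.filter_congr
    intro x hx
    have := hB x hx
    tauto
  constructor
  · rintro h m i hm lo hlo hgap v (⟨h1, rfl⟩ | ⟨rfl, rfl⟩)
    · exact (h _ hm).1 (lo, i) h1 rfl hlo hgap
    · rw [← hinf (m, i)]
      refine (h _ hm).2 fun z hz hzΛ => hgap z (hB _ hzΛ) hz hzΛ
  · rintro h ⟨m, i⟩ hm
    refine ⟨?_, ?_⟩
    · rintro ⟨lo, i'⟩ hlo rfl hlt hgap
      exact h m i' hm lo hlt hgap _ (Or.inl ⟨hlo, rfl⟩)
    · intro hgap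
      rw [hinf (m, i)]
      exact h m i hm B (hB _ hm) (fun z _ hz => hgap z hz) _ (Or.inr ⟨rfl, rfl⟩)

/-- How a sum over the part of `Λ` cut out by `P` changes under a braiding move. -/
lemma sum_move {X : Type} [DecidableEq X] (Λ : Finset X) (θ : X → ℤ) (a b c d : X)
    (ha : a ∈ Λ) (hb : b ∈ Λ) (hc : c ∈ Λ) (hd : d ∉ Λ)
    (hab : a ≠ b) (hac : a ≠ c) (hbc : b ≠ c) (hrel : θ c + θ a = θ b)
    (P : X → Prop) [DecidablePred P] :
    ∑ x ∈ insert d (Λ.erase a) with P x,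
        Function.update (Function.update (Function.update θ b (θ c)) c (θ b)) d (θ a) x =
      (∑ x ∈ Λ with P x, θ x) + ((if P c then θ a else 0) + (if P d then θ a else 0)
        - (if P a then θ a else 0) - (if P b then θ a else 0)) := by
  have hda : d ≠ a := fun h => hd (h ▸ ha)
  have hdb : d ≠ b := fun h => hd (h ▸ hb)
  have hdc : d ≠ c := fun h => hd (h ▸ hc)
  -- Both sums are split into the contributions of `a`, `b`, `c`, `d` and the common rest.
  have e1 : Λ = insert a (insert b (insert c (((Λ.erase a).erase b).erase c))) := by
    ext x; simp only [Finset.mem_insert, Finset.mem_erase]; grind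
  have e2 : Λ.erase a = insert b (insert c (((Λ.erase a).erase b).erase c)) := by
    ext x; simp only [Finset.mem_insert, Finset.mem_erase]; grind
  rw [Finset.sum_filter, Finset.sum_filter, Finset.sum_insert (by simp [hd])]
  conv_rhs => rw [e1]
  conv_lhs => rw [e2]
  rw [Finset.sum_insert (by simp [hbc]), Finset.sum_insert (by simp),
    Finset.sum_insert (by simp [hab, hac]), Finset.sum_insert (by simp [hbc]),
    Finset.sum_insert (by simp)]
  have e3 : ∑ x ∈ ((Λ.erase a).erase b).erase c, (if P x then
      Function.update (Function.update (Function.update θ b (θ c)) c (θ b)) d (θ a) x else 0) =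
      ∑ x ∈ ((Λ.erase a).erase b).erase c, if P x then θ x else 0 := by
    apply Finset.sum_congr rfl
    intro x hx
    simp only [Finset.mem_erase] at hx
    have : x ≠ d := by rintro rfl; exact hd hx.2.2.2
    simp [Function.update_of_ne, this, hx.1, hx.2.1]
  rw [e3]
  simp only [Function.update_self, Function.update_of_ne hdb.symm, Function.update_of_ne hdc.symm,
    Function.update_of_ne hbc]
  split_ifs <;> linarith

theorem statement5 (hADE : IsADE G)
    (col : V → ZMod 2) (hbip : ∀ i j : V, G.Adj i j → col j = col i + 1)
    (Λ : Finset (ℤ × V)) (hΛ : ∀ x ∈ Λ, col x.2 = ((x.1 : ℤ) : ZMod 2))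
    (θ : ℤ × V → ℤ) (θinf : V → ℤ)
    (hmesh : SatisfiesMesh G Λ θ θinf)
    (n : ℤ) (j kk : V) (hadj : G.Adj j kk)
    (ha : (n, j) ∈ Λ) (hb : (n + 1, kk) ∈ Λ) (hc : (n + 2, j) ∈ Λ)
    (hN1 : ∀ t : V, G.Adj j t → t ≠ kk → (n + 1, t) ∉ Λ)
    (hN2 : ∀ l : V, G.Adj kk l → l ≠ j → (n + 2, l) ∉ Λ)
    (hd : (n + 3, kk) ∉ Λ) :
    SatisfiesMesh G (insert (n + 3, kk) (Λ.erase (n, j)))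
      (Function.update (Function.update (Function.update θ
          (n + 1, kk) (θ (n + 2, j))) (n + 2, j) (θ (n + 1, kk))) (n + 3, kk) (θ (n, j)))
      θinf := by
  set Λ' := insert (n + 3, kk) (Λ.erase (n, j)) with hΛ'
  set θ' := Function.update (Function.update (Function.update θ
          (n + 1, kk) (θ (n + 2, j))) (n + 2, j) (θ (n + 1, kk))) (n + 3, kk) (θ (n, j)) with hθ'
  obtain ⟨B, hB⟩ : ∃ B : ℤ, ∀ x ∈ Λ, B < x.1 := by
    obtain ⟨B, hB⟩ := (Λ.image Prod.fst).bddBelow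
    refine ⟨B - 1, fun x hx => ?_⟩
    have := hB (Finset.mem_coe.2 (Finset.mem_image_of_mem Prod.fst hx))
    omega
  have hmem : ∀ m i, (m, i) ∈ Λ' ↔ (m = n + 3 ∧ i = kk) ∨ (¬ (m = n ∧ i = j) ∧ (m, i) ∈ Λ) := by
    intro m i
    simp [hΛ', Prod.ext_iff]
  have hBn := hB _ ha
  have hB' : ∀ x ∈ Λ', B < x.1 := by
    rintro ⟨m, i⟩ hx
    rcases (hmem m i).1 hx with ⟨rfl, rfl⟩ | ⟨_, h⟩
    · simp only at hBn ⊢; omega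
    · exact hB _ h
  rw [satisfiesMesh_iff G Λ θ θinf B hB] at hmesh
  rw [satisfiesMesh_iff G Λ' θ' θinf B hB']
  have hjk : j ≠ kk := hadj.ne
  -- An integer-valued form of the 2-colouring, on which parity arguments are linear arithmetic.
  obtain ⟨p, hp1, hp2⟩ : ∃ p : V → ℤ, (∀ m i, (m, i) ∈ Λ → (m - p i) % 2 = 0) ∧
      ∀ i i', G.Adj i i' → (p i + p i') % 2 = 1 := by
    refine ⟨fun i => ((col i).val : ℤ), fun m i h => ?_, fun i i' h => ?_⟩
    · have := hΛ _ h
      simp only at this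
      apply Int.emod_eq_zero_of_dvd
      have h2 : ((m - ((col i).val : ℤ) : ℤ) : ZMod 2) = 0 := by
        push_cast
        rw [ZMod.natCast_zmod_val, this, sub_self]
      exact_mod_cast (ZMod.intCast_zmod_eq_zero_iff_dvd _ 2).1 h2
    · have h2 := hbip i i' h
      simp only [h2]
      generalize col i = x
      revert x
      decide
  have hpj := hp1 _ _ ha
  have hpk := hp1 _ _ hb
  have hval : ∀ m i, θ' (m, i) = if m = n + 3 ∧ i = kk then θ (n, j) else
      if m = n + 2 ∧ i = j then θ (n + 1, kk) else
      if m = n + 1 ∧ i = kk then θ (n + 2, j) else θ (m, i) := by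
    intro m i
    simp [hθ', Function.update_apply, Prod.ext_iff]
  -- The mesh from `a` to `c` contains only `b`.
  have hrel : θ (n + 2, j) + θ (n, j) = θ (n + 1, kk) := by
    rw [hmesh (n + 2) j hc n (by omega) ?_ _ (Or.inl ⟨ha, rfl⟩)]
    · rw [Finset.sum_eq_single_of_mem (n + 1, kk)]
      · simp [hb, hadj.symm]
      · rintro ⟨m, i⟩ hx hne
        simp only [Finset.mem_filter] at hx
        obtain ⟨hx, hx1, hx2, hx3⟩ := hx
        obtain rfl : m = n + 1 := by omega
        exact absurd hx (hN1 i hx1.symm (by rintro rfl; exact hne rfl))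
    · intro z hz1 hz2 hz
      have := hp1 _ _ hz
      omega
  have hsum := sum_move Λ θ (n, j) (n + 1, kk) (n + 2, j) (n + 3, kk) ha hb hc hd
    (by simp) (by simp) (by simp) hrel
  rw [← hΛ', ← hθ'] at hsum
  intro m i hm lo hlo hgap v hv
  rw [hsum]
  simp only
  have hkj : G.Adj kk j := hadj.symm
  have hjj : ¬ G.Adj j j := G.loopless.irrefl j
  have hkkk : ¬ G.Adj kk kk := G.loopless.irrefl kk
  rcases (hmem m i).1 hm with ⟨rfl, rfl⟩ | ⟨hma, hmΛ⟩
  · -- The mesh ending at `d` starts at `b` and contains only `c`.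
    have hlo2 : n + 1 ≤ lo := by
      by_contra hcon
      exact hgap (n + 1) (by omega) (by omega) ((hmem _ _).2 (Or.inr ⟨by omega, hb⟩))
    rcases hv with ⟨h1, rfl⟩ | ⟨rfl, rfl⟩
    · have h1' : (lo, i) ∈ Λ := by
        rcases (hmem _ _).1 h1 with h | h
        · omega
        · exact h.2
      have := hp1 _ _ h1'
      obtain rfl : lo = n + 1 := by omega
      rw [Finset.sum_eq_single_of_mem (n + 2, j)]
      · simp [hval, hadj, hjk.symm]
        linarith
      · simp [hc, hadj]
      · rintro ⟨m, l⟩ hx hne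
        simp only [Finset.mem_filter] at hx
        obtain ⟨hx, hx1, hx2, hx3⟩ := hx
        obtain rfl : m = n + 2 := by omega
        exact absurd hx (hN2 l hx1.symm (by rintro rfl; exact hne rfl))
    · simp only at hBn; omega
  have hpm := hp1 _ _ hmΛ
  by_cases hmc : m = n + 2 ∧ i = j
  · -- The new mesh ending at `c` is the old mesh ending at `a`, enlarged by `b`.
    obtain ⟨rfl, rfl⟩ := hmc
    have hlo' : lo < n ∧ IsStart Λ θ θinf B lo i v := by
      rcases hv with ⟨h1, rfl⟩ | ⟨rfl, rfl⟩
      · rcases (hmem _ _).1 h1 with h | h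
        · omega
        · have := hp1 _ _ h.2
          have h3 : lo ≠ n := fun h4 => h.1 ⟨h4, rfl⟩
          refine ⟨by omega, Or.inl ⟨h.2, ?_⟩⟩
          rw [hval]
          simp only [hjk, and_false, and_true, if_false]
          rw [if_neg (by omega)]
      · exact ⟨hBn, Or.inr ⟨rfl, rfl⟩⟩
    have key := hmesh n i ha lo hlo'.1 (fun z h1 h2 hz => hgap z h1 (by omega)
      ((hmem _ _).2 (Or.inr ⟨by omega, hz⟩))) v hlo'.2
    have hset : Λ.filter (fun c => G.Adj c.2 i ∧ lo < c.1 ∧ c.1 < n + 2) =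
        insert (n + 1, kk) (Λ.filter (fun c => G.Adj c.2 i ∧ lo < c.1 ∧ c.1 < n)) := by
      ext ⟨z, l⟩
      simp only [Finset.mem_filter, Finset.mem_insert, Prod.mk.injEq]
      constructor
      · rintro ⟨h1, h2, h3, h4⟩
        have q1 := hp1 _ _ h1
        have q2 := hp2 _ _ h2
        by_cases hz : z = n + 1
        · subst hz
          exact Or.inl ⟨rfl, by_contra fun hl => hN1 l h2.symm hl h1⟩
        · exact Or.inr ⟨h1, h2, h3, by omega⟩
      · rintro (⟨rfl, rfl⟩ | ⟨h1, h2, h3, h4⟩)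
        · exact ⟨hb, hkj, by omega, by omega⟩
        · exact ⟨h1, h2, h3, by omega⟩
    rw [hset, Finset.sum_insert (by simp), ← key, hval]
    simp [hjk, hkj]
    rw [if_pos (by omega)]
    linarith
  by_cases hld : lo = n + 3 ∧ i = kk
  · -- The new mesh starting at `d` is the old mesh starting at `b`, with `c` removed.
    obtain ⟨rfl, rfl⟩ := hld
    obtain rfl : v = θ (n, j) := by
      rcases hv with ⟨h1, rfl⟩ | ⟨h, rfl⟩
      · simp [hval]
      · simp only at hBn; omega
    have key := hmesh m i hmΛ (n + 1) (by omega) (by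
      intro z h1 h2 hz
      have := hp1 _ _ hz
      by_cases hz3 : z = n + 3
      · subst hz3; exact hd hz
      · exact hgap z (by omega) h2 ((hmem _ _).2 (Or.inr ⟨by omega, hz⟩))) _ (Or.inl ⟨hb, rfl⟩)
    have hset : Λ.filter (fun c => G.Adj c.2 i ∧ n + 1 < c.1 ∧ c.1 < m) =
        insert (n + 2, j) (Λ.filter (fun c => G.Adj c.2 i ∧ n + 3 < c.1 ∧ c.1 < m)) := by
      ext ⟨z, l⟩
      simp only [Finset.mem_filter, Finset.mem_insert, Prod.mk.injEq]
      constructor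
      · rintro ⟨h1, h2, h3, h4⟩
        have q1 := hp1 _ _ h1
        have q2 := hp2 _ _ h2
        by_cases hz : z = n + 2
        · subst hz
          exact Or.inl ⟨rfl, by_contra fun hl => hN2 l h2.symm hl h1⟩
        · exact Or.inr ⟨h1, h2, by omega, h4⟩
      · rintro (⟨rfl, rfl⟩ | ⟨h1, h2, h3, h4⟩)
        · exact ⟨hc, hadj, by omega, by omega⟩
        · exact ⟨h1, h2, by omega, h4⟩
    rw [hset, Finset.sum_insert (by simp)] at key
    rw [hval, if_neg (by omega), if_neg hmc, if_neg (by omega)]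
    simp [hadj]
    linarith
  -- In the remaining cases the mesh has the same endpoints in `Λ` and in the new set.
  have hjΛ' : (n + 2, j) ∈ Λ' := (hmem _ _).2 (Or.inr ⟨by omega, hc⟩)
  have hkΛ' : (n + 1, kk) ∈ Λ' := (hmem _ _).2 (Or.inr ⟨by omega, hb⟩)
  have hdΛ' : (n + 3, kk) ∈ Λ' := (hmem _ _).2 (Or.inl ⟨rfl, rfl⟩)
  -- `w` is the value of `θ` at the start of that mesh.
  obtain ⟨w, hw, hvw, hloa, hpl⟩ : ∃ w, IsStart Λ θ θinf B lo i w ∧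
      v = w + (if lo = n + 2 ∧ i = j then θ (n, j) else 0)
        - (if lo = n + 1 ∧ i = kk then θ (n, j) else 0) ∧ ¬ (lo = n ∧ i = j) ∧
      (lo < n ∨ ((lo, i) ∈ Λ ∧ (lo - p i) % 2 = 0)) := by
    rcases hv with ⟨h1, rfl⟩ | ⟨rfl, rfl⟩
    · rcases (hmem _ _).1 h1 with h | h
      · exact absurd h hld
      · refine ⟨_, Or.inl ⟨h.2, rfl⟩, ?_, h.1, Or.inr ⟨h.2, hp1 _ _ h.2⟩⟩
        rw [hval, if_neg hld]
        by_cases h5 : lo = n + 2 ∧ i = j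
        · obtain ⟨rfl, rfl⟩ := h5
          simp
          linarith
        · by_cases h6 : lo = n + 1 ∧ i = kk
          · obtain ⟨rfl, rfl⟩ := h6
            simp
            linarith
          · simp [h5, h6]
    · simp only at hBn
      refine ⟨_, Or.inr ⟨rfl, rfl⟩, ?_, by omega, Or.inl hBn⟩
      rw [if_neg (by omega), if_neg (by omega)]
      ring
  have key := hmesh m i hmΛ lo hlo (fun z h1 h2 hz => by
    by_cases hza : z = n ∧ i = j
    · obtain ⟨rfl, rfl⟩ := hza
      have : z + 2 < m ∨ m = z + 2 ∨ m = z + 1 := by omega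
      rcases this with h | h | h
      · exact hgap _ (by omega) h hjΛ'
      · exact hmc ⟨h, rfl⟩
      · omega
    · exact hgap z h1 h2 ((hmem _ _).2 (Or.inr ⟨hza, hz⟩))) w hw
  rw [← key, hvw, hval, if_neg (by rintro ⟨rfl, rfl⟩; exact hd hmΛ), if_neg hmc]
  by_cases hij : i = j
  · subst hij
    simp only [hjj, hkj, hjk, true_and, false_and, and_true, and_false, if_false]
    have : ¬ (lo < n + 2 ∧ n + 2 < m) := fun h => hgap _ h.1 h.2 hjΛ'
    have h1 : m ≠ n + 2 := fun h => hmc ⟨h, rfl⟩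
    have h2 : lo ≠ n := fun h => hloa ⟨h, rfl⟩
    have h3 : m ≠ n := fun h => hma ⟨h, rfl⟩
    split_ifs <;> omega
  by_cases hik : i = kk
  · subst hik
    simp only [hkkk, hadj, hjk.symm, true_and, false_and, and_true, and_false, if_false]
    have h1 : ¬ (lo < n + 3 ∧ n + 3 < m) := fun h => hgap _ h.1 h.2 hdΛ'
    have h2 : ¬ (lo < n + 1 ∧ n + 1 < m) := fun h => hgap _ h.1 h.2 hkΛ'
    have h3 : m ≠ n + 3 := by rintro rfl; exact hd hmΛ
    have h4 : lo ≠ n + 3 := fun h => hld ⟨h, rfl⟩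
    by_cases h5 : m = n + 1
    · subst h5
      split_ifs <;> omega
    split_ifs <;> omega
  simp only [hij, hik, and_false, if_false]
  by_cases hji : G.Adj j i
  · have hki : ¬ G.Adj kk i := by
      intro h
      have := hp2 _ _ h
      have := hp2 _ _ hji
      omega
    have q := hp2 _ _ hji
    -- Level `n + 1` is empty in column `i`, so the mesh contains both of `a`, `c` or neither.
    have h1 : m ≠ n + 1 := by rintro rfl; exact hN1 i hji hik hmΛ
    have h2 : lo ≠ n + 1 := by
      rintro rfl
      rcases hpl with h | h
      · omega
      · exact hN1 i hji hik h.1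
    simp only [hji, hki, true_and, false_and, if_false]
    split_ifs <;> omega
  by_cases hki : G.Adj kk i
  · have q := hp2 _ _ hki
    -- Level `n + 2` is empty in column `i`, so the mesh contains both of `b`, `d` or neither.
    have h1 : m ≠ n + 2 := by rintro rfl; exact hN2 i hki hij hmΛ
    have h2 : lo ≠ n + 2 := by
      rintro rfl
      rcases hpl with h | h
      · omega
      · exact hN2 i hki hij h.1
    simp only [hji, hki, true_and, false_and, if_false]
    split_ifs <;> omega
  simp [hji, hki]

end Statement5
end

section
/- Let G be a group and F : B_Γ^+ → G a monoid homomorphism. Suppose there exists a function D : G → 𝒫(Γ_0) such that (a) for every α ∈ B_Γ^+ and every j ∈ D(F(α)), α is left-divisible by s_j in B_Γ^+ (i.e. α = s_j α' for some α' ∈ B_Γ^+), and (b) D(F(α)) ≠ ∅ for every α ≠ 1. Then F is injective. -/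
/-!
The homomorphism criterion is proved by induction on length. If `F α = F β` and one of `α`, `β`
is nontrivial, a vertex `j ∈ D (F α) = D (F β)` gives `α = s_j α'` and `β = s_j β'`; cancelling
`F s_j` in the group yields `F α' = F β'`, and `α'` is shorter than `α`. The length is a
well-defined homomorphism on the braid monoid (`lengthHom`) because the defining relations are
homogeneous; in particular `1` is not divisible by any generator.
-/

/-!
STATEMENT 6: abstract injectivity criterion for a monoid homomorphism from B_Γ^+ to a group.
-/

namespace Statement6

/-- The type A Dynkin graph on `Fin n` (a path). -/
def typeA (n : ℕ) : SimpleGraph (Fin n) :=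
  SimpleGraph.fromRel (fun i j => (i : ℕ) + 1 = (j : ℕ))

/-- The type D Dynkin graph on `Fin n`: a chain `1 - 2 - ⋯ - (n-1)` with an extra
vertex `0` attached to `2`. -/
def typeD (n : ℕ) : SimpleGraph (Fin n) :=
  SimpleGraph.fromRel
    (fun i j => (1 ≤ (i : ℕ) ∧ (i : ℕ) + 1 = (j : ℕ)) ∨ ((i : ℕ) = 0 ∧ (j : ℕ) = 2))

/-- The type E Dynkin graph on `Fin n`: a chain `1 - 2 - ⋯ - (n-1)` with an extra
vertex `0` attached to `3`. -/
def typeE (n : ℕ) : SimpleGraph (Fin n) :=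
  SimpleGraph.fromRel
    (fun i j => (1 ≤ (i : ℕ) ∧ (i : ℕ) + 1 = (j : ℕ)) ∨ ((i : ℕ) = 0 ∧ (j : ℕ) = 3))

/-- `G` is a simply-laced Dynkin diagram (of type `A_n`, `D_n`, `E₆`, `E₇` or `E₈`). -/
def IsADE {V : Type*} (G : SimpleGraph V) : Prop :=
  (∃ n : ℕ, 1 ≤ n ∧ Nonempty (G ≃g typeA n)) ∨
  (∃ n : ℕ, 4 ≤ n ∧ Nonempty (G ≃g typeD n)) ∨
  (∃ n : ℕ, (n = 6 ∨ n = 7 ∨ n = 8) ∧ Nonempty (G ≃g typeE n))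

variable {V : Type} [LinearOrder V] (G : SimpleGraph V) [DecidableRel G.Adj]

/-- The defining relations of the braid monoid `B_Γ^+`: braid relations for adjacent
vertices and commutation relations for distinct non-adjacent vertices. -/
inductive BraidRel : FreeMonoid V → FreeMonoid V → Prop
  | braid (i j : V) : G.Adj i j →
      BraidRel (FreeMonoid.of i * FreeMonoid.of j * FreeMonoid.of i)
               (FreeMonoid.of j * FreeMonoid.of i * FreeMonoid.of j)
  | comm (i j : V) : i ≠ j → ¬ G.Adj i j →
      BraidRel (FreeMonoid.of i * FreeMonoid.of j) (FreeMonoid.of j * FreeMonoid.of i)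

/-- The braid monoid `B_Γ^+` of type `Γ`. -/
abbrev BraidMonoid := (conGen (BraidRel G)).Quotient

/-- The standard generator `s_i` of `B_Γ^+`. -/
def gen (i : V) : BraidMonoid G := (conGen (BraidRel G)).mk' (FreeMonoid.of i)

/-- The length homomorphism `l : B_Γ^+ → (ℕ, +)` sending every generator to `1`; the additive
target is written multiplicatively. -/
def lengthHom : BraidMonoid G →* Multiplicative ℕ :=
  (conGen (BraidRel G)).lift (FreeMonoid.lift fun _ => Multiplicative.ofAdd 1) <| by
    rw [Con.conGen_le]
    intro x y h
    cases h <;> simp [Con.ker_rel]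

theorem lengthHom_gen (i : V) : lengthHom G (gen G i) = Multiplicative.ofAdd 1 := by
  simp [lengthHom, gen]

theorem length_gen_mul (i : V) (α : BraidMonoid G) :
    (lengthHom G (gen G i * α)).toAdd = (lengthHom G α).toAdd + 1 := by
  rw [map_mul, lengthHom_gen, toAdd_mul, toAdd_ofAdd, add_comm]

theorem statement6 (hADE : IsADE G)
    {H : Type} [Group H] (F : BraidMonoid G →* H)
    (Dfun : H → Set V)
    (hdiv : ∀ (α : BraidMonoid G) (j : V), j ∈ Dfun (F α) →
      ∃ α' : BraidMonoid G, α = gen G j * α')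
    (hne : ∀ α : BraidMonoid G, α ≠ 1 → (Dfun (F α)).Nonempty) :
    Function.Injective F := by
  suffices h : ∀ (n : ℕ) (α β : BraidMonoid G), (lengthHom G α).toAdd = n → F α = F β → α = β from
    fun α β hαβ => h _ α β rfl hαβ
  intro n
  induction n with
  | zero =>
    intro α β hα hαβ
    -- A vertex in the common value of `Dfun` would divide `α`, which has length zero.
    have hempty : ¬ (Dfun (F α)).Nonempty := by
      rintro ⟨j, hj⟩
      obtain ⟨α', rfl⟩ := hdiv α j hj
      rw [length_gen_mul] at hα
      omega
    have h1 : α = 1 := by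
      by_contra h
      exact hempty (hne α h)
    have h2 : β = 1 := by
      by_contra h
      exact hempty (hαβ ▸ hne β h)
    rw [h1, h2]
  | succ n ih =>
    intro α β hα hαβ
    have h1 : α ≠ 1 := by
      rintro rfl
      simp at hα
    obtain ⟨j, hj⟩ := hne α h1
    obtain ⟨α', rfl⟩ := hdiv α j hj
    obtain ⟨β', rfl⟩ := hdiv β j (hαβ ▸ hj)
    rw [length_gen_mul] at hα
    rw [map_mul, map_mul] at hαβ
    rw [ih α' β' (by omega) (mul_left_cancel hαβ)]

end Statement6
end

section
/- Every two-term object X with parameter u ∈ {0,1} is isomorphic in 𝔇 to X' ⊕ ⊕_{k∈V^{u+1}} P_k^{z_k} for some non-negative integers (z_k)_{k∈V^{u+1}} and some right-proper two-term object X' with the same parameter u. -/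
/-!
The endomorphism ring of a spherical object is local (`k` or `k[t]/(t²)`), and distinct `P l` of
the same colour admit no degree-zero morphisms. Hence a split epimorphism `f` from a finite sum
`Y = ⊕ P_l^{y_l}` of objects of one colour onto some `P l` must be invertible on one summand `P l`
of `Y` (`exists_isIso_component`): otherwise `𝟙 = ∑ (section component) ≫ (component of f)` would
lie in the radical. After changing the complementary decomposition, `f` is the projection onto that
summand (`exists_iso_snd_eq`).

If `φ : A ⟶ Y` is not right-proper, it is killed by such an `f`, so `Y ≅ W ⊞ P l` with `φ` having
zero component in `P l`. Induction on the number of summands (`exists_proper_splitting`) gives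
`Y ≅ Y' ⊞ Z` with `φ` having zero `Z`-component and right-proper `Y'`-component `φ'`. Summing the
triangle on `φ'` with `0 ⟶ Z ⟶ Z ⟶ 0` and comparing cones shows that the cone of `φ` is
isomorphic to the sum of the cone of `φ'` and `Z` (`exists_cone_iso`).
-/

/-!
STATEMENT 9: every two-term object splits as a right-proper two-term object plus a
direct sum of spherical objects of colour u+1.
-/

open CategoryTheory CategoryTheory.Limits CategoryTheory.Pretriangulated

namespace Statement9

universe v u

def typeA (n : ℕ) : SimpleGraph (Fin n) :=
  SimpleGraph.fromRel (fun i j => (i : ℕ) + 1 = (j : ℕ))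

def typeD (n : ℕ) : SimpleGraph (Fin n) :=
  SimpleGraph.fromRel
    (fun i j => (1 ≤ (i : ℕ) ∧ (i : ℕ) + 1 = (j : ℕ)) ∨ ((i : ℕ) = 0 ∧ (j : ℕ) = 2))

def typeE (n : ℕ) : SimpleGraph (Fin n) :=
  SimpleGraph.fromRel
    (fun i j => (1 ≤ (i : ℕ) ∧ (i : ℕ) + 1 = (j : ℕ)) ∨ ((i : ℕ) = 0 ∧ (j : ℕ) = 3))

def IsADE {V : Type*} (G : SimpleGraph V) : Prop :=
  (∃ n : ℕ, 1 ≤ n ∧ Nonempty (G ≃g typeA n)) ∨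
  (∃ n : ℕ, 4 ≤ n ∧ Nonempty (G ≃g typeD n)) ∨
  (∃ n : ℕ, (n = 6 ∨ n = 7 ∨ n = 8) ∧ Nonempty (G ≃g typeE n))

/-- The canonical generator of the "span of the identity" inside `Hom^ω(P, P)`:
for `ω = 0` it is the identity of `P` (transported to `P ⟶ P⟦0⟧`), and for `ω ≠ 0`
it is zero (the identity has degree `0 ≠ ω`). -/
noncomputable def unitClass (D : Type u) [Category.{v} D] [Preadditive D] [HasShift D ℤ]
    (ω : ℤ) (P : D) : P ⟶ P⟦ω⟧ :=
  if h : ω = 0 then (shiftFunctorZero D ℤ).inv.app P ≫ eqToHom (by rw [h]) else 0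

/-- A `Γ`-configuration `{P i}` of `ω`-spherical objects in a `k`-linear triangulated
category `D`, normalized with respect to a 2-colouring `col` of `Γ₀` and a decomposition
`ω = ω₀ + ω₁` so that `Hom^*(P i, P j)` is concentrated in degree `ω_u` when
`col i = u` and `j` is a neighbour of `i`. -/
structure Config (k : Type) [Field k] (V : Type) [Fintype V] [DecidableEq V]
    (G : SimpleGraph V)
    (D : Type u) [Category.{v} D] [Preadditive D] [CategoryTheory.Linear k D]
    [HasZeroObject D] [HasShift D ℤ] [∀ n : ℤ, (shiftFunctor D n).Additive]
    [Pretriangulated D] [HasFiniteBiproducts D]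
    (ω ω₀ ω₁ : ℤ) (col : V → ZMod 2) : Type (max u v) where
  P : V → D
  /-- spherical condition (i): `Hom^*(X, P i)` is finite dimensional for every `X` -/
  finiteness : ∀ (i : V) (X : D),
    FiniteDimensional k (DirectSum ℤ (fun n : ℤ => X ⟶ (P i)⟦n⟧))
  id_ne : ∀ i : V, 𝟙 (P i) ≠ 0
  /-- spherical condition (ii): `Hom^n(P i, P i) = 0` unless `n ∈ {0, ω}` -/
  vanish : ∀ (i : V) (n : ℤ), n ≠ 0 → n ≠ ω → ∀ f : P i ⟶ (P i)⟦n⟧, f = 0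
  /-- spherical condition (ii) for `ω = 0`: `End P i ≅ k[t]/(t²)` -/
  endo_zero : ω = 0 → ∀ i : V, ∃ t : P i ⟶ P i, t ≫ t = 0 ∧
      (∀ f : P i ⟶ P i, ∃ a b : k, f = a • 𝟙 (P i) + b • t) ∧
      (∀ a b : k, a • 𝟙 (P i) + b • t = 0 → a = 0 ∧ b = 0)
  /-- spherical condition (ii) for `ω ≠ 0`: `Hom^0 = k·id` and `Hom^ω` is a line -/
  endo_ne : ω ≠ 0 → ∀ i : V, (∀ f : P i ⟶ P i, ∃ a : k, f = a • 𝟙 (P i)) ∧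
      (∃ t : P i ⟶ (P i)⟦ω⟧, t ≠ 0 ∧ ∀ f : P i ⟶ (P i)⟦ω⟧, ∃ a : k, f = a • t)
  /-- spherical condition (iii): nondegeneracy of the composition pairing
  `Hom^*(P i, X) × Hom^*(X, P i) → Hom^*(P i, P i)/⟨Id⟩ ≅ k` in the first variable -/
  pairing_left : ∀ (i : V) (X : D) (n : ℤ) (f : P i ⟶ X⟦n⟧), f ≠ 0 →
      ∃ g : X ⟶ (P i)⟦ω - n⟧, ¬ ∃ a : k,
        f ≫ (shiftFunctor D n).map g ≫
            (shiftFunctorAdd' D (ω - n) n ω (by ring)).inv.app (P i)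
          = a • unitClass D ω (P i)
  /-- spherical condition (iii): nondegeneracy in the second variable -/
  pairing_right : ∀ (i : V) (X : D) (m : ℤ) (g : X ⟶ (P i)⟦m⟧), g ≠ 0 →
      ∃ f : P i ⟶ X⟦ω - m⟧, ¬ ∃ a : k,
        f ≫ (shiftFunctor D (ω - m)).map g ≫
            (shiftFunctorAdd' D m (ω - m) ω (by ring)).inv.app (P i)
          = a • unitClass D ω (P i)
  /-- the 2-colouring is proper: adjacent vertices have different colours -/
  bipartite : ∀ i j : V, G.Adj i j → col j = col i + 1
  homega : ω₀ + ω₁ = ω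
  /-- normalization: for `i ∈ V^u` and `j ∈ N(i)`, `Hom^*(P i, P j)` is concentrated
  in degree `ω_u` -/
  adj_conc : ∀ i j : V, G.Adj i j → ∀ n : ℤ,
      n ≠ (if col i = 0 then ω₀ else ω₁) → ∀ f : P i ⟶ (P j)⟦n⟧, f = 0
  /-- `Hom^*(P i, P j)` is one-dimensional for adjacent `i`, `j` -/
  adj_one : ∀ i j : V, G.Adj i j →
      ∃ γ : P i ⟶ (P j)⟦if col i = 0 then ω₀ else ω₁⟧, γ ≠ 0 ∧
        ∀ f : P i ⟶ (P j)⟦if col i = 0 then ω₀ else ω₁⟧, ∃ a : k, f = a • γ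
  /-- `Hom^*(P i, P j) = 0` for distinct non-adjacent `i`, `j` -/
  nonadj : ∀ i j : V, i ≠ j → ¬ G.Adj i j → ∀ (n : ℤ) (f : P i ⟶ (P j)⟦n⟧), f = 0

variable {k : Type} [Field k] {V : Type} [Fintype V] [DecidableEq V]
  {G : SimpleGraph V} [DecidableRel G.Adj]
  {D : Type u} [Category.{v} D] [Preadditive D] [CategoryTheory.Linear k D]
  [HasZeroObject D] [HasShift D ℤ] [∀ n : ℤ, (shiftFunctor D n).Additive]
  [Pretriangulated D] [HasFiniteBiproducts D]
  {ω ω₀ ω₁ : ℤ} {col : V → ZMod 2}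

/-- `ω_u` for `u ∈ ℤ/2`. -/
def ωsel (ω₀ ω₁ : ℤ) (u : ZMod 2) : ℤ := if u = 0 then ω₀ else ω₁

/-- The object `⊕_{j} P_j^{x_j}` attached to a multiplicity function `x : V → ℕ`. -/
noncomputable def objOf (C : Config k V G D ω ω₀ ω₁ col) (x : V → ℕ) : D :=
  biproduct (fun p : (Σ j : V, Fin (x j)) => C.P p.1)

/-- A two-term object: an object `X` fitting into a distinguished triangle
`X[−1] --β--> ⊕_{j∈V^u} P_j^{x_j}[−ω_u] --φ--> ⊕_{l∈V^{u+1}} P_l^{y_l} --α--> X`. -/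
structure TwoTerm (C : Config k V G D ω ω₀ ω₁ col) : Type (max u v) where
  u : ZMod 2
  x : V → ℕ
  y : V → ℕ
  hx : ∀ j : V, x j ≠ 0 → col j = u
  hy : ∀ j : V, y j ≠ 0 → col j = u + 1
  X : D
  φ : (objOf C x)⟦-(ωsel ω₀ ω₁ u)⟧ ⟶ objOf C y
  α : objOf C y ⟶ X
  β : X⟦(-1 : ℤ)⟧ ⟶ (objOf C x)⟦-(ωsel ω₀ ω₁ u)⟧
  tri : Triangle.mk φ α ((shiftEquiv D (1 : ℤ)).counitIso.inv.app X ≫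
          (shiftFunctor D (1 : ℤ)).map β) ∈ distTriang D

/-- `X` is right-proper: `f ∘ φ_X ≠ 0` for every split epimorphism
`f : ⊕ P_l^{y_l} → P_l`. -/
def RightProper {C : Config k V G D ω ω₀ ω₁ col} (T : TwoTerm C) : Prop :=
  ∀ l : V, col l = T.u + 1 → ∀ f : objOf C T.y ⟶ C.P l, IsSplitEpi f → T.φ ≫ f ≠ 0

/-- `X` is left-proper: `φ_X ∘ g[−ω_u] ≠ 0` for every split monomorphism
`g : P_l → ⊕ P_j^{x_j}`. -/
def LeftProper {C : Config k V G D ω ω₀ ω₁ col} (T : TwoTerm C) : Prop :=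
  ∀ l : V, col l = T.u → ∀ g : C.P l ⟶ objOf C T.x, IsSplitMono g →
    (shiftFunctor D (-(ωsel ω₀ ω₁ T.u))).map g ≫ T.φ ≠ 0

/-- `f : X ⟶ Y[ω]` is a right socle morphism. -/
def IsRightSocle {C : Config k V G D ω ω₀ ω₁ col} (X Y : TwoTerm C)
    (f : X.X ⟶ (Y.X)⟦ω⟧) : Prop :=
  ∃ f' : X.X ⟶ (objOf C Y.y)⟦ω⟧,
    f = f' ≫ (shiftFunctor D ω).map Y.α ∧
    ∀ l : V, col l = Y.u + 1 → ∀ g : objOf C Y.y ⟶ C.P l, IsSplitEpi g →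
      ¬ IsSplitEpi (X.α ≫ f' ≫ (shiftFunctor D ω).map g)


/-! ### Splitting biproducts -/

set_option linter.unusedSectionVars false

/-- If `f : W ⊞ Q ⟶ Q` restricts to an isomorphism on `Q`, then `(fst, f)` is an
automorphism of `W ⊞ Q`; hence any `f : Y ⟶ Q` that is invertible on the summand `Q` can be
made the projection of a splitting `Y ≅ W ⊞ Q`. -/
lemma exists_iso_snd_eq {Y W Q : D} (e : Y ≅ W ⊞ Q) (f : Y ⟶ Q)
    (hf : IsIso (biprod.inr ≫ e.inv ≫ f)) :
    ∃ e' : Y ≅ W ⊞ Q, e'.hom ≫ biprod.snd = f := by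
  let r := biprod.inr ≫ e.inv ≫ f
  have hr : (biprod.snd : W ⊞ Q ⟶ Q) ≫ r = e.inv ≫ f - biprod.fst ≫ biprod.inl ≫ e.inv ≫ f := by
    rw [eq_sub_iff_add_eq, add_comm]
    have := congrArg (fun g => g ≫ e.inv ≫ f) (biprod.total (X := W) (Y := Q))
    simpa only [r, Preadditive.add_comp, Category.assoc, Category.id_comp] using this
  let a : W ⊞ Q ⟶ W ⊞ Q := biprod.lift biprod.fst (e.inv ≫ f)
  let b : W ⊞ Q ⟶ W ⊞ Q :=
    biprod.lift biprod.fst ((biprod.snd - biprod.fst ≫ biprod.inl ≫ e.inv ≫ f) ≫ inv r)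
  have hab : a ≫ b = 𝟙 _ := by
    apply biprod.hom_ext
    · simp [a, b]
    · have h1 : a ≫ b ≫ biprod.snd =
          (e.inv ≫ f - biprod.fst ≫ biprod.inl ≫ e.inv ≫ f) ≫ inv r := by
        simp [a, b]
      rw [Category.assoc, h1, ← hr]
      simp
  have hba : b ≫ a = 𝟙 _ := by
    apply biprod.hom_ext
    · simp [a, b]
    · have h2 : e.inv ≫ f = biprod.fst ≫ biprod.inl ≫ e.inv ≫ f + biprod.snd ≫ r := by
        rw [hr]; abel
      have h3 : b ≫ biprod.snd =
        (biprod.snd - biprod.fst ≫ biprod.inl ≫ e.inv ≫ f) ≫ inv r := by simp [b]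
      have h4 : b ≫ biprod.fst = biprod.fst := by simp [b]
      have h5 : b ≫ a ≫ biprod.snd = b ≫ (e.inv ≫ f) := by simp [a]
      rw [Category.assoc, h5, h2, Preadditive.comp_add, reassoc_of% h4, reassoc_of% h3]
      simp
  refine ⟨e ≪≫ ⟨a, b, hab, hba⟩, ?_⟩
  simp [a]

/-- The biproduct over `I` splits off its `p`-th summand, with the inclusion of that summand
given by the coprojection. -/
lemma exists_iso_split {I : Type} [Finite I] (F : I → D) (p : I) :
    ∃ e : (⨁ F) ≅ (⨁ fun q : {q : I // q ≠ p} => F q) ⊞ F p,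
      biprod.inr ≫ e.inv = biproduct.ι F p := by
  classical
  refine ⟨⟨biprod.lift (biproduct.lift fun q => biproduct.π F q.1) (biproduct.π F p),
    biprod.desc (biproduct.desc fun q => biproduct.ι F q.1) (biproduct.ι F p), ?_, ?_⟩, ?_⟩
  · apply biproduct.hom_ext'
    intro i
    by_cases h : i = p
    · subst h
      have h1 : biproduct.ι F i ≫ biproduct.lift (fun q : {q : I // q ≠ i} => biproduct.π F q.1)
          = 0 := by
        apply biproduct.hom_ext
        intro q
        simp [biproduct.ι_π_ne F (Ne.symm q.2)]
      simp [biprod.lift_desc, reassoc_of% h1]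
    · have h1 : biproduct.ι F i ≫ biproduct.lift (fun q : {q : I // q ≠ p} => biproduct.π F q.1)
          = biproduct.ι (fun q : {q : I // q ≠ p} => F q) ⟨i, h⟩ := by
        apply biproduct.hom_ext
        intro q
        by_cases hq : q = ⟨i, h⟩
        · subst hq; simp
        · have : i ≠ q.1 := fun h' => hq (Subtype.ext h'.symm)
          simp [biproduct.ι_π_ne F this, biproduct.ι_π_ne _ (Ne.symm hq)]
      simp [biprod.lift_desc, reassoc_of% h1, biproduct.ι_π_ne_assoc F h]
  · apply biprod.hom_ext'
    · apply biproduct.hom_ext'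
      intro q
      apply biprod.hom_ext
      · apply biproduct.hom_ext
        intro q'
        by_cases hq : q = q'
        · subst hq; simp
        · have : q.1 ≠ q'.1 := fun h' => hq (Subtype.ext h')
          simp [biproduct.ι_π_ne F this, biproduct.ι_π_ne _ hq]
      · simp [biproduct.ι_π_ne F q.2]
    · apply biprod.hom_ext
      · apply biproduct.hom_ext
        intro q'
        simp [biproduct.ι_π_ne F (Ne.symm q'.2)]
      · simp
  · simp

/-! ### Sums of the spherical objects of one colour -/

/-- `Y` is a finite direct sum of objects `P l` with `l` of colour `w`, indexed by an
arbitrary finite type rather than by multiplicities. -/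
def IsSumOfColour (C : Config k V G D ω ω₀ ω₁ col) (w : ZMod 2) (Y : D) : Prop :=
  ∃ (I : Type) (_ : Finite I) (c : I → V), (∀ i, col (c i) = w) ∧
    Nonempty (Y ≅ ⨁ fun i => C.P (c i))

/-- Passing from an index type to multiplicities: the multiplicity of `j` is the size of the
fibre of the labelling over `j`. -/
lemma IsSumOfColour.exists_objOf {C : Config k V G D ω ω₀ ω₁ col} {w : ZMod 2} {Y : D}
    (h : IsSumOfColour C w Y) :
    ∃ y : V → ℕ, (∀ j, y j ≠ 0 → col j = w) ∧ Nonempty (Y ≅ objOf C y) := by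
  obtain ⟨I, _, c, hc, ⟨e⟩⟩ := h
  refine ⟨fun j => Nat.card {i // c i = j}, ?_, ⟨e ≪≫ ?_⟩⟩
  · intro j hj
    obtain ⟨⟨i, hi⟩⟩ := (Nat.card_ne_zero.1 hj).1
    exact hi ▸ hc i
  · let E : (Σ j, Fin (Nat.card {i // c i = j})) ≃ I :=
      (Equiv.sigmaCongrRight fun j => (Finite.equivFin {i // c i = j}).symm).trans
        (Equiv.sigmaFiberEquiv c)
    exact (biproduct.whiskerEquiv E fun p => eqToIso (congrArg C.P
      ((Finite.equivFin {i // c i = p.1}).symm p.2).2)).symm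

lemma IsSumOfColour.add_summand {C : Config k V G D ω ω₀ ω₁ col} {w : ZMod 2} {Z : D}
    (h : IsSumOfColour C w Z) {l : V} (hl : col l = w) : IsSumOfColour C w (Z ⊞ C.P l) := by
  obtain ⟨I, _, c, hc, ⟨e⟩⟩ := h
  obtain ⟨e', -⟩ := exists_iso_split (fun o : Option I => C.P (o.elim l c)) none
  let E : I ≃ {q : Option I // q ≠ none} := (Equiv.optionIsSomeEquiv I).symm.trans
    (Equiv.subtypeEquivRight fun q => by simp [Option.isSome_iff_ne_none])
  let e₁ : (⨁ fun i => C.P (c i)) ≅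
      ⨁ fun q : {q : Option I // q ≠ none} => C.P (q.1.elim l c) :=
    biproduct.whiskerEquiv (f := fun i => C.P (c i))
      (g := fun q : {q : Option I // q ≠ none} => C.P (q.1.elim l c)) E
      fun i => Iso.refl (C.P (c i))
  refine ⟨Option I, inferInstance, fun o => o.elim l c, ?_,
    ⟨biprod.mapIso (e ≪≫ e₁) (Iso.refl _) ≪≫ e'.symm⟩⟩
  rintro (_ | i)
  · exact hl
  · exact hc i

/-! ### Locality of the endomorphism rings -/

/-- The endomorphism ring of a spherical object is local: the maximal ideal is `0` for `ω ≠ 0`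
and `k·t` for `ω = 0`. Only its stability under precomposition is recorded. -/
lemma exists_radical (C : Config k V G D ω ω₀ ω₁ col) (l : V) :
    ∃ N : Submodule k (C.P l ⟶ C.P l), 𝟙 (C.P l) ∉ N ∧ (∀ g, g ∉ N → IsIso g) ∧
      ∀ g h : C.P l ⟶ C.P l, h ∈ N → g ≫ h ∈ N := by
  by_cases hω : ω = 0
  · obtain ⟨t, ht, hspan, hind⟩ := C.endo_zero hω l
    refine ⟨Submodule.span k {t}, ?_, ?_, ?_⟩
    · rw [Submodule.mem_span_singleton]
      rintro ⟨b, hb⟩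
      have := hind 1 (-b) (by rw [one_smul, neg_smul, hb, add_neg_cancel])
      exact one_ne_zero this.1
    · intro g hg
      obtain ⟨a, b, rfl⟩ := hspan g
      have ha : a ≠ 0 := by
        rintro rfl
        exact hg (by simpa using Submodule.smul_mem _ b (Submodule.mem_span_singleton_self t))
      -- `(a + b t)⁻¹ = a⁻¹ - a⁻² b t` because `t ^ 2 = 0`
      refine ⟨a⁻¹ • 𝟙 _ - (a⁻¹ * a⁻¹ * b) • t, ?_, ?_⟩
      · have h : (a • 𝟙 (C.P l) + b • t) ≫ (a⁻¹ • 𝟙 _ - (a⁻¹ * a⁻¹ * b) • t) =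
            (a * a⁻¹) • 𝟙 _ + (b * a⁻¹ - a * (a⁻¹ * a⁻¹ * b)) • t := by
          simp only [Preadditive.add_comp, Preadditive.comp_sub, Linear.smul_comp,
            Linear.comp_smul, Category.id_comp, Category.comp_id, ht]
          module
        rw [h, mul_inv_cancel₀ ha, show b * a⁻¹ - a * (a⁻¹ * a⁻¹ * b) = 0 by field_simp; ring,
          one_smul, zero_smul, add_zero]
      · have h : (a⁻¹ • 𝟙 _ - (a⁻¹ * a⁻¹ * b) • t) ≫ (a • 𝟙 (C.P l) + b • t) =
            (a * a⁻¹) • 𝟙 _ + (b * a⁻¹ - a * (a⁻¹ * a⁻¹ * b)) • t := by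
          simp only [Preadditive.comp_add, Preadditive.sub_comp, Linear.smul_comp,
            Linear.comp_smul, Category.id_comp, Category.comp_id, ht]
          module
        rw [h, mul_inv_cancel₀ ha, show b * a⁻¹ - a * (a⁻¹ * a⁻¹ * b) = 0 by field_simp; ring,
          one_smul, zero_smul, add_zero]
    · intro g h hh
      obtain ⟨b', rfl⟩ := Submodule.mem_span_singleton.1 hh
      obtain ⟨a, b, rfl⟩ := hspan g
      rw [Submodule.mem_span_singleton]
      refine ⟨b' * a, ?_⟩
      simp [ht, smul_smul]
  · obtain ⟨hspan, -⟩ := C.endo_ne hω l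
    refine ⟨⊥, by simpa using C.id_ne l, ?_, ?_⟩
    · intro g hg
      obtain ⟨a, rfl⟩ := hspan g
      have ha : a ≠ 0 := by
        rintro rfl
        exact hg (by simp)
      exact ⟨a⁻¹ • 𝟙 _, by simp [smul_smul, ha], by simp [smul_smul, ha]⟩
    · intro g h hh
      rw [Submodule.mem_bot] at hh ⊢
      rw [hh, comp_zero]

/-- There are no nonzero degree-zero morphisms between distinct `P i`, `P j` of the same
colour. -/
lemma hom_eq_zero_of_col (C : Config k V G D ω ω₀ ω₁ col) {i j : V} (hij : i ≠ j)
    (hcol : col i = col j) (f : C.P i ⟶ C.P j) : f = 0 := by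
  have hadj : ¬ G.Adj i j := fun h => by
    have := C.bipartite i j h
    rw [hcol] at this
    exact one_ne_zero (left_eq_add.1 this)
  have := C.nonadj i j hij hadj 0 (f ≫ (shiftFunctorZero D ℤ).inv.app _)
  rwa [Preadditive.IsIso.comp_right_eq_zero] at this

/-- A split epimorphism from a sum of objects of one colour onto some `P l` of that colour is
invertible on one of the summands. -/
lemma exists_isIso_component (C : Config k V G D ω ω₀ ω₁ col) {w : ZMod 2} {I : Type} [Finite I]
    (c : I → V) (hc : ∀ i, col (c i) = w) {l : V} (hl : col l = w)
    (f : (⨁ fun i => C.P (c i)) ⟶ C.P l) (hf : IsSplitEpi f) :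
    ∃ p, c p = l ∧ IsIso (biproduct.ι (fun i => C.P (c i)) p ≫ f) := by
  classical
  have := Fintype.ofFinite I
  obtain ⟨N, h1, hiso, hideal⟩ := exists_radical C l
  by_contra! hno
  apply h1
  have key : 𝟙 (C.P l) = ∑ p, (section_ f ≫ biproduct.π _ p) ≫
      (biproduct.ι (fun i => C.P (c i)) p ≫ f) := by
    have := congrArg (fun g => section_ f ≫ g ≫ f)
      (biproduct.total (f := fun i => C.P (c i)))
    simpa only [Preadditive.sum_comp, Preadditive.comp_sum, Category.assoc, Category.id_comp,
      IsSplitEpi.id] using this.symm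
  rw [key]
  refine Submodule.sum_mem _ fun p _ => ?_
  by_cases hp : c p = l
  · subst hp
    refine hideal _ _ ?_
    by_contra hmem
    exact hno p rfl (hiso _ hmem)
  · rw [hom_eq_zero_of_col C hp ((hc p).trans hl.symm)
      (biproduct.ι (fun i => C.P (c i)) p ≫ f), comp_zero]
    exact zero_mem _

/-! ### The splitting of the target of `φ` -/

/-- `φ : A ⟶ Y` is not killed by any split epimorphism from `Y` onto some `P l` of
colour `w`. -/
def ProperMap (C : Config k V G D ω ω₀ ω₁ col) (w : ZMod 2) {A Y : D} (φ : A ⟶ Y) : Prop :=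
  ∀ l : V, col l = w → ∀ f : Y ⟶ C.P l, IsSplitEpi f → φ ≫ f ≠ 0

lemma ProperMap.comp_iso {C : Config k V G D ω ω₀ ω₁ col} {w : ZMod 2} {A Y Y' : D} {φ : A ⟶ Y}
    (h : ProperMap C w φ) (e : Y ≅ Y') : ProperMap C w (φ ≫ e.hom) := by
  intro l hl f hf h0
  exact h l hl (e.hom ≫ f) inferInstance (by simpa using h0)

/-- Splitting off summands one at a time, by induction on their number. -/
lemma exists_proper_splitting (C : Config k V G D ω ω₀ ω₁ col) (w : ZMod 2) {A : D} (n : ℕ) :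
    ∀ (I : Type) [Finite I] (c : I → V), Nat.card I = n → (∀ i, col (c i) = w) →
      ∀ φ : A ⟶ ⨁ fun i => C.P (c i), ∃ Y' Z : D, IsSumOfColour C w Y' ∧ IsSumOfColour C w Z ∧
        ∃ e : (⨁ fun i => C.P (c i)) ≅ Y' ⊞ Z, φ ≫ e.hom ≫ biprod.snd = 0 ∧
          ProperMap C w (φ ≫ e.hom ≫ biprod.fst) := by
  induction n with
  | zero =>
    intro I _ c hcard hc φ
    have : IsEmpty I := by
      rcases Nat.card_eq_zero.1 hcard with h | h
      · exact h
      · exact absurd ‹Finite I› (not_finite_iff_infinite.2 h)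
    -- the target is a zero object, which admits no split epimorphism onto `P l`
    have h0 : 𝟙 (⨁ fun i => C.P (c i)) = 0 := biproduct.hom_ext _ _ fun i => isEmptyElim i
    refine ⟨_, _, ⟨I, inferInstance, c, hc, ⟨Iso.refl _⟩⟩, ⟨I, inferInstance, c, hc, ⟨Iso.refl _⟩⟩,
      ⟨biprod.inl, biprod.fst, by simp, ?_⟩, by simp, ?_⟩
    · have hz : ∀ {X : D} (g : X ⟶ ⨁ fun i => C.P (c i)), g = 0 := fun g => by
        rw [← Category.comp_id g, h0, comp_zero]
      exact biprod.hom_ext _ _ (by rw [hz (_ ≫ _), hz (_ ≫ _)]) (by rw [hz (_ ≫ _), hz (_ ≫ _)])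
    · intro l hl f hf _
      apply C.id_ne l
      have hf0 : f = 0 := by rw [← Category.id_comp f, h0, zero_comp]
      rw [← IsSplitEpi.id f]
      exact (congrArg (fun g => section_ f ≫ g) hf0).trans comp_zero
  | succ n ih =>
    intro I _ c hcard hc φ
    by_cases hφ : ProperMap C w φ
    · have hZ : IsSumOfColour C w (⨁ fun i : Empty => C.P (i.elim : V)) :=
        ⟨Empty, inferInstance, fun i => i.elim, fun i => i.elim, ⟨Iso.refl _⟩⟩
      have h0 : 𝟙 (⨁ fun i : Empty => C.P (i.elim : V)) = 0 :=
        biproduct.hom_ext _ _ fun i => i.elim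
      refine ⟨_, _, ⟨I, inferInstance, c, hc, ⟨Iso.refl _⟩⟩, hZ,
        ⟨biprod.inl, biprod.fst, by simp, ?_⟩, by simp, by simpa using hφ⟩
      have hz : ∀ {X : D} (g : X ⟶ ⨁ fun i : Empty => C.P (i.elim : V)), g = 0 := fun g => by
        rw [← Category.comp_id g, h0, comp_zero]
      exact biprod.hom_ext _ _ (by simp) (by rw [hz (_ ≫ _), hz (_ ≫ _)])
    · simp only [ProperMap, not_forall, not_not] at hφ
      obtain ⟨l, hl, f, hf, hφf⟩ := hφ
      obtain ⟨p, rfl, hp⟩ := exists_isIso_component C c hc hl f hf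
      obtain ⟨e₀, he₀⟩ := exists_iso_split (fun i => C.P (c i)) p
      obtain ⟨e₁, he₁⟩ := exists_iso_snd_eq e₀ f (by rwa [reassoc_of% he₀])
      have hcard' : Nat.card {q : I // q ≠ p} = n := by
        classical
        have := Fintype.ofFinite I
        rw [Nat.card_eq_fintype_card] at hcard ⊢
        rw [Fintype.card_subtype_compl, hcard]
        simp
      obtain ⟨Y', Z, hY', hZ, e₂, h₂, hproper⟩ := ih {q : I // q ≠ p} (fun q => c q) hcard'
        (fun q => hc q) (φ ≫ e₁.hom ≫ biprod.fst)
      refine ⟨Y', Z ⊞ C.P (c p), hY', hZ.add_summand hl,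
        e₁ ≪≫ biprod.mapIso e₂ (Iso.refl _) ≪≫ biprod.associator _ _ _, ?_, ?_⟩
      · apply biprod.hom_ext
        · simpa [biprod.associator] using h₂
        · simpa [biprod.associator, he₁] using hφf
      · simpa [biprod.associator] using hproper

/-! ### Cones of split morphisms -/

/-- A product over `WalkingPair` is the binary biproduct, compatibly with the projections. -/
lemma exists_prod_iso (F : WalkingPair → D) :
    ∃ e : (∏ᶜ F) ≅ F .left ⊞ F .right, e.hom ≫ biprod.fst = Pi.π F .left ∧
      e.hom ≫ biprod.snd = Pi.π F .right := by
  refine ⟨⟨biprod.lift (Pi.π F .left) (Pi.π F .right),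
    Pi.lift fun j => match j with | .left => biprod.fst | .right => biprod.snd, ?_, ?_⟩, ?_, ?_⟩
  · apply Pi.hom_ext
    rintro (_ | _) <;> simp
  · apply biprod.hom_ext <;> simp
  · simp
  · simp

/-- The direct sum of two distinguished triangles, with its first map in the form of
`biprod.map`. -/
lemma exists_biprod_triangle (T : WalkingPair → Triangle D) (hT : ∀ j, T j ∈ distTriang D) :
    ∃ (α : (T .left).obj₂ ⊞ (T .right).obj₂ ⟶ (T .left).obj₃ ⊞ (T .right).obj₃)
      (δ : (T .left).obj₃ ⊞ (T .right).obj₃ ⟶ ((T .left).obj₁ ⊞ (T .right).obj₁)⟦(1 : ℤ)⟧),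
      Triangle.mk (biprod.map (T .left).mor₁ (T .right).mor₁) α δ ∈ distTriang D := by
  obtain ⟨e₁, h₁l, h₁r⟩ := exists_prod_iso fun j => (T j).obj₁
  obtain ⟨e₂, h₂l, h₂r⟩ := exists_prod_iso fun j => (T j).obj₂
  obtain ⟨e₃, -, -⟩ := exists_prod_iso fun j => (T j).obj₃
  obtain ⟨p₁, p₂, p₃, hp, k₁⟩ : ∃ (p₁ : (∏ᶜ fun j => (T j).obj₁) ⟶ ∏ᶜ fun j => (T j).obj₂)
      (p₂ : (∏ᶜ fun j => (T j).obj₂) ⟶ ∏ᶜ fun j => (T j).obj₃)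
      (p₃ : (∏ᶜ fun j => (T j).obj₃) ⟶ (∏ᶜ fun j => (T j).obj₁)⟦(1 : ℤ)⟧),
      Triangle.mk p₁ p₂ p₃ ∈ distTriang D ∧ ∀ j, p₁ ≫ Pi.π (fun j => (T j).obj₂) j =
        Pi.π (fun j => (T j).obj₁) j ≫ (T j).mor₁ :=
    ⟨_, _, _, productTriangle_distinguished T hT, fun j => (productTriangle.π T j).comm₁⟩
  have comm : e₁.hom ≫ biprod.map (T .left).mor₁ (T .right).mor₁ = p₁ ≫ e₂.hom := by
    apply biprod.hom_ext
    · rw [Category.assoc, Category.assoc, biprod.map_fst, reassoc_of% h₁l, h₂l, k₁]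
    · rw [Category.assoc, Category.assoc, biprod.map_snd, reassoc_of% h₁r, h₂r, k₁]
  refine ⟨e₂.inv ≫ p₂ ≫ e₃.hom, e₃.inv ≫ p₃ ≫ (shiftFunctor D (1 : ℤ)).map e₁.hom, ?_⟩
  refine isomorphic_distinguished _ hp _ ?_
  refine Triangle.isoMk _ _ e₁.symm e₂.symm e₃.symm ?_ ?_ ?_
  · change biprod.map _ _ ≫ e₂.inv = e₁.inv ≫ p₁
    rw [Iso.comp_inv_eq, Category.assoc, ← comm, e₁.inv_hom_id_assoc]
  · change (e₂.inv ≫ p₂ ≫ e₃.hom) ≫ e₃.inv = e₂.inv ≫ p₂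
    simp
  · change (e₃.inv ≫ p₃ ≫ (shiftFunctor D (1 : ℤ)).map e₁.hom) ≫ (shiftFunctor D (1 : ℤ)).map e₁.inv = e₃.inv ≫ p₃
    simp [← Functor.map_comp]

open scoped ZeroObject in
/-- The cone of `A ⟶ Y ≅ Y' ⊞ Z` with vanishing `Z`-component is the sum of the cone of
`A ⟶ Y'` and `Z`, by taking the sum with the triangle `0 ⟶ Z ⟶ Z ⟶ 0`. -/
lemma exists_cone_iso {A Y X Y' Z X' : D} {φ : A ⟶ Y} {α : Y ⟶ X} {δ : X ⟶ A⟦(1 : ℤ)⟧}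
    (h : Triangle.mk φ α δ ∈ distTriang D) {φ' : A ⟶ Y'} {α' : Y' ⟶ X'} {δ' : X' ⟶ A⟦(1 : ℤ)⟧}
    (h' : Triangle.mk φ' α' δ' ∈ distTriang D) (e : Y ≅ Y' ⊞ Z)
    (h₁ : φ ≫ e.hom ≫ biprod.fst = φ') (h₂ : φ ≫ e.hom ≫ biprod.snd = 0) :
    Nonempty (X ≅ X' ⊞ Z) := by
  obtain ⟨α₁, δ₁, hsum⟩ : ∃ (α₁ : Y' ⊞ Z ⟶ X' ⊞ Z) (δ₁ : X' ⊞ Z ⟶ (A ⊞ (0 : D))⟦(1 : ℤ)⟧),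
      Triangle.mk (biprod.map φ' (0 : 0 ⟶ Z)) α₁ δ₁ ∈ distTriang D :=
    exists_biprod_triangle (fun j => match j with
      | .left => Triangle.mk φ' α' δ'
      | .right => Triangle.mk (0 : 0 ⟶ Z) (𝟙 Z) 0) (by
        rintro (_ | _)
        · exact h'
        · exact contractible_distinguished₁ Z)
  let i₁ : A ≅ A ⊞ (0 : D) := ⟨biprod.inl, biprod.fst, by simp,
    biprod.hom_ext _ _ (by simp) ((isZero_zero D).eq_of_tgt _ _)⟩
  have comm : φ ≫ e.hom = i₁.hom ≫ biprod.map φ' (0 : 0 ⟶ Z) := by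
    apply biprod.hom_ext
    · simp [i₁, h₁]
    · simp [h₂]
  exact ⟨Triangle.π₃.mapIso (isoTriangleOfIso₁₂ _ _ h hsum i₁ e comm)⟩

theorem statement9 (hADE : IsADE G) (C : Config k V G D ω ω₀ ω₁ col) (T : TwoTerm C) :
    ∃ T' : TwoTerm C, T'.u = T.u ∧ RightProper T' ∧
      ∃ z : V → ℕ, (∀ j : V, z j ≠ 0 → col j = T.u + 1) ∧
        Nonempty (T.X ≅ (T'.X ⊞ objOf C z)) := by
  classical
  obtain ⟨Y', Z, hY', hZ, e, h0, hproper⟩ : ∃ Y' Z : D, IsSumOfColour C (T.u + 1) Y' ∧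
      IsSumOfColour C (T.u + 1) Z ∧ ∃ e : objOf C T.y ≅ Y' ⊞ Z,
        T.φ ≫ e.hom ≫ biprod.snd = 0 ∧ ProperMap C (T.u + 1) (T.φ ≫ e.hom ≫ biprod.fst) :=
    exists_proper_splitting C (T.u + 1)
    (Nat.card (Σ j : V, Fin (T.y j))) (Σ j : V, Fin (T.y j)) (fun p => p.1) rfl
    (fun p => T.hy p.1 (fun h => by have := p.2.2; omega)) T.φ
  obtain ⟨y', hy', ⟨ey⟩⟩ := hY'.exists_objOf
  obtain ⟨z, hz, ⟨ez⟩⟩ := hZ.exists_objOf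
  obtain ⟨X', α', δ', htri⟩ := distinguished_cocone_triangle
    ((T.φ ≫ e.hom ≫ biprod.fst) ≫ ey.hom)
  -- the connecting map `X' ⟶ A[1]` desuspends because the shift is fully faithful
  let β' : X'⟦(-1 : ℤ)⟧ ⟶ (objOf C T.x)⟦-(ωsel ω₀ ω₁ T.u)⟧ :=
    (shiftFunctor D (1 : ℤ)).preimage ((shiftEquiv D (1 : ℤ)).counitIso.hom.app X' ≫ δ')
  have hβ : (shiftEquiv D (1 : ℤ)).counitIso.inv.app X' ≫ (shiftFunctor D (1 : ℤ)).map β' = δ' := by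
    have h : (shiftFunctor D (1 : ℤ)).map β' =
        (shiftEquiv D (1 : ℤ)).counitIso.hom.app X' ≫ δ' := Functor.map_preimage _ _
    exact (congrArg (fun g => (shiftEquiv D (1 : ℤ)).counitIso.inv.app X' ≫ g) h).trans <|
      (shiftEquiv D (1 : ℤ)).counitIso.inv_hom_id_app_assoc X' δ'
  refine ⟨⟨T.u, T.x, y', T.hx, hy', X', _, α', β', by rw [hβ]; exact htri⟩, rfl,
    hproper.comp_iso ey, z, hz, ?_⟩
  refine exists_cone_iso T.tri htri (e ≪≫ biprod.mapIso ey ez) ?_ ?_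
  · simp
  · simp [reassoc_of% h0]

end Statement9
end

section
/- Let X and Y be right-proper two-term objects associated to the same parameter u ∈ {0,1}, with multiplicities (x_j) and (y_j) respectively. Then every right socle morphism f : X → Y[ω] factors as f = g ∘ h where h : X → X', the object X' is a two-term object with the same parameter u satisfying rsupp(X') ⊆ rsupp(Y), and g : X' → Y[ω] is a right socle morphism. -/
/-!
Let `A[-ω_u] ⟶ B ⟶ X` be the triangle of `X`, and let `B'` be the summand of `B` made of those `P_l`
with `l ∈ rsupp(Y)`. The object `X'` is the cone of `A[-ω_u] ⟶ B ⟶ B'`; the projection `B ⟶ B'`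
extends to a morphism of triangles, whence `h : X ⟶ X'`.

If `f = f' ≫ α_Y[ω]`, then `α_X ≫ f'` kills the complement of `B'`, because there are no nonzero maps
of any degree between `P_i` and `P_j` for distinct `i`, `j` of the same colour
(`comp_projection_inclusion`). So `α_X ≫ f'` factors through `B'`, and from there through
`g' : X' ⟶ B_Y[ω]`. The difference `f' - h ≫ g'` vanishes on `B`, hence comes from
`X ⟶ A[-ω_u][1]`. As `h` is compatible with the maps to `A[-ω_u][1]`, this difference also factors
through `h`, and `g'` can be corrected by it (`exists_factorization`). The socle
condition passes to the corrected morphism because `B ⟶ B'` is a split epimorphism.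
-/

/-!
STATEMENT 10: a right socle morphism X → Y[ω] between right-proper two-term objects
factors through a two-term object X′ with rsupp(X′) ⊆ rsupp(Y) via a right socle morphism.
-/

open CategoryTheory CategoryTheory.Limits CategoryTheory.Pretriangulated

namespace Statement10

universe v u

def typeA (n : ℕ) : SimpleGraph (Fin n) :=
  SimpleGraph.fromRel (fun i j => (i : ℕ) + 1 = (j : ℕ))

def typeD (n : ℕ) : SimpleGraph (Fin n) :=
  SimpleGraph.fromRel
    (fun i j => (1 ≤ (i : ℕ) ∧ (i : ℕ) + 1 = (j : ℕ)) ∨ ((i : ℕ) = 0 ∧ (j : ℕ) = 2))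

def typeE (n : ℕ) : SimpleGraph (Fin n) :=
  SimpleGraph.fromRel
    (fun i j => (1 ≤ (i : ℕ) ∧ (i : ℕ) + 1 = (j : ℕ)) ∨ ((i : ℕ) = 0 ∧ (j : ℕ) = 3))

def IsADE {V : Type*} (G : SimpleGraph V) : Prop :=
  (∃ n : ℕ, 1 ≤ n ∧ Nonempty (G ≃g typeA n)) ∨
  (∃ n : ℕ, 4 ≤ n ∧ Nonempty (G ≃g typeD n)) ∨
  (∃ n : ℕ, (n = 6 ∨ n = 7 ∨ n = 8) ∧ Nonempty (G ≃g typeE n))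

/-- The canonical generator of the "span of the identity" inside `Hom^ω(P, P)`:
for `ω = 0` it is the identity of `P` (transported to `P ⟶ P⟦0⟧`), and for `ω ≠ 0`
it is zero (the identity has degree `0 ≠ ω`). -/
noncomputable def unitClass (D : Type u) [Category.{v} D] [Preadditive D] [HasShift D ℤ]
    (ω : ℤ) (P : D) : P ⟶ P⟦ω⟧ :=
  if h : ω = 0 then (shiftFunctorZero D ℤ).inv.app P ≫ eqToHom (by rw [h]) else 0

/-- A `Γ`-configuration `{P i}` of `ω`-spherical objects in a `k`-linear triangulated
category `D`, normalized with respect to a 2-colouring `col` of `Γ₀` and a decomposition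
`ω = ω₀ + ω₁` so that `Hom^*(P i, P j)` is concentrated in degree `ω_u` when
`col i = u` and `j` is a neighbour of `i`. -/
structure Config (k : Type) [Field k] (V : Type) [Fintype V] [DecidableEq V]
    (G : SimpleGraph V)
    (D : Type u) [Category.{v} D] [Preadditive D] [CategoryTheory.Linear k D]
    [HasZeroObject D] [HasShift D ℤ] [∀ n : ℤ, (shiftFunctor D n).Additive]
    [Pretriangulated D] [HasFiniteBiproducts D]
    (ω ω₀ ω₁ : ℤ) (col : V → ZMod 2) : Type (max u v) where
  P : V → D
  /-- spherical condition (i): `Hom^*(X, P i)` is finite dimensional for every `X` -/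
  finiteness : ∀ (i : V) (X : D),
    FiniteDimensional k (DirectSum ℤ (fun n : ℤ => X ⟶ (P i)⟦n⟧))
  id_ne : ∀ i : V, 𝟙 (P i) ≠ 0
  /-- spherical condition (ii): `Hom^n(P i, P i) = 0` unless `n ∈ {0, ω}` -/
  vanish : ∀ (i : V) (n : ℤ), n ≠ 0 → n ≠ ω → ∀ f : P i ⟶ (P i)⟦n⟧, f = 0
  /-- spherical condition (ii) for `ω = 0`: `End P i ≅ k[t]/(t²)` -/
  endo_zero : ω = 0 → ∀ i : V, ∃ t : P i ⟶ P i, t ≫ t = 0 ∧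
      (∀ f : P i ⟶ P i, ∃ a b : k, f = a • 𝟙 (P i) + b • t) ∧
      (∀ a b : k, a • 𝟙 (P i) + b • t = 0 → a = 0 ∧ b = 0)
  /-- spherical condition (ii) for `ω ≠ 0`: `Hom^0 = k·id` and `Hom^ω` is a line -/
  endo_ne : ω ≠ 0 → ∀ i : V, (∀ f : P i ⟶ P i, ∃ a : k, f = a • 𝟙 (P i)) ∧
      (∃ t : P i ⟶ (P i)⟦ω⟧, t ≠ 0 ∧ ∀ f : P i ⟶ (P i)⟦ω⟧, ∃ a : k, f = a • t)
  /-- spherical condition (iii): nondegeneracy of the composition pairing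
  `Hom^*(P i, X) × Hom^*(X, P i) → Hom^*(P i, P i)/⟨Id⟩ ≅ k` in the first variable -/
  pairing_left : ∀ (i : V) (X : D) (n : ℤ) (f : P i ⟶ X⟦n⟧), f ≠ 0 →
      ∃ g : X ⟶ (P i)⟦ω - n⟧, ¬ ∃ a : k,
        f ≫ (shiftFunctor D n).map g ≫
            (shiftFunctorAdd' D (ω - n) n ω (by ring)).inv.app (P i)
          = a • unitClass D ω (P i)
  /-- spherical condition (iii): nondegeneracy in the second variable -/
  pairing_right : ∀ (i : V) (X : D) (m : ℤ) (g : X ⟶ (P i)⟦m⟧), g ≠ 0 →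
      ∃ f : P i ⟶ X⟦ω - m⟧, ¬ ∃ a : k,
        f ≫ (shiftFunctor D (ω - m)).map g ≫
            (shiftFunctorAdd' D m (ω - m) ω (by ring)).inv.app (P i)
          = a • unitClass D ω (P i)
  /-- the 2-colouring is proper: adjacent vertices have different colours -/
  bipartite : ∀ i j : V, G.Adj i j → col j = col i + 1
  homega : ω₀ + ω₁ = ω
  /-- normalization: for `i ∈ V^u` and `j ∈ N(i)`, `Hom^*(P i, P j)` is concentrated
  in degree `ω_u` -/
  adj_conc : ∀ i j : V, G.Adj i j → ∀ n : ℤ,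
      n ≠ (if col i = 0 then ω₀ else ω₁) → ∀ f : P i ⟶ (P j)⟦n⟧, f = 0
  /-- `Hom^*(P i, P j)` is one-dimensional for adjacent `i`, `j` -/
  adj_one : ∀ i j : V, G.Adj i j →
      ∃ γ : P i ⟶ (P j)⟦if col i = 0 then ω₀ else ω₁⟧, γ ≠ 0 ∧
        ∀ f : P i ⟶ (P j)⟦if col i = 0 then ω₀ else ω₁⟧, ∃ a : k, f = a • γ
  /-- `Hom^*(P i, P j) = 0` for distinct non-adjacent `i`, `j` -/
  nonadj : ∀ i j : V, i ≠ j → ¬ G.Adj i j → ∀ (n : ℤ) (f : P i ⟶ (P j)⟦n⟧), f = 0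

variable {k : Type} [Field k] {V : Type} [Fintype V] [DecidableEq V]
  {G : SimpleGraph V} [DecidableRel G.Adj]
  {D : Type u} [Category.{v} D] [Preadditive D] [CategoryTheory.Linear k D]
  [HasZeroObject D] [HasShift D ℤ] [∀ n : ℤ, (shiftFunctor D n).Additive]
  [Pretriangulated D] [HasFiniteBiproducts D]
  {ω ω₀ ω₁ : ℤ} {col : V → ZMod 2}

/-- `ω_u` for `u ∈ ℤ/2`. -/
def ωsel (ω₀ ω₁ : ℤ) (u : ZMod 2) : ℤ := if u = 0 then ω₀ else ω₁

/-- The object `⊕_{j} P_j^{x_j}` attached to a multiplicity function `x : V → ℕ`. -/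
noncomputable def objOf (C : Config k V G D ω ω₀ ω₁ col) (x : V → ℕ) : D :=
  biproduct (fun p : (Σ j : V, Fin (x j)) => C.P p.1)

/-- A two-term object: an object `X` fitting into a distinguished triangle
`X[−1] --β--> ⊕_{j∈V^u} P_j^{x_j}[−ω_u] --φ--> ⊕_{l∈V^{u+1}} P_l^{y_l} --α--> X`. -/
structure TwoTerm (C : Config k V G D ω ω₀ ω₁ col) : Type (max u v) where
  u : ZMod 2
  x : V → ℕ
  y : V → ℕ
  hx : ∀ j : V, x j ≠ 0 → col j = u
  hy : ∀ j : V, y j ≠ 0 → col j = u + 1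
  X : D
  φ : (objOf C x)⟦-(ωsel ω₀ ω₁ u)⟧ ⟶ objOf C y
  α : objOf C y ⟶ X
  β : X⟦(-1 : ℤ)⟧ ⟶ (objOf C x)⟦-(ωsel ω₀ ω₁ u)⟧
  tri : Triangle.mk φ α ((shiftEquiv D (1 : ℤ)).counitIso.inv.app X ≫
          (shiftFunctor D (1 : ℤ)).map β) ∈ distTriang D

/-- `X` is right-proper: `f ∘ φ_X ≠ 0` for every split epimorphism
`f : ⊕ P_l^{y_l} → P_l`. -/
def RightProper {C : Config k V G D ω ω₀ ω₁ col} (T : TwoTerm C) : Prop :=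
  ∀ l : V, col l = T.u + 1 → ∀ f : objOf C T.y ⟶ C.P l, IsSplitEpi f → T.φ ≫ f ≠ 0

/-- `X` is left-proper: `φ_X ∘ g[−ω_u] ≠ 0` for every split monomorphism
`g : P_l → ⊕ P_j^{x_j}`. -/
def LeftProper {C : Config k V G D ω ω₀ ω₁ col} (T : TwoTerm C) : Prop :=
  ∀ l : V, col l = T.u → ∀ g : C.P l ⟶ objOf C T.x, IsSplitMono g →
    (shiftFunctor D (-(ωsel ω₀ ω₁ T.u))).map g ≫ T.φ ≠ 0

/-- `f : X ⟶ Y[ω]` is a right socle morphism. -/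
def IsRightSocle {C : Config k V G D ω ω₀ ω₁ col} (X Y : TwoTerm C)
    (f : X.X ⟶ (Y.X)⟦ω⟧) : Prop :=
  ∃ f' : X.X ⟶ (objOf C Y.y)⟦ω⟧,
    f = f' ≫ (shiftFunctor D ω).map Y.α ∧
    ∀ l : V, col l = Y.u + 1 → ∀ g : objOf C Y.y ⟶ C.P l, IsSplitEpi g →
      ¬ IsSplitEpi (X.α ≫ f' ≫ (shiftFunctor D ω).map g)


set_option linter.unusedSectionVars false

/-- The multiplicities of `B'`: those of `y`, restricted to the support of `z`. -/
def restrict (y z : V → ℕ) (j : V) : ℕ := if z j = 0 then 0 else y j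

theorem restrict_ne {y z : V → ℕ} {j : V} (h : restrict y z j ≠ 0) : z j ≠ 0 := by
  intro hz
  exact h (by simp [restrict, hz])

/-- A summand of `B'`, regarded as a summand of `B`. -/
abbrev restrictIdx (y z : V → ℕ) (p : Σ j : V, Fin (restrict y z j)) : Σ j : V, Fin (y j) :=
  ⟨p.1, Fin.castLE (by unfold restrict; split <;> omega) p.2⟩

theorem restrictIdx_injective (y z : V → ℕ) : Function.Injective (restrictIdx y z) := by
  rintro ⟨i, a⟩ ⟨j, b⟩ h
  obtain rfl : i = j := congrArg Sigma.fst h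
  simp only [restrictIdx, Sigma.mk.injEq, heq_eq_eq, true_and] at h
  rw [Fin.castLE_inj] at h
  rw [h]

theorem exists_restrictIdx {y z : V → ℕ} (p : Σ j : V, Fin (y j)) (hp : z p.1 ≠ 0) :
    ∃ q, restrictIdx y z q = p := by
  obtain ⟨i, a⟩ := p
  exact ⟨⟨i, Fin.cast (by simp only [restrict]; rw [if_neg hp]) a⟩, rfl⟩

/-- The inclusion of a summand of `⊕ P_j^{y_j}`. -/
noncomputable def objι (C : Config k V G D ω ω₀ ω₁ col) (y : V → ℕ) (p : Σ j : V, Fin (y j)) :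
    C.P p.1 ⟶ objOf C y :=
  biproduct.ι (fun q : (Σ j : V, Fin (y j)) => C.P q.1) p

/-- The projection to a summand of `⊕ P_j^{y_j}`. -/
noncomputable def objπ (C : Config k V G D ω ω₀ ω₁ col) (y : V → ℕ) (p : Σ j : V, Fin (y j)) :
    objOf C y ⟶ C.P p.1 :=
  biproduct.π (fun q : (Σ j : V, Fin (y j)) => C.P q.1) p

theorem objι_π_self (C : Config k V G D ω ω₀ ω₁ col) (y : V → ℕ) (p : Σ j : V, Fin (y j)) :
    objι C y p ≫ objπ C y p = 𝟙 _ :=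
  biproduct.ι_π_self _ p

theorem objι_π_ne (C : Config k V G D ω ω₀ ω₁ col) (y : V → ℕ) {p q : Σ j : V, Fin (y j)}
    (h : p ≠ q) : objι C y p ≫ objπ C y q = 0 :=
  biproduct.ι_π_ne _ h

theorem objOf_total (C : Config k V G D ω ω₀ ω₁ col) (y : V → ℕ) :
    ∑ q, objπ C y q ≫ objι C y q = 𝟙 (objOf C y) :=
  biproduct.total

theorem objOf_hom_ext (C : Config k V G D ω ω₀ ω₁ col) (y : V → ℕ) {Z : D}
    {f g : Z ⟶ objOf C y} (h : ∀ p, f ≫ objπ C y p = g ≫ objπ C y p) : f = g :=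
  biproduct.hom_ext _ _ h

theorem objOf_hom_ext' (C : Config k V G D ω ω₀ ω₁ col) (y : V → ℕ) {Z : D}
    {f g : objOf C y ⟶ Z} (h : ∀ p, objι C y p ≫ f = objι C y p ≫ g) : f = g :=
  biproduct.hom_ext' _ _ h

/-- The projection of `⊕ P_j^{y_j}` onto its summands indexed by the support of `z`. -/
noncomputable def projection (C : Config k V G D ω ω₀ ω₁ col) (y z : V → ℕ) :
    objOf C y ⟶ objOf C (restrict y z) :=
  biproduct.lift (fun p => objπ C y (restrictIdx y z p))

/-- The inclusion into `⊕ P_j^{y_j}` of its summands indexed by the support of `z`. -/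
noncomputable def inclusion (C : Config k V G D ω ω₀ ω₁ col) (y z : V → ℕ) :
    objOf C (restrict y z) ⟶ objOf C y :=
  biproduct.desc (fun p => objι C y (restrictIdx y z p))

theorem projection_π (C : Config k V G D ω ω₀ ω₁ col) (y z : V → ℕ)
    (p : Σ j : V, Fin (restrict y z j)) :
    projection C y z ≫ objπ C (restrict y z) p = objπ C y (restrictIdx y z p) :=
  biproduct.lift_π _ p

theorem ι_inclusion (C : Config k V G D ω ω₀ ω₁ col) (y z : V → ℕ)
    (p : Σ j : V, Fin (restrict y z j)) :
    objι C (restrict y z) p ≫ inclusion C y z = objι C y (restrictIdx y z p) :=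
  biproduct.ι_desc _ p

theorem inclusion_projection (C : Config k V G D ω ω₀ ω₁ col) (y z : V → ℕ) :
    inclusion C y z ≫ projection C y z = 𝟙 _ := by
  refine objOf_hom_ext' C _ fun p => objOf_hom_ext C _ fun q => ?_
  rw [Category.comp_id, ← Category.assoc, ι_inclusion, Category.assoc, projection_π]
  by_cases h : p = q
  · subst h
    rw [objι_π_self, objι_π_self]
  · rw [objι_π_ne C _ h, objι_π_ne C _ fun e => h (restrictIdx_injective y z e)]

/-- A map from `P_i` to a shift of a sum of objects `P_j` vanishes when every `j` that occurs has
the same colour as `i` but is different from `i`. -/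
theorem hom_objOf_eq_zero (C : Config k V G D ω ω₀ ω₁ col) (z : V → ℕ) (i : V)
    (hi : z i = 0) (hz : ∀ j, z j ≠ 0 → col j = col i) (n : ℤ)
    (s : C.P i ⟶ (objOf C z)⟦n⟧) : s = 0 := by
  have h1 : s = s ≫ (shiftFunctor D n).map (𝟙 (objOf C z)) := by simp
  rw [h1, ← objOf_total, Functor.map_sum, Preadditive.comp_sum]
  refine Finset.sum_eq_zero fun q _ => ?_
  have hq : z q.1 ≠ 0 := by
    have := q.2.pos
    omega
  have hne : i ≠ q.1 := by
    intro e
    rw [← e] at hq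
    exact hq hi
  have hadj : ¬ G.Adj i q.1 := by
    intro h
    have h2 := C.bipartite _ _ h
    rw [hz _ hq] at h2
    simp at h2
  rw [Functor.map_comp, ← Category.assoc,
    C.nonadj i q.1 hne hadj n (s ≫ (shiftFunctor D n).map (objπ C z q)), zero_comp]

/-- A map from `⊕ P_j^{y_j}` to a shift of `⊕ P_j^{z_j}`, all summands being of the same colour,
factors through the summands indexed by the support of `z`. -/
theorem comp_projection_inclusion (C : Config k V G D ω ω₀ ω₁ col) (y z : V → ℕ) (c : ZMod 2)
    (hy : ∀ j, y j ≠ 0 → col j = c) (hz : ∀ j, z j ≠ 0 → col j = c) (n : ℤ)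
    (s : objOf C y ⟶ (objOf C z)⟦n⟧) :
    projection C y z ≫ inclusion C y z ≫ s = s := by
  refine objOf_hom_ext' C _ fun p => ?_
  by_cases hp : z p.1 = 0
  · have hpy : y p.1 ≠ 0 := by
      have := p.2.pos
      omega
    have hc : ∀ j, z j ≠ 0 → col j = col p.1 := fun j hj => by rw [hz j hj, hy _ hpy]
    exact (hom_objOf_eq_zero C z p.1 hp hc n _).trans (hom_objOf_eq_zero C z p.1 hp hc n _).symm
  · obtain ⟨q, rfl⟩ := exists_restrictIdx p hp
    have h : objι C y (restrictIdx y z q) ≫ projection C y z ≫ inclusion C y z =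
        objι C y (restrictIdx y z q) := by
      rw [← ι_inclusion, Category.assoc, ← Category.assoc (inclusion C y z),
        inclusion_projection, Category.id_comp]
    rw [← Category.assoc (projection C y z), ← Category.assoc, h]

/-- Every morphism `Z ⟶ A⟦1⟧` is the third map of a triangle written in terms of a morphism
`Z⟦-1⟧ ⟶ A`, as in the structure `TwoTerm`. -/
theorem exists_desuspension {Z A : D} (b : Z ⟶ A⟦(1 : ℤ)⟧) :
    ∃ β : Z⟦(-1 : ℤ)⟧ ⟶ A, (shiftEquiv D (1 : ℤ)).counitIso.inv.app Z ≫
      (shiftFunctor D (1 : ℤ)).map β = b := by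
  obtain ⟨β, hβ⟩ := (shiftFunctor D (1 : ℤ)).map_surjective
    ((shiftEquiv D (1 : ℤ)).counitIso.hom.app Z ≫ b)
  refine ⟨β, ?_⟩
  refine (congrArg (fun t => (shiftEquiv D (1 : ℤ)).counitIso.inv.app Z ≫ t) hβ).trans ?_
  exact Iso.inv_hom_id_app_assoc _ _ _

/-- Let `A ⟶ B ⟶ X` and `A ⟶ B' ⟶ Z` be distinguished, the second with first map `φ ≫ pr`. A map
`f' : X ⟶ W` whose restriction to `B` factors through `pr` as `pr ≫ s` factors through a map
`X ⟶ Z`, with second factor extending `s`. -/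
theorem exists_factorization {A B B' X Z W : D} {φ : A ⟶ B} {α : B ⟶ X} {γ : X ⟶ A⟦(1 : ℤ)⟧}
    (hT : Triangle.mk φ α γ ∈ distTriang D) {pr : B ⟶ B'} {a : B' ⟶ Z} {b : Z ⟶ A⟦(1 : ℤ)⟧}
    (hZ : Triangle.mk (φ ≫ pr) a b ∈ distTriang D) (f' : X ⟶ W) (s : B' ⟶ W)
    (hs : pr ≫ s = α ≫ f') :
    ∃ (h : X ⟶ Z) (g : Z ⟶ W), f' = h ≫ g ∧ a ≫ g = s := by
  obtain ⟨h, h1, h2⟩ : ∃ h : X ⟶ Z, α ≫ h = pr ≫ a ∧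
      γ ≫ (shiftFunctor D (1 : ℤ)).map (𝟙 A) = h ≫ b :=
    complete_distinguished_triangle_morphism _ _ hT hZ (𝟙 A) pr (Category.id_comp _).symm
  rw [CategoryTheory.Functor.map_id, Category.comp_id] at h2
  have hφα : φ ≫ α = 0 := comp_distTriang_mor_zero₁₂ _ hT
  have hab : a ≫ b = 0 := comp_distTriang_mor_zero₂₃ _ hZ
  have hzero : (φ ≫ pr) ≫ s = 0 := by
    rw [Category.assoc, hs, ← Category.assoc, hφα, zero_comp]
  obtain ⟨g', hg'⟩ : ∃ g' : Z ⟶ W, s = a ≫ g' := Triangle.yoneda_exact₂ _ hZ s hzero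
  have hdiff : α ≫ (f' - h ≫ g') = 0 := by
    rw [Preadditive.comp_sub, ← Category.assoc α h, h1, Category.assoc, ← hg', hs, sub_self]
  obtain ⟨δ, hδ⟩ : ∃ δ : A⟦(1 : ℤ)⟧ ⟶ W, f' - h ≫ g' = γ ≫ δ :=
    Triangle.yoneda_exact₃ _ hT _ hdiff
  refine ⟨h, g' + b ≫ δ, ?_, ?_⟩
  · rw [Preadditive.comp_add, ← Category.assoc h b, ← h2, ← hδ]
    abel
  · rw [Preadditive.comp_add, ← Category.assoc a b, hab, zero_comp, add_zero, ← hg']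

theorem statement10 (hADE : IsADE G) (C : Config k V G D ω ω₀ ω₁ col)
    (X Y : TwoTerm C) (hu : X.u = Y.u)
    (hX : RightProper X) (hY : RightProper Y)
    (f : X.X ⟶ (Y.X)⟦ω⟧) (hf : IsRightSocle X Y f) :
    ∃ X' : TwoTerm C, X'.u = X.u ∧ (∀ j : V, X'.y j ≠ 0 → Y.y j ≠ 0) ∧
      ∃ (h : X.X ⟶ X'.X) (g : X'.X ⟶ (Y.X)⟦ω⟧),
        IsRightSocle X' Y g ∧ f = h ≫ g := by
  obtain ⟨f', rfl, hsoc⟩ := hf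
  let pr := projection C X.y Y.y
  let inc := inclusion C X.y Y.y
  have hpr : inc ≫ pr = 𝟙 _ := inclusion_projection C X.y Y.y
  have hfac : pr ≫ inc ≫ X.α ≫ f' = X.α ≫ f' :=
    comp_projection_inclusion C X.y Y.y (Y.u + 1) (fun j hj => hu ▸ X.hy j hj) Y.hy ω _
  obtain ⟨Z, a, b, hZ⟩ := distinguished_cocone_triangle (X.φ ≫ pr)
  obtain ⟨β', hβ'⟩ := exists_desuspension b
  obtain ⟨h, g', hfg, hag⟩ := exists_factorization X.tri hZ f' _ hfac
  refine ⟨⟨X.u, X.x, restrict X.y Y.y, X.hx, fun j hj => hu ▸ Y.hy j (restrict_ne hj), Z,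
    X.φ ≫ pr, a, β', by rw [hβ']; exact hZ⟩, rfl, fun j hj => restrict_ne hj, h,
    g' ≫ (shiftFunctor D ω).map Y.α, ⟨g', rfl, ?_⟩, ?_⟩
  · intro l hl g hg hsplit
    refine hsoc l hl g hg ?_
    have heq : X.α ≫ f' ≫ (shiftFunctor D ω).map g = pr ≫ a ≫ g' ≫ (shiftFunctor D ω).map g := by
      rw [← Category.assoc a, hag, ← Category.assoc pr, hfac, Category.assoc]
    rw [heq]
    have : IsSplitEpi pr := ⟨⟨⟨inc, hpr⟩⟩⟩
    infer_instance
  · rw [← Category.assoc, ← hfg]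

end Statement10
end
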